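/- Let L and K be Hopf subalgebras of H. Then (L, K) is a Mackey pair if and only if for every simple subcoalgebra C of H one has dim_k(LCK) = (dim_k L)·(dim_k CK)/dim_k(L ∩ {}^C K). Moreover (L, K) is a Mackey pair as soon as the left-multiplication map π_k for the trivial K-module M = k is an isomorphism. -/

import Mathlib

open TensorProduct

namespace MackeyPaper

noncomputable section

universe v

variable (k : Type) [Field k] [CharZero k] [IsAlgClosed k]
variable (H : Type) [Ring H] [HopfAlgebra k H]

/-- A subcoalgebra of `H`: a `k`-subspace `C` with `Δ(C) ⊆ C ⊗ C`. -/
def IsSubcoalgebra (C : Submodule k H) : Prop :=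
  ∀ c ∈ C, Coalgebra.comul (R := k) c ∈
    LinearMap.range (TensorProduct.map C.subtype C.subtype)

/-- A simple (nonzero, minimal) subcoalgebra of `H`. -/
def IsSimpleSubcoalgebra (C : Submodule k H) : Prop :=
  IsSubcoalgebra k H C ∧ C ≠ ⊥ ∧
    ∀ D : Submodule k H, D ≤ C → IsSubcoalgebra k H D → D ≠ ⊥ → D = C

/-- A Hopf subalgebra of `H`: a subalgebra which is a subcoalgebra and is
stable under the antipode. -/
def IsHopfSubalgebra (K : Subalgebra k H) : Prop :=
  IsSubcoalgebra k H K.toSubmodule ∧ ∀ x ∈ K, HopfAlgebra.antipode (R := k) x ∈ K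

/-- `Λ` is the (two-sided) idempotent integral of the Hopf subalgebra `K`,
i.e. the integral normalized by `ε(Λ) = 1`. -/
def IsIdempotentIntegral (K : Subalgebra k H) (Λ : H) : Prop :=
  Λ ∈ K ∧ Coalgebra.counit (R := k) Λ = 1 ∧
    ∀ x ∈ K, x * Λ = Coalgebra.counit (R := k) x • Λ ∧
      Λ * x = Coalgebra.counit (R := k) x • Λ

/-- A cocommutative element of `H`; the cocommutative elements of `H` form
the character ring `C(H^*)`. -/
def IsCocomm (x : H) : Prop :=
  (TensorProduct.comm k H H) (Coalgebra.comul (R := k) x) = Coalgebra.comul (R := k) x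

/-- The character ring `C(H^*)`, i.e. the space of cocommutative elements of `H`,
as a `k`-subspace of `H`. -/
def charRing : Submodule k H :=
  LinearMap.ker ((TensorProduct.comm k H H).toLinearMap ∘ₗ Coalgebra.comul (R := k)
      - Coalgebra.comul (R := k))

/-- `d` is the irreducible character (of `H^*`) associated to the simple
subcoalgebra `C`: the unique cocommutative element of `C` whose counit is the
positive square root of `dim_k C`. -/
def IsCharacterOf (d : H) (C : Submodule k H) : Prop :=
  d ∈ C ∧ IsCocomm k H d ∧
    Coalgebra.counit (R := k) d = ((Nat.sqrt (Module.finrank k ↥C) : ℕ) : k)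

/-- The right coset `CK` of a subcoalgebra `C`, i.e. the subspace `C·K`. -/
def CKsub (K : Subalgebra k H) (C : Submodule k H) : Submodule k H :=
  C * K.toSubmodule

/-- The conjugate Hopf subalgebra `ᶜK` of `K` by a simple subcoalgebra `C`
(with associated irreducible character `c`): the span of all simple
subcoalgebras of `H` whose irreducible character `d` satisfies
`d·c·Λ_K = ε(d)·c·Λ_K`.  (The condition is stated for all cocommutative
elements of `C` resp. `D`; this is equivalent, since the cocommutative
elements of a simple subcoalgebra are exactly the scalar multiples of its
irreducible character.) -/
def conjK (K : Subalgebra k H) (Λ : H) (C : Submodule k H) : Submodule k H :=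
  sSup {D : Submodule k H | IsSimpleSubcoalgebra k H D ∧
    ∀ d ∈ D, IsCocomm k H d → ∀ c ∈ C, IsCocomm k H c →
      d * (c * Λ) = Coalgebra.counit (R := k) d • (c * Λ)}

/-- A complete irredundant system of representatives (by simple subcoalgebras)
of the double cosets `L\H/K`.  (Taking `L = ⊥` gives a system of
representatives of the right cosets `H/K`.) -/
def IsDoubleCosetReps (L K : Subalgebra k H) {ι : Type} (rep : ι → Submodule k H) : Prop :=
  (∀ i, IsSimpleSubcoalgebra k H (rep i)) ∧
  (∀ i j, L.toSubmodule * rep i * K.toSubmodule = L.toSubmodule * rep j * K.toSubmodule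
      → i = j) ∧
  (∀ C : Submodule k H, IsSimpleSubcoalgebra k H C →
      ∃ i, C ≤ L.toSubmodule * rep i * K.toSubmodule)

section Ind

variable (K : Subalgebra k H) (M : Type v) [AddCommGroup M] [Module k M]
  [Module ↥K M] [IsScalarTower k ↥K M]

/-- The relations defining the induced module `H ⊗_K M` as a quotient of
`H ⊗_k M`: the `H`-submodule generated by the elements `a ⊗ m - 1 ⊗ a·m`
for `a ∈ K` (equivalently, spanned by all `h·a ⊗ m - h ⊗ a·m`). -/
def indRel : Submodule H (H ⊗[k] M) :=
  Submodule.span H {z | ∃ (a : ↥K) (m : M),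
    z = (a : H) ⊗ₜ[k] m - (1 : H) ⊗ₜ[k] (a • m)}

/-- The induced module `M↑_K^H = H ⊗_K M`, a left `H`-module. -/
abbrev Ind := (H ⊗[k] M) ⧸ indRel k H K M

variable (C : Submodule k H)

/-- The underlying space `CK ⊗_k M` of which the conjugate module `ᶜM` is a
quotient. -/
def CKM : Type _ := ↥(CKsub k H K C) ⊗[k] M

instance : AddCommGroup (CKM k H K M C) :=
  inferInstanceAs (AddCommGroup (↥(CKsub k H K C) ⊗[k] M))

instance : Module k (CKM k H K M C) :=
  inferInstanceAs (Module k (↥(CKsub k H K C) ⊗[k] M))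

/-- The pure tensor `x ⊗ m` as an element of `CK ⊗_k M`. -/
def ckmk (x : ↥(CKsub k H K C)) (m : M) : CKM k H K M C := x ⊗ₜ[k] m

/-- The relations defining the conjugate module `ᶜM = CK ⊗_K M` as a quotient
of `CK ⊗_k M`: `x·a ⊗ m - x ⊗ a·m` for `a ∈ K`. -/
def conjRel : Submodule k (CKM k H K M C) :=
  Submodule.span k {z | ∃ (x : ↥(CKsub k H K C)) (a : ↥K) (m : M)
    (hxa : (x : H) * (a : H) ∈ CKsub k H K C),
    z = ckmk k H K M C ⟨(x : H) * (a : H), hxa⟩ m - ckmk k H K M C x (a • m)}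

/-- The conjugate module `ᶜM := CK ⊗_K M`. -/
abbrev ConjM := CKM k H K M C ⧸ conjRel k H K M C

/-- The canonical copy of the conjugate module `ᶜM = CK ⊗_K M` inside
`H ⊗_K M` (the image of `CK ⊗_K M` under multiplication; this is indeed a
copy of `ᶜM` since `H` is a free right `K`-module and `CK` is one of the
coset summands). -/
def conjMsub : Submodule k (Ind k H K M) :=
  Submodule.span k {z | ∃ (x : H) (_ : x ∈ CKsub k H K C) (m : M),
    z = Submodule.Quotient.mk (x ⊗ₜ[k] m)}

end Ind

section Comp

variable (L K : Subalgebra k H) (Λ : H) (C : Submodule k H)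
variable (M : Type v) [AddCommGroup M] [Module k M] [Module ↥K M] [IsScalarTower k ↥K M]

/-- The underlying space `L ⊗_k (CK ⊗_k M)`. -/
def LCM : Type _ := ↥L ⊗[k] CKM k H K M C

instance : AddCommGroup (LCM k H L K C M) :=
  inferInstanceAs (AddCommGroup (↥L ⊗[k] CKM k H K M C))

instance : Module k (LCM k H L K C M) :=
  inferInstanceAs (Module k (↥L ⊗[k] CKM k H K M C))

/-- The pure tensor `l ⊗ w` as an element of `L ⊗_k (CK ⊗_k M)`. -/
def lcmk (l : ↥L) (w : CKM k H K M C) : LCM k H L K C M := l ⊗ₜ[k] w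

/-- The relations defining `L ⊗_{L ∩ ᶜK} ᶜM` as a quotient of
`L ⊗_k (CK ⊗_k M)`: the balancedness relations over `L ∩ ᶜK` (first set),
together with (the image of) the relations defining `ᶜM = CK ⊗_K M`
(second set). -/
def compRel : Submodule k (LCM k H L K C M) :=
  Submodule.span k
    ({z | ∃ (l : ↥L) (a : H) (haL : a ∈ L) (_ : a ∈ conjK k H K Λ C)
        (x : ↥(CKsub k H K C)) (m : M) (hax : a * (x : H) ∈ CKsub k H K C),
        z = lcmk k H L K C M ⟨(l : H) * a, mul_mem l.2 haL⟩ (ckmk k H K M C x m)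
          - lcmk k H L K C M l (ckmk k H K M C ⟨a * (x : H), hax⟩ m)} ∪
     {z | ∃ (l : ↥L) (x : ↥(CKsub k H K C)) (a : ↥K) (m : M)
        (hxa : (x : H) * (a : H) ∈ CKsub k H K C),
        z = lcmk k H L K C M l (ckmk k H K M C ⟨(x : H) * (a : H), hxa⟩ m)
          - lcmk k H L K C M l (ckmk k H K M C x (a • m))})

/-- The module `L ⊗_{L ∩ ᶜK} ᶜM` (a left `L`-module via multiplication on the
first tensor factor). -/
abbrev Comp := LCM k H L K C M ⧸ compRel k H L K Λ C M

end Comp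

open DirectSum

section Mackey

variable (L K : Subalgebra k H) (Λ : H)

/-- The Mackey isomorphism property for the pair `(L, K)` at the `K`-module
`M`: for any system of double coset representatives, the left-multiplication
map `⊕_C L ⊗_{L ∩ ᶜK} ᶜM → M↑_K^H↓_L^H`, `l ⊗ v ↦ l·v`, is an isomorphism of
`L`-modules.  (A `k`-linear map satisfying the displayed formula on the
spanning elements is automatically `L`-equivariant for the evident
`L`-actions, so this property is stated for `k`-linear maps.) -/
def MackeyAt (M : Type v) [AddCommGroup M] [Module k M] [Module ↥K M]
    [IsScalarTower k ↥K M] [Module.Finite k M] : Prop :=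
  ∀ (ι : Type) [DecidableEq ι] (rep : ι → Submodule k H),
    IsDoubleCosetReps k H L K rep →
    ∃ π : (⨁ i : ι, Comp k H L K Λ (rep i) M) →ₗ[k] Ind k H K M,
      Function.Bijective π ∧
      ∀ (i : ι) (l : ↥L) (x : ↥(CKsub k H K (rep i))) (m : M),
        π (DirectSum.of (fun i => Comp k H L K Λ (rep i) M) i
            (Submodule.Quotient.mk (lcmk k H L K (rep i) M l (ckmk k H K M (rep i) x m)))) =
          Submodule.Quotient.mk (((l : H) * (x : H)) ⊗ₜ[k] m)

/-- `(L, K)` is a Mackey pair of Hopf subalgebras of `H` (here `Λ` is the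
idempotent integral of `K`): for every finite-dimensional `K`-module `M` the
left-multiplication homomorphism `π_M` is an isomorphism. -/
def IsMackeyPair : Prop :=
  ∀ (M : Type v) [AddCommGroup M] [Module k M] [Module ↥K M]
    [IsScalarTower k ↥K M] [Module.Finite k M], MackeyAt k H L K Λ M

end Mackey

set_option linter.unusedSectionVars false
set_option linter.unusedSimpArgs false

section Sweedler

variable {k H}
variable [FiniteDimensional k H]
variable {W W' : Type*} [AddCommGroup W] [Module k W] [AddCommGroup W'] [Module k W']

open Coalgebra HopfAlgebra

/-- The components of the comultiplication with respect to a fixed basis of the second factor. -/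
def leg (i : Fin (Module.finrank k H)) : H →ₗ[k] H :=
  (TensorProduct.rid k H).toLinearMap ∘ₗ
    ((Module.finBasis k H).coord i).lTensor H ∘ₗ comul (R := k)

/-- The Sweedler sum `∑ f h₁ h₂`. -/
def sw (f : H → H → W) (h : H) : W :=
  ∑ i, f (leg (k := k) i h) (Module.finBasis k H i)

lemma comul_eq_sum (h : H) :
    comul (R := k) h = ∑ i, leg (k := k) i h ⊗ₜ[k] Module.finBasis k H i := by
  have key : ∀ z : H ⊗[k] H, z = ∑ i, (TensorProduct.rid k H)
      (((Module.finBasis k H).coord i).lTensor H z) ⊗ₜ[k] Module.finBasis k H i := by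
    intro z
    induction z with
    | zero => simp
    | tmul x y =>
      simp only [LinearMap.lTensor_tmul, TensorProduct.rid_tmul, TensorProduct.smul_tmul]
      rw [← TensorProduct.tmul_sum]
      congr 1
      exact ((Module.finBasis k H).sum_repr y).symm
    | add x y hx hy =>
      conv_lhs => rw [hx, hy]
      simp only [map_add, TensorProduct.add_tmul, Finset.sum_add_distrib]
  exact key _

/-- Bilinearity of an unbundled function. -/
structure Bil (f : H → H → W) : Prop where
  l : ∀ b, IsLinearMap k (fun a => f a b)
  r : ∀ a, IsLinearMap k (fun b => f a b)

/-- Trilinearity of an unbundled function. -/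
structure Tri (f : H → H → H → W) : Prop where
  one : ∀ b c, IsLinearMap k (fun a => f a b c)
  two : ∀ a c, IsLinearMap k (fun b => f a b c)
  three : ∀ a b, IsLinearMap k (fun c => f a b c)

/-- The bundled version of a bilinear function. -/
def Bil.lin {f : H → H → W} (hf : Bil (k := k) f) : H →ₗ[k] H →ₗ[k] W :=
  LinearMap.mk₂ k f (fun a b c => (hf.l c).map_add a b) (fun c a b => (hf.l b).map_smul c a)
    (fun a b c => (hf.r a).map_add b c) (fun c a b => (hf.r a).map_smul c b)

lemma sw_eq_lift {f : H → H → W} (hf : Bil (k := k) f) (h : H) :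
    sw (k := k) f h = TensorProduct.lift hf.lin (comul h) := by
  rw [comul_eq_sum, map_sum]
  rfl

lemma sw_tmul (h : H) : sw (k := k) (fun a b => a ⊗ₜ[k] b) h = comul h :=
  (comul_eq_sum h).symm

lemma sw_congr {f g : H → H → W} (h : ∀ a b, f a b = g a b) (x : H) :
    sw (k := k) f x = sw (k := k) g x := by
  have : f = g := by ext a b; exact h a b
  rw [this]

lemma map_sw (φ : W →ₗ[k] W') (f : H → H → W) (h : H) :
    φ (sw (k := k) f h) = sw (k := k) (fun a b => φ (f a b)) h := by
  simp [sw]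

lemma mul_sw (x : H) (f : H → H → H) (h : H) :
    x * (sw (k := k) f h) = sw (k := k) (fun a b => x * (f a b)) h := by
  simp [sw, Finset.mul_sum]

lemma sw_mul_right (x : H) (f : H → H → H) (h : H) :
    (sw (k := k) f h) * x = sw (k := k) (fun a b => (f a b) * x) h := by
  simp [sw, Finset.sum_mul]

lemma smul_sw (c : k) (f : H → H → W) (h : H) :
    c • (sw (k := k) f h) = sw (k := k) (fun a b => c • (f a b)) h := by
  simp [sw, Finset.smul_sum]

lemma sw_comm (f : H → H → H → H → W) (x y : H) :
    sw (k := k) (fun a b => sw (k := k) (fun c d => f a b c d) y) x =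
      sw (k := k) (fun c d => sw (k := k) (fun a b => f a b c d) x) y := by
  simp only [sw]
  rw [Finset.sum_comm]

lemma sw_smul (f : H → H → W) (c : k) (x : H)
    (hf : ∀ b, IsLinearMap k (fun a => f a b)) :
    sw (k := k) f (c • x) = c • sw (k := k) f x := by
  simp only [sw, map_smul, (hf _).map_smul, Finset.smul_sum]

lemma sw_isLinear (f : H → H → W) (hf : ∀ b, IsLinearMap k (fun a => f a b)) :
    IsLinearMap k (fun x => sw (k := k) f x) :=
  ⟨fun x y => by simp only [sw, map_add, (hf _).map_add, Finset.sum_add_distrib],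
    fun c x => sw_smul f c x hf⟩

/-- The bundled version of a trilinear function. -/
def Tri.lin {f : H → H → H → W} (hf : Tri (k := k) f) : H →ₗ[k] (H ⊗[k] H) →ₗ[k] W where
  toFun a := TensorProduct.lift (Bil.lin (k := k) (f := f a) ⟨fun c => hf.two a c, fun b => hf.three a b⟩)
  map_add' a a' := by
    ext b c
    exact (hf.one b c).map_add a a'
  map_smul' r a := by
    ext b c
    exact (hf.one b c).map_smul r a

lemma sw_assoc (f : H → H → H → W) (h : H)
    (hf : Tri (k := k) f := by
      constructor <;> intros <;> constructor <;> intros <;>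
        simp [mul_add, add_mul, TensorProduct.tmul_add, TensorProduct.add_tmul, sw,
          Finset.sum_add_distrib, Finset.smul_sum, add_smul, smul_add, smul_smul, mul_comm,
          mul_assoc, mul_left_comm, TensorProduct.smul_tmul', Finset.mul_sum]) :
    sw (k := k) (fun a b => sw (k := k) (fun c d => f c d b) a) h =
      sw (k := k) (fun a b => sw (k := k) (fun c d => f a c d) b) h := by
  have h1 := congrArg (TensorProduct.lift hf.lin) (Coalgebra.coassoc_apply (R := k) h)
  rw [comul_eq_sum h] at h1
  simp only [map_sum, LinearMap.rTensor_tmul, LinearMap.lTensor_tmul, TensorProduct.lift.tmul] at h1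
  simp only [comul_eq_sum (leg (k := k) _ h), TensorProduct.sum_tmul, map_sum,
    TensorProduct.assoc_tmul, TensorProduct.lift.tmul] at h1
  refine h1.trans (Finset.sum_congr rfl fun i _ => ?_)
  exact (sw_eq_lift ⟨fun c => hf.two _ c, fun b => hf.three _ b⟩ _).symm

lemma sw_counit_left (g : H → W) (h : H)
    (hg : IsLinearMap k g := by
      intros <;> constructor <;> intros <;>
        simp [mul_add, add_mul, TensorProduct.tmul_add, TensorProduct.add_tmul, sw,
          Finset.sum_add_distrib, Finset.smul_sum, add_smul, smul_add, smul_smul, mul_comm,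
          mul_assoc, mul_left_comm, TensorProduct.smul_tmul', Finset.mul_sum]) :
    sw (k := k) (fun a b => counit (R := k) a • g b) h = g h := by
  have h1 := congrArg (fun z => hg.mk' g (TensorProduct.lid k H z))
    (Coalgebra.rTensor_counit_comul (R := k) h)
  rw [comul_eq_sum h] at h1
  simpa [sw] using h1

lemma sw_counit_right (g : H → W) (h : H)
    (hg : IsLinearMap k g := by
      intros <;> constructor <;> intros <;>
        simp [mul_add, add_mul, TensorProduct.tmul_add, TensorProduct.add_tmul, sw,
          Finset.sum_add_distrib, Finset.smul_sum, add_smul, smul_add, smul_smul, mul_comm,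
          mul_assoc, mul_left_comm, TensorProduct.smul_tmul', Finset.mul_sum]) :
    sw (k := k) (fun a b => counit (R := k) b • g a) h = g h := by
  have h1 := congrArg (fun z => hg.mk' g (TensorProduct.rid k H z))
    (Coalgebra.lTensor_counit_comul (R := k) h)
  rw [comul_eq_sum h] at h1
  simpa [sw] using h1

lemma sw_antipode_left (g : H → W) (h : H)
    (hg : IsLinearMap k g := by
      intros <;> constructor <;> intros <;>
        simp [mul_add, add_mul, TensorProduct.tmul_add, TensorProduct.add_tmul, sw,
          Finset.sum_add_distrib, Finset.smul_sum, add_smul, smul_add, smul_smul, mul_comm,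
          mul_assoc, mul_left_comm, TensorProduct.smul_tmul', Finset.mul_sum]) :
    sw (k := k) (fun a b => g (antipode k a * b)) h = counit (R := k) h • g 1 := by
  have h1 := congrArg (fun z => hg.mk' g z)
    (HopfAlgebra.mul_antipode_rTensor_comul_apply (R := k) h)
  rw [comul_eq_sum h] at h1
  simpa [sw, Algebra.algebraMap_eq_smul_one] using h1

lemma sw_antipode_right (g : H → W) (h : H)
    (hg : IsLinearMap k g := by
      intros <;> constructor <;> intros <;>
        simp [mul_add, add_mul, TensorProduct.tmul_add, TensorProduct.add_tmul, sw,
          Finset.sum_add_distrib, Finset.smul_sum, add_smul, smul_add, smul_smul, mul_comm,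
          mul_assoc, mul_left_comm, TensorProduct.smul_tmul', Finset.mul_sum]) :
    sw (k := k) (fun a b => g (a * antipode k b)) h = counit (R := k) h • g 1 := by
  have h1 := congrArg (fun z => hg.mk' g z)
    (HopfAlgebra.mul_antipode_lTensor_comul_apply (R := k) h)
  rw [comul_eq_sum h] at h1
  simpa [sw, Algebra.algebraMap_eq_smul_one] using h1

lemma sw_one (f : H → H → W)
    (hf : Bil (k := k) f := by
      constructor <;> intros <;> constructor <;> intros <;>
        simp [mul_add, add_mul, TensorProduct.tmul_add, TensorProduct.add_tmul, sw,
          Finset.sum_add_distrib, Finset.smul_sum, add_smul, smul_add, smul_smul, mul_comm,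
          mul_assoc, mul_left_comm, TensorProduct.smul_tmul', Finset.mul_sum]) :
    sw (k := k) f 1 = f 1 1 := by
  rw [sw_eq_lift hf, Bialgebra.comul_one]
  rfl

lemma sw_mul (f : H → H → W) (x y : H)
    (hf : Bil (k := k) f := by
      constructor <;> intros <;> constructor <;> intros <;>
        simp [mul_add, add_mul, TensorProduct.tmul_add, TensorProduct.add_tmul, sw,
          Finset.sum_add_distrib, Finset.smul_sum, add_smul, smul_add, smul_smul, mul_comm,
          mul_assoc, mul_left_comm, TensorProduct.smul_tmul', Finset.mul_sum]) :
    sw (k := k) f (x * y) =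
      sw (k := k) (fun a b => sw (k := k) (fun c d => f (a * c) (b * d)) y) x := by
  rw [sw_eq_lift hf, Bialgebra.comul_mul, comul_eq_sum x, comul_eq_sum y]
  simp only [Finset.sum_mul, Finset.mul_sum, Algebra.TensorProduct.tmul_mul_tmul, map_sum,
    TensorProduct.lift.tmul]
  rw [Finset.sum_comm]
  rfl

lemma antipode_mul (x y : H) : antipode k (x * y) = antipode k y * antipode k x := by
  -- evaluate `S(x₁y₁) x₂ y₂ S(y₃) S(x₃)` in two ways
  have e1 : sw (k := k) (fun a b => sw (k := k) (fun c d => sw (k := k) (fun p q =>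
      sw (k := k) (fun r s => antipode k (a * p) * (c * r * antipode k s * antipode k d)) q) y) b) x
        = antipode k (x * y) := by
    have : ∀ a c d, sw (k := k) (fun p q =>
      sw (k := k) (fun r s => antipode k (a * p) * (c * r * antipode k s * antipode k d)) q) y
        = antipode k (a * y) * (c * antipode k d) := by
      intro a c d
      have : ∀ p q, sw (k := k) (fun r s => antipode k (a * p) * (c * r * antipode k s * antipode k d)) q
          = counit (R := k) q • (antipode k (a * p) * (c * antipode k d)) := by
        intro p q
        have := sw_antipode_right (k := k) (fun z => antipode k (a * p) * (c * z * antipode k d)) q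
        simpa [mul_assoc] using this
      simp only [this]
      exact sw_counit_right (fun p => antipode k (a * p) * (c * antipode k d)) y
    simp only [this]
    have : ∀ a b, sw (k := k) (fun c d => antipode k (a * y) * (c * antipode k d)) b =
      counit (R := k) b • antipode k (a * y) := by
      intro a b
      simpa using sw_antipode_right (k := k) (fun z => antipode k (a * y) * z) b
    simp only [this]
    exact sw_counit_right (fun p => antipode k (p * y)) x
  rw [← e1]
  have e2 : ∀ u d, sw (k := k) (fun a c => sw (k := k) (fun p q =>
      sw (k := k) (fun r s => antipode k (a * p) * (c * r * antipode k s * antipode k d)) q) y) u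
        = counit (R := k) u • (antipode k y * antipode k d) := by
    intro u d
    have h1 : ∀ a c, sw (k := k) (fun p q =>
      sw (k := k) (fun r s => antipode k (a * p) * (c * r * antipode k s * antipode k d)) q) y =
        sw (k := k) (fun w s => sw (k := k) (fun p r =>
          antipode k (a * p) * (c * r * antipode k s * antipode k d)) w) y := by
      intro a c
      exact (sw_assoc (k := k) (fun p r s =>
        antipode k (a * p) * (c * r * antipode k s * antipode k d)) y).symm
    simp only [h1]
    rw [sw_comm (k := k) (fun a c w s => sw (k := k) (fun p r =>
          antipode k (a * p) * (c * r * antipode k s * antipode k d)) w)]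
    have h2 : ∀ w s, sw (k := k) (fun a c => sw (k := k) (fun p r =>
          antipode k (a * p) * (c * r * antipode k s * antipode k d)) w) u =
        counit (R := k) w • (counit (R := k) u • (antipode k s * antipode k d)) := by
      intro w s
      have h3 := sw_mul (k := k) (fun a b => antipode k a * (b * antipode k s * antipode k d)) u w
      rw [← h3]
      have h4 := sw_antipode_left (k := k) (fun z => z * (antipode k s * antipode k d)) (u * w)
      simp only [Bialgebra.counit_mul, one_mul] at h4
      rw [smul_smul, mul_comm, ← h4]
      simp only [mul_assoc]
    simp only [h2]
    exact sw_counit_left (k := k) (fun s => counit (R := k) u • (antipode k s * antipode k d)) y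
  have e3 := sw_assoc (k := k) (fun a c d => sw (k := k) (fun p q =>
      sw (k := k) (fun r s => antipode k (a * p) * (c * r * antipode k s * antipode k d)) q) y) x
  rw [← e3]
  simp only [e2]
  exact sw_counit_left (k := k) (fun d => antipode k y * antipode k d) x

end Sweedler

section AntipodeComul

variable {k H}
variable [FiniteDimensional k H]
variable {W W' : Type*} [AddCommGroup W] [Module k W] [AddCommGroup W'] [Module k W']

open Coalgebra HopfAlgebra

lemma conv_inverse_unique {A : Type*} [Ring A] [Algebra k A] (F D E : H →ₗ[k] A)
    (hFD : ∀ h, sw (k := k) (fun a b => F a * D b) h = counit (R := k) h • 1)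
    (hDE : ∀ h, sw (k := k) (fun a b => D a * E b) h = counit (R := k) h • 1) (h : H) :
    F h = E h := by
  have e := sw_assoc (k := k) (fun a b c => F a * D b * E c) h
  have e1 : ∀ a c, sw (k := k) (fun p q => F p * D q * E c) a = counit (R := k) a • E c := by
    intro a c
    have := map_sw (k := k) (LinearMap.mulRight k (E c)) (fun a b => F a * D b) a
    rw [hFD] at this
    simpa using this.symm
  have e2 : ∀ a b, sw (k := k) (fun p q => F a * D p * E q) b = counit (R := k) b • F a := by
    intro a b
    have := map_sw (k := k) (LinearMap.mulLeft k (F a)) (fun a b => D a * E b) b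
    rw [hDE] at this
    simpa [mul_assoc] using this.symm
  simp only [e1, e2] at e
  rw [sw_counit_left (k := k) (fun c => E c), sw_counit_right (k := k) (fun c => F c)] at e
  exact e.symm

lemma comul_antipode (h : H) :
    comul (R := k) (antipode k h) =
      sw (k := k) (fun a b => antipode k b ⊗ₜ[k] antipode k a) h := by
  let E : H →ₗ[k] H ⊗[k] H := IsLinearMap.mk'
    (fun h => sw (k := k) (fun a b => antipode k b ⊗ₜ[k] antipode k a) h)
    (sw_isLinear _ (by
      intro b; constructor <;> intros <;> simp [TensorProduct.tmul_add]))
  refine conv_inverse_unique (k := k) (comul (R := k) ∘ₗ antipode k) (comul (R := k)) E ?_ ?_ h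
  · intro h
    have := sw_antipode_left (k := k) (fun z => comul (R := k) z) h
    simpa [Bialgebra.comul_mul] using this
  · intro h
    have e1 : ∀ a b, comul (R := k) a * E b = sw (k := k) (fun p q => sw (k := k) (fun c d =>
        (p * antipode k d) ⊗ₜ[k] (q * antipode k c)) b) a := by
      intro a b
      have : E b = sw (k := k) (fun a b => antipode k b ⊗ₜ[k] antipode k a) b := rfl
      rw [this, comul_eq_sum a]
      simp only [sw, Finset.sum_mul, Finset.mul_sum, Algebra.TensorProduct.tmul_mul_tmul]
      rw [Finset.sum_comm]
    simp only [e1]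
    rw [sw_assoc (k := k) (fun p q b => sw (k := k) (fun c d =>
        (p * antipode k d) ⊗ₜ[k] (q * antipode k c)) b) h]
    have e2 : ∀ p b, sw (k := k) (fun q b => sw (k := k) (fun c d =>
        (p * antipode k d) ⊗ₜ[k] (q * antipode k c)) b) b =
          (p * antipode k b) ⊗ₜ[k] (1 : H) := by
      intro p b
      rw [← sw_assoc (k := k) (fun q c d =>
        (p * antipode k d) ⊗ₜ[k] (q * antipode k c)) b]
      have e3 : ∀ u d, sw (k := k) (fun q c => (p * antipode k d) ⊗ₜ[k] (q * antipode k c)) u =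
          counit (R := k) u • ((p * antipode k d) ⊗ₜ[k] (1 : H)) := fun u d =>
        sw_antipode_right (k := k) (fun z => (p * antipode k d) ⊗ₜ[k] z) u
      simp only [e3]
      exact sw_counit_left (k := k) (fun d => (p * antipode k d) ⊗ₜ[k] (1 : H)) b
    simp only [e2]
    exact sw_antipode_right (k := k) (fun z => z ⊗ₜ[k] (1 : H)) h

lemma sw_antipode (f : H → H → W) (h : H)
    (hf : Bil (k := k) f := by
      constructor <;> intros <;> constructor <;> intros <;>
        simp [mul_add, add_mul, TensorProduct.tmul_add, TensorProduct.add_tmul, sw,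
          Finset.sum_add_distrib, Finset.smul_sum, add_smul, smul_add, smul_smul, mul_comm,
          mul_assoc, mul_left_comm, TensorProduct.smul_tmul', Finset.mul_sum]) :
    sw (k := k) f (antipode k h) = sw (k := k) (fun a b => f (antipode k b) (antipode k a)) h := by
  rw [sw_eq_lift hf, comul_antipode, map_sw]
  rfl

end AntipodeComul

section Integrals

variable {k H}
variable [FiniteDimensional k H]
variable {W W' : Type*} [AddCommGroup W] [Module k W] [AddCommGroup W'] [Module k W']

open Coalgebra HopfAlgebra

/-- The slice map `x ↦ f(x₁) x₂`. -/
def ul (f : H →ₗ[k] k) : H →ₗ[k] H :=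
  IsLinearMap.mk' (fun x => sw (k := k) (fun a b => f a • b) x)
    (sw_isLinear _ (by intro b; constructor <;> intros <;> simp [add_smul, smul_smul]))

/-- The slice map `x ↦ x₁ f(x₂)`. -/
def ur (f : H →ₗ[k] k) : H →ₗ[k] H :=
  IsLinearMap.mk' (fun x => sw (k := k) (fun a b => f b • a) x)
    (sw_isLinear _ (by intro b; constructor <;> intros <;> simp [smul_smul, mul_comm]))

lemma ul_apply (f : H →ₗ[k] k) (x : H) : ul f x = sw (k := k) (fun a b => f a • b) x := rfl

lemma ur_apply (f : H →ₗ[k] k) (x : H) : ur f x = sw (k := k) (fun a b => f b • a) x := rfl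

lemma sum_sw {ι : Type*} (s : Finset ι) (F : ι → H → H → W) (h : H) :
    ∑ i ∈ s, sw (k := k) (F i) h = sw (k := k) (fun a b => ∑ i ∈ s, F i a b) h := by
  simp only [sw]
  rw [Finset.sum_comm]

lemma sum_basis_apply {ι : Type*} [Fintype ι] (b : Module.Basis ι k H) (g : H → W)
    (hg : IsLinearMap k g) (x : H) : ∑ i, g (b.coord i x • b i) = g x := by
  have := map_sum (hg.mk' g) (fun i => b.coord i x • b i) Finset.univ
  have h2 : ∑ i, b.coord i x • b i = x := b.sum_repr x
  rw [h2] at this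
  exact this.symm

lemma trace_eq_sum_coord {V : Type*} [AddCommGroup V] [Module k V] {ι : Type*} [Fintype ι]
    (b : Module.Basis ι k V) (T : V →ₗ[k] V) :
    LinearMap.trace k V T = ∑ i, b.coord i (T (b i)) := by
  classical
  rw [LinearMap.trace_eq_matrix_trace k b, Matrix.trace]
  simp [LinearMap.toMatrix_apply]

lemma trace_smulRight {V : Type*} [AddCommGroup V] [Module k V] [FiniteDimensional k V]
    (φ : V →ₗ[k] k) (y : V) : LinearMap.trace k V (φ.smulRight y) = φ y := by
  rw [trace_eq_sum_coord (Module.finBasis k V)]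
  have h := congrArg φ ((Module.finBasis k V).sum_repr y)
  rw [map_sum] at h
  rw [← h]
  simp [mul_comm]

/-- A normalized two-sided integral of `H`. -/
structure IsNormInt (Λ : H) : Prop where
  eps : counit (R := k) Λ = 1
  left : ∀ h, h * Λ = counit (R := k) h • Λ
  right : ∀ h, Λ * h = counit (R := k) h • Λ

lemma exists_left_int {A : Type*} [Ring A] [Algebra k A] [IsSemisimpleRing A] (ε : A →ₐ[k] k) :
    ∃ Λ : A, ε Λ = 1 ∧ ∀ h, h * Λ = ε h • Λ := by
  let I : Submodule A A := RingHom.ker ε.toRingHom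
  obtain ⟨J, hJ⟩ := exists_isCompl I
  have h1 : (1 : A) ∈ I ⊔ J := hJ.sup_eq_top ▸ Submodule.mem_top
  obtain ⟨i, hi, j, hj, hij⟩ := Submodule.mem_sup.1 h1
  have hi' : ε i = 0 := hi
  have hεj : ε j = 1 := by
    have := congrArg ε hij
    simpa [hi'] using this
  refine ⟨j, hεj, fun h => ?_⟩
  have hm : h * j - ε h • j ∈ J := by
    have : h * j - ε h • j = (h - algebraMap k A (ε h)) • j := by
      simp [sub_mul, Algebra.smul_def]
    rw [this]
    exact J.smul_mem _ hj
  have hm' : h * j - ε h • j ∈ I := by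
    change ε (h * j - ε h • j) = 0
    simp
  have := hJ.inf_eq_bot ▸ (Submodule.mem_inf.2 ⟨hm', hm⟩ : _ ∈ I ⊓ J)
  exact sub_eq_zero.1 this

lemma exists_normInt [IsSemisimpleRing H] : ∃ Λ : H, IsNormInt (k := k) Λ := by
  obtain ⟨x, hx1, hx⟩ := exists_left_int (Bialgebra.counitAlgHom k H)
  obtain ⟨y, hy1, hy⟩ := exists_left_int (A := Hᵐᵒᵖ)
    ((AlgEquiv.toOpposite k k).symm.toAlgHom.comp (Bialgebra.counitAlgHom k H).op)
  have hx1' : counit (R := k) x = 1 := hx1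
  have hx' : ∀ h, h * x = counit (R := k) h • x := hx
  have hy1' : counit (R := k) y.unop = 1 := by simpa using hy1
  have hy' : ∀ h, y.unop * h = counit (R := k) h • y.unop := by
    intro h
    have := congrArg MulOpposite.unop (hy (MulOpposite.op h))
    simpa using this
  have hxy : x = y.unop := by
    have h1 := hx' y.unop
    have h2 := hy' x
    rw [h1, hx1', hy1', one_smul, one_smul] at h2
    exact h2
  exact ⟨x, hx1', hx', fun h => by rw [hxy]; exact hy' h⟩


lemma IsNormInt.mul_leg {Λ : H} (hΛ : IsNormInt (k := k) Λ) (f : H → H → W) (h : H)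
    (hf : Bil (k := k) f := by
      constructor <;> intros <;> constructor <;> intros <;>
        simp [mul_add, add_mul, TensorProduct.tmul_add, TensorProduct.add_tmul, sw,
          Finset.sum_add_distrib, Finset.smul_sum, add_smul, smul_add, smul_smul, mul_comm,
          mul_assoc, mul_left_comm, TensorProduct.smul_tmul', Finset.mul_sum]) :
    sw (k := k) (fun a b => f (a * h) b) Λ = sw (k := k) (fun a b => f a (b * antipode k h)) Λ := by
  obtain ⟨hl, hr⟩ := hf
  have e := sw_assoc (k := k) (fun p q r => sw (k := k) (fun a b =>
    f (a * p) (b * q * antipode k r)) Λ) h (by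
      constructor <;> intros <;> constructor <;> intros <;>
      simp [sw, mul_add, add_mul, (hl _).map_add, (hr _).map_add, (hl _).map_smul,
        (hr _).map_smul, Finset.sum_add_distrib, Finset.smul_sum])
  have e1 : ∀ u r, sw (k := k) (fun p q => sw (k := k) (fun a b =>
    f (a * p) (b * q * antipode k r)) Λ) u = counit (R := k) u •
      sw (k := k) (fun a b => f a (b * antipode k r)) Λ := by
    intro u r
    have hb : Bil (k := k) (fun a b => f a (b * antipode k r)) := by
      constructor <;> intros <;> constructor <;> intros <;>
      simp [add_mul, (hl _).map_add, (hr _).map_add, (hl _).map_smul, (hr _).map_smul]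
    rw [← sw_smul _ _ _ hb.l, ← hΛ.right u, sw_mul _ _ _ hb, sw_comm]
  have e2 : ∀ p u, sw (k := k) (fun q r => sw (k := k) (fun a b =>
    f (a * p) (b * q * antipode k r)) Λ) u = counit (R := k) u •
      sw (k := k) (fun a b => f (a * p) b) Λ := by
    intro p u
    rw [sw_comm (k := k) (fun q r a b => f (a * p) (b * q * antipode k r)), smul_sw]
    refine sw_congr (fun a b => ?_) _
    have := sw_antipode_right (k := k) (fun z => f (a * p) (b * z)) u (by
      constructor <;> intros <;> simp [mul_add, (hr _).map_add, (hr _).map_smul])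
    simpa [mul_assoc] using this
  simp only [e1, e2] at e
  rw [sw_counit_left (k := k) (fun r => sw (k := k) (fun a b => f a (b * antipode k r)) Λ) h (by
      constructor <;> intros <;>
      simp [sw, mul_add, add_mul, (hl _).map_add, (hr _).map_add, (hl _).map_smul,
        (hr _).map_smul, Finset.sum_add_distrib, Finset.smul_sum]),
    sw_counit_right (k := k) (fun r => sw (k := k) (fun a b => f (a * r) b) Λ) h (by
      constructor <;> intros <;>
      simp [sw, mul_add, add_mul, (hl _).map_add, (hr _).map_add, (hl _).map_smul,
        (hr _).map_smul, Finset.sum_add_distrib, Finset.smul_sum])] at e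
  exact e.symm

lemma IsNormInt.leg_mul {Λ : H} (hΛ : IsNormInt (k := k) Λ) (f : H → H → W) (h : H)
    (hf : Bil (k := k) f := by
      constructor <;> intros <;> constructor <;> intros <;>
        simp [mul_add, add_mul, TensorProduct.tmul_add, TensorProduct.add_tmul, sw,
          Finset.sum_add_distrib, Finset.smul_sum, add_smul, smul_add, smul_smul, mul_comm,
          mul_assoc, mul_left_comm, TensorProduct.smul_tmul', Finset.mul_sum]) :
    sw (k := k) (fun a b => f (antipode k h * a) b) Λ = sw (k := k) (fun a b => f a (h * b)) Λ := by
  obtain ⟨hl, hr⟩ := hf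
  have e := sw_assoc (k := k) (fun p q r => sw (k := k) (fun a b =>
    f (antipode k p * q * a) (r * b)) Λ) h (by
      constructor <;> intros <;> constructor <;> intros <;>
      simp [sw, mul_add, add_mul, (hl _).map_add, (hr _).map_add, (hl _).map_smul,
        (hr _).map_smul, Finset.sum_add_distrib, Finset.smul_sum])
  have e1 : ∀ p u, sw (k := k) (fun q r => sw (k := k) (fun a b =>
    f (antipode k p * q * a) (r * b)) Λ) u = counit (R := k) u •
      sw (k := k) (fun a b => f (antipode k p * a) b) Λ := by
    intro p u
    have hb : Bil (k := k) (fun a b => f (antipode k p * a) b) := by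
      constructor <;> intros <;> constructor <;> intros <;>
      simp [mul_add, (hl _).map_add, (hr _).map_add, (hl _).map_smul, (hr _).map_smul]
    rw [← sw_smul _ _ _ hb.l, ← hΛ.left u, sw_mul _ _ _ hb]
    simp only [mul_assoc]
  have e2 : ∀ u r, sw (k := k) (fun p q => sw (k := k) (fun a b =>
    f (antipode k p * q * a) (r * b)) Λ) u = counit (R := k) u •
      sw (k := k) (fun a b => f a (r * b)) Λ := by
    intro u r
    rw [sw_comm (k := k) (fun p q a b => f (antipode k p * q * a) (r * b)), smul_sw]
    refine sw_congr (fun a b => ?_) _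
    have := sw_antipode_left (k := k) (fun z => f (z * a) (r * b)) u (by
      constructor <;> intros <;> simp [add_mul, (hl _).map_add, (hl _).map_smul])
    simpa [mul_assoc] using this
  simp only [e1, e2] at e
  rw [sw_counit_left (k := k) (fun r => sw (k := k) (fun a b => f a (r * b)) Λ) h (by
      constructor <;> intros <;>
      simp [sw, mul_add, add_mul, (hl _).map_add, (hr _).map_add, (hl _).map_smul,
        (hr _).map_smul, Finset.sum_add_distrib, Finset.smul_sum]),
    sw_counit_right (k := k) (fun r => sw (k := k) (fun a b => f (antipode k r * a) b) Λ) h (by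
      constructor <;> intros <;>
      simp [sw, mul_add, add_mul, (hl _).map_add, (hr _).map_add, (hl _).map_smul,
        (hr _).map_smul, Finset.sum_add_distrib, Finset.smul_sum])] at e
  exact e.symm

variable (k H) in
/-- The trace form `h ↦ Tr(x ↦ h S²(x))`. -/
def lam : H →ₗ[k] k :=
  LinearMap.trace k H ∘ₗ LinearMap.mulRight k (antipode k * antipode k : Module.End k H) ∘ₗ
    LinearMap.mul k H

lemma lam_apply (h : H) :
    lam k H h = LinearMap.trace k H (LinearMap.mulLeft k h * (antipode k * antipode k)) := rfl

lemma antipode_antipode_mul (x y : H) :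
    antipode k (antipode k (x * y)) = antipode k (antipode k x) * antipode k (antipode k y) := by
  simp only [antipode_mul]

lemma lam_nakayama (a b : H) : lam k H (a * b) = lam k H (b * antipode k (antipode k a)) := by
  have h1 : LinearMap.mulLeft k (a * b) * (antipode k * antipode k) =
    LinearMap.mulLeft k a * (LinearMap.mulLeft k b * (antipode k * antipode k)) := by
    ext x; simp [mul_assoc]
  have h2 : (LinearMap.mulLeft k b * (antipode k * antipode k)) * LinearMap.mulLeft k a =
      LinearMap.mulLeft k (b * antipode k (antipode k a)) * (antipode k * antipode k) := by
    ext x; simp [mul_assoc, antipode_mul]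
  rw [lam_apply, h1, LinearMap.trace_mul_comm, h2, lam_apply]

lemma IsNormInt.lam_self {Λ : H} (hΛ : IsNormInt (k := k) Λ) : lam k H Λ = 1 := by
  have : LinearMap.mulLeft k Λ * (antipode k * antipode k) =
      (counit (R := k) (A := H)).smulRight Λ := by
    ext x; simp [hΛ.right]
  rw [lam_apply, this, trace_smulRight, hΛ.eps]

lemma functional_slice_lam (f : H →ₗ[k] k) (h : H) :
    sw (k := k) (fun a b => f a • lam k H b) h = lam k H h • f 1 := by
  let b := Module.finBasis k H
  let S2 : Module.End k H := antipode k * antipode k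
  let G : H → (H →ₗ[k] k) := fun z => f ∘ₗ LinearMap.mulRight k (antipode k z)
  have h1 : LinearMap.mulLeft k (ul f h) * S2 =
      ∑ i, ul (G (b i)) * (LinearMap.mulLeft k h * S2 * ul (b.coord i)) := by
    ext x
    let F : H → H → H → H := fun p r s => sw (k := k) (fun c d =>
      f (c * (antipode k (antipode k r) * antipode k p)) • (d * antipode k (antipode k s))) h
    have e1 : ∀ i, (ul (G (b i)) * (LinearMap.mulLeft k h * S2 * ul (b.coord i))) x =
        sw (k := k) (fun p q => sw (k := k) (F (b.coord i p • b i)) q) x := by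
      intro i
      have : ul (b.coord i) x = sw (k := k) (fun p q => b.coord i p • q) x := rfl
      rw [Module.End.mul_apply, Module.End.mul_apply, this, map_sw, map_sw]
      refine sw_congr (fun p q => ?_) _
      have : ∀ z, ul (G (b i)) z = sw (k := k) (fun a c => f (a * antipode k (b i)) • c) z :=
        fun z => rfl
      have e0 : (LinearMap.mulLeft k h * S2) (b.coord i p • q) =
        b.coord i p • (h * antipode k (antipode k q)) := by simp [S2]
      rw [e0, map_smul, this, sw_mul (k := k) (fun a c => f (a * antipode k (b i)) • c), sw_comm,
        sw_antipode (k := k) (fun c d => sw (k := k) (fun a e =>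
          f (a * c * antipode k (b i)) • (e * d)) h),
        sw_antipode (k := k) (fun c d => sw (k := k) (fun a e =>
          f (a * antipode k d * antipode k (b i)) • (e * antipode k c)) h), smul_sw]
      refine sw_congr (fun r s => ?_) _
      rw [smul_sw]
      refine sw_congr (fun r s => ?_) _
      simp [smul_smul, mul_assoc]
    rw [LinearMap.sum_apply]
    simp only [e1]
    rw [sum_sw]
    have e2 : ∀ p q, ∑ i, sw (k := k) (F (b.coord i p • b i)) q = sw (k := k) (F p) q :=
      fun p q => sum_basis_apply b (fun z => sw (k := k) (F z) q)
        (by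
          constructor <;> intros <;>
          simp [F, sw, mul_add, add_smul, smul_smul, Finset.sum_add_distrib, Finset.smul_sum]) p
    simp only [e2]
    rw [← sw_assoc (k := k) F x (by
      constructor <;> intros <;> constructor <;> intros <;>
        simp [F, sw, mul_add, add_mul, add_smul, smul_smul, Finset.sum_add_distrib,
          Finset.smul_sum, mul_comm])]
    have e3 : ∀ u s, sw (k := k) (fun c d => F c d s) u =
        counit (R := k) u • (ul f h * antipode k (antipode k s)) := by
      intro u s
      have := sw_antipode_right (k := k) (fun z => sw (k := k) (fun c d =>
        f (c * antipode k z) • (d * antipode k (antipode k s))) h) u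
      simp only [antipode_mul, antipode_one, mul_one] at this
      rw [this, ul_apply, sw_mul_right]
      simp
    simp only [e3]
    rw [sw_counit_left (k := k) (fun s => ul f h * antipode k (antipode k s))]
    rfl
  have h2 : ∑ i, ul (b.coord i) * ul (G (b i)) = f 1 • (1 : Module.End k H) := by
    ext x
    let F : H → H → H → H := fun p r s => f (p * antipode k r) • s
    have e1 : ∀ i, (ul (b.coord i) * ul (G (b i))) x =
        sw (k := k) (fun p q => sw (k := k) (fun r s => F p (b.coord i r • b i) s) q) x := by
      intro i
      have : ul (G (b i)) x = sw (k := k) (fun p q => f (p * antipode k (b i)) • q) x := rfl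
      rw [Module.End.mul_apply, this, map_sw]
      refine sw_congr (fun p q => ?_) _
      rw [map_smul, ul_apply, smul_sw]
      refine sw_congr (fun r s => ?_) _
      simp [F, smul_smul, mul_comm]
    rw [LinearMap.sum_apply]
    simp only [e1]
    rw [sum_sw]
    have e2 : ∀ p q, ∑ i, sw (k := k) (fun r s => F p (b.coord i r • b i) s) q =
        sw (k := k) (fun r s => F p r s) q := by
      intro p q
      rw [sum_sw]
      refine sw_congr (fun r s => ?_) _
      exact sum_basis_apply b (fun z => F p z s) (by
        constructor <;> intros <;> simp [F, mul_add, add_smul, smul_smul]) r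
    simp only [e2]
    rw [← sw_assoc (k := k) F x (by
      constructor <;> intros <;> constructor <;> intros <;>
        simp [F, mul_add, add_mul, add_smul, smul_smul, mul_comm])]
    have e3 : ∀ u s, sw (k := k) (fun c d => F c d s) u = counit (R := k) u • (f 1 • s) :=
      fun u s => sw_antipode_right (k := k) (fun z => f z • s) u
    simp only [e3]
    exact sw_counit_left (k := k) (fun s => f 1 • s) x
  have h3 : sw (k := k) (fun a b => f a • lam k H b) h = lam k H (ul f h) := by
    rw [ul_apply, map_sw]
    simp
  have h4 : lam k H (ul f h) = LinearMap.trace k H (LinearMap.mulLeft k (ul f h) * S2) := rfl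
  rw [h3, h4, h1, map_sum]
  have h5 : ∀ i, LinearMap.trace k H (ul (G (b i)) * (LinearMap.mulLeft k h * S2 * ul (b.coord i)))
    = LinearMap.trace k H (LinearMap.mulLeft k h * S2 * (ul (b.coord i) * ul (G (b i)))) := by
    intro i
    rw [LinearMap.trace_mul_comm, mul_assoc]
  simp only [h5]
  rw [← map_sum, ← Finset.mul_sum, h2, mul_smul_comm, mul_one, map_smul, lam_apply, smul_eq_mul,
    smul_eq_mul, mul_comm]

end Integrals

section Radford

variable {k H}
variable [FiniteDimensional k H]
variable {W W' : Type*} [AddCommGroup W] [Module k W] [AddCommGroup W'] [Module k W']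

open Coalgebra HopfAlgebra

/-- A left-invariant functional: `h₁ φ(h₂) = φ(h) 1`. -/
def LeftInv (φ : H →ₗ[k] k) : Prop := ∀ h, ur φ h = φ h • 1

/-- A right-invariant functional: `φ(h₁) h₂ = φ(h) 1`. -/
def RightInv (φ : H →ₗ[k] k) : Prop := ∀ h, ul φ h = φ h • 1

lemma eq_of_forall_functional {V : Type*} [AddCommGroup V] [Module k V] {x y : V}
    (h : ∀ f : V →ₗ[k] k, f x = f y) : x = y := by
  rw [← sub_eq_zero, ← Module.forall_dual_apply_eq_zero_iff k]
  intro f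
  rw [map_sub, h f, sub_self]

lemma lam_leftInv : LeftInv (lam k H) := by
  intro h
  refine eq_of_forall_functional (k := k) fun f => ?_
  rw [ur_apply, map_sw, map_smul, ← functional_slice_lam (k := k) f h]
  simp [mul_comm]

lemma IsNormInt.ur_of_leftInv {Λ : H} (hΛ : IsNormInt (k := k) Λ) {φ : H →ₗ[k] k}
    (hφ : LeftInv φ) (h : H) :
    sw (k := k) (fun a b => φ (b * antipode k h) • a) Λ = φ Λ • h := by
  rw [← hΛ.mul_leg (fun a b => φ b • a)]
  have := hφ Λ
  rw [ur_apply] at this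
  have h2 := sw_mul_right (k := k) h (fun a b => φ b • a) Λ
  rw [this] at h2
  simpa using h2.symm

lemma IsNormInt.antipode_eq {Λ : H} (hΛ : IsNormInt (k := k) Λ) (b : H) :
    antipode k b = sw (k := k) (fun x y => lam k H (b * y) • x) Λ := by
  rw [← hΛ.leg_mul (fun x y => lam k H y • x)]
  have := lam_leftInv (k := k) Λ
  rw [ur_apply, hΛ.lam_self, one_smul] at this
  have h2 := mul_sw (k := k) (antipode k b) (fun x y => lam k H y • x) Λ
  rw [this, mul_one] at h2
  simpa using h2

lemma IsNormInt.antipode_injective {Λ : H} (hΛ : IsNormInt (k := k) Λ) :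
    Function.Injective (antipode k (A := H)) := by
  intro x y hxy
  have hx := hΛ.ur_of_leftInv lam_leftInv x
  have hy := hΛ.ur_of_leftInv lam_leftInv y
  rw [hΛ.lam_self, one_smul] at hx hy
  rw [← hx, ← hy, hxy]

lemma IsNormInt.antipode_surjective {Λ : H} (hΛ : IsNormInt (k := k) Λ) :
    Function.Surjective (antipode k (A := H)) :=
  (LinearMap.injective_iff_surjective (f := antipode k (A := H))).1 hΛ.antipode_injective

lemma IsNormInt.lam_nondeg_left {Λ : H} (hΛ : IsNormInt (k := k) Λ) {b : H}
    (hb : ∀ y, lam k H (b * y) = 0) : b = 0 := by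
  apply hΛ.antipode_injective
  rw [hΛ.antipode_eq]
  simp [hb, sw]

lemma IsNormInt.lam_nondeg_right {Λ : H} (hΛ : IsNormInt (k := k) Λ) {b : H}
    (hb : ∀ y, lam k H (y * b) = 0) : b = 0 := by
  apply hΛ.lam_nondeg_left
  intro y
  obtain ⟨z, rfl⟩ := hΛ.antipode_surjective y
  obtain ⟨z, rfl⟩ := hΛ.antipode_surjective z
  rw [← lam_nakayama, hb]

lemma IsNormInt.trace_eq {Λ : H} (hΛ : IsNormInt (k := k) Λ) (T : Module.End k H) :
    LinearMap.trace k H T = sw (k := k) (fun x y => lam k H (y * antipode k (T x))) Λ := by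
  let b := Module.finBasis k H
  rw [trace_eq_sum_coord b]
  have h1 : ∀ i, b.coord i (T (b i)) = sw (k := k) (fun x y =>
      lam k H (y * antipode k (T (b.coord i x • b i)))) Λ := by
    intro i
    have := hΛ.ur_of_leftInv lam_leftInv (T (b i))
    rw [hΛ.lam_self, one_smul] at this
    conv_lhs => rw [← this]
    rw [map_sw]
    refine sw_congr (fun x y => ?_) _
    simp [mul_comm]
  simp only [h1]
  rw [sum_sw]
  refine sw_congr (fun x y => ?_) _
  exact sum_basis_apply b (fun z => lam k H (y * antipode k (T z)))
    (by constructor <;> intros <;> simp [mul_add]) x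

lemma IsNormInt.slice_injective {Λ : H} (hΛ : IsNormInt (k := k) Λ) {ψ : H →ₗ[k] k}
    (hψ : ur ψ Λ = 0) : ψ = 0 := by
  let Θ : (H →ₗ[k] k) →ₗ[k] H :=
    { toFun := fun f => ur f Λ
      map_add' := fun f g => by simp [ur_apply, sw, add_smul, Finset.sum_add_distrib]
      map_smul' := fun c f => by simp [ur_apply, sw, smul_smul, Finset.smul_sum] }
  have hs : Function.Surjective Θ := by
    intro x
    obtain ⟨b, rfl⟩ := hΛ.antipode_surjective x
    exact ⟨lam k H ∘ₗ LinearMap.mulLeft k b, (hΛ.antipode_eq b).symm⟩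
  have hi : Function.Injective Θ :=
    (LinearMap.injective_iff_surjective_of_finrank_eq_finrank
      (Subspace.dual_finrank_eq (K := k) (V := H))).2 hs
  apply hi
  rw [map_zero]
  exact hψ

lemma IsNormInt.leftInv_unique {Λ : H} (hΛ : IsNormInt (k := k) Λ) {φ : H →ₗ[k] k}
    (hφ : LeftInv φ) : φ = φ Λ • lam k H := by
  rw [← sub_eq_zero]
  apply hΛ.slice_injective
  have h1 := hΛ.ur_of_leftInv hφ 1
  have h2 := hΛ.ur_of_leftInv (lam_leftInv (k := k)) 1
  rw [antipode_one] at h1 h2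
  simp only [mul_one] at h1 h2
  rw [hΛ.lam_self, one_smul] at h2
  have h3 : ur (φ - φ Λ • lam k H) Λ = sw (k := k) (fun a b => φ b • a) Λ -
      φ Λ • sw (k := k) (fun a b => lam k H b • a) Λ := by
    simp [ur_apply, sw, sub_smul, Finset.smul_sum, smul_smul]
  rw [h3, h1, h2, sub_self]

lemma IsNormInt.antipode_self {Λ : H} (hΛ : IsNormInt (k := k) Λ) : antipode k Λ = Λ := by
  have h1 : antipode k Λ * Λ = antipode k Λ := by
    obtain ⟨z, hz⟩ := hΛ.antipode_surjective Λ
    have hε : counit (R := k) z = 1 := by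
      rw [← hΛ.eps, ← hz, counit_antipode]
    calc antipode k Λ * Λ = antipode k Λ * antipode k z := by rw [hz]
      _ = antipode k Λ := by rw [← antipode_mul, hΛ.left, hε, one_smul]
  rw [← h1, hΛ.left, counit_antipode, hΛ.eps, one_smul]

/-- The distinguished element attached to the integral. -/
def distinguished (Λ : H) : H := ul (lam k H) Λ

lemma IsNormInt.ul_lam {Λ : H} (hΛ : IsNormInt (k := k) Λ) (h : H) :
    ul (lam k H) h = lam k H h • distinguished (k := k) Λ := by
  refine eq_of_forall_functional (k := k) fun f => ?_
  let φ : H →ₗ[k] k := f ∘ₗ ul (lam k H)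
  have hφ : LeftInv φ := by
    intro h
    have e1 : ur φ h = sw (k := k) (fun a b => sw (k := k) (fun c d => (lam k H c * f d) • a) b) h := by
      rw [ur_apply]
      refine sw_congr (fun a b => ?_) _
      have : φ b = sw (k := k) (fun c d => lam k H c * f d) b := by
        simp only [φ, LinearMap.comp_apply, ul_apply]
        rw [map_sw]
        simp
      rw [this]
      simp [sw, Finset.sum_smul]
    rw [e1, ← sw_assoc (k := k) (fun a c d => (lam k H c * f d) • a)]
    have e2 : ∀ a b, sw (k := k) (fun c d => (lam k H d * f b) • c) a = (lam k H a * f b) • (1 : H) := by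
      intro a b
      have := lam_leftInv (k := k) a
      rw [ur_apply] at this
      rw [mul_comm, ← smul_smul, ← this, smul_sw]
      simp [smul_smul, mul_comm]
    simp only [e2]
    simp only [φ, LinearMap.comp_apply, ul_apply]
    rw [map_sw]
    simp [sw, Finset.sum_smul]
  have := hΛ.leftInv_unique hφ
  have h2 := congrArg (fun ψ : H →ₗ[k] k => ψ h) this
  simp only [LinearMap.smul_apply, smul_eq_mul] at h2
  rw [map_smul, smul_eq_mul, mul_comm]
  exact h2

lemma IsNormInt.distinguished_isGroupLike {Λ : H} (hΛ : IsNormInt (k := k) Λ) :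
    IsGroupLikeElem k (distinguished (k := k) Λ) := by
  constructor
  · have h1 : counit (R := k) (distinguished (k := k) Λ) =
        sw (k := k) (fun a b => counit (R := k) b • lam k H a) Λ := by
      rw [distinguished, ul_apply, map_sw]
      simp [mul_comm]
    rw [h1, sw_counit_right (k := k) (fun a => lam k H a), hΛ.lam_self]
  · have h1 := sw_assoc (k := k) (fun a b c => lam k H a • (b ⊗ₜ[k] c)) Λ
    have e1 : ∀ a b : H, sw (k := k) (fun c d => lam k H a • (c ⊗ₜ[k] d)) b = lam k H a • comul (R := k) b := by
      intro a b
      rw [← sw_tmul, smul_sw]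
    have e2 : ∀ a b : H, sw (k := k) (fun c d => lam k H c • (d ⊗ₜ[k] b)) a =
        lam k H a • (distinguished (k := k) Λ ⊗ₜ[k] b) := by
      intro a b
      have := congrArg (fun z => z ⊗ₜ[k] b) (hΛ.ul_lam a)
      simp only [ul_apply] at this
      rw [TensorProduct.smul_tmul'] at *
      rw [← this]
      simp [sw, TensorProduct.sum_tmul, TensorProduct.smul_tmul']
    simp only [e1, e2] at h1
    have e3 : sw (k := k) (fun a b => lam k H a • comul (R := k) b) Λ =
        comul (R := k) (distinguished (k := k) Λ) := by
      rw [distinguished, ul_apply, map_sw]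
      simp
    have e4 : sw (k := k) (fun a b => lam k H a • (distinguished (k := k) Λ ⊗ₜ[k] b)) Λ =
        distinguished (k := k) Λ ⊗ₜ[k] distinguished (k := k) Λ := by
      have := map_sw (k := k) (TensorProduct.mk k H H (distinguished (k := k) Λ))
        (fun a b => lam k H a • b) Λ
      simp only [map_smul, TensorProduct.mk_apply] at this
      exact this.symm
    rw [← e3, ← e4, h1]

lemma IsNormInt.lam_distinguished_antipode {Λ : H} (hΛ : IsNormInt (k := k) Λ) (h : H) :
    lam k H (distinguished (k := k) Λ * antipode k h) = lam k H h := by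
  set g := distinguished (k := k) Λ with hg
  have hgl : IsGroupLikeElem k g := hΛ.distinguished_isGroupLike
  have hinv : antipode k g * g = 1 := hgl.antipode_mul_cancel
  let φ : H →ₗ[k] k := lam k H ∘ₗ LinearMap.mulLeft k g ∘ₗ antipode k
  have hφ : LeftInv φ := by
    intro h
    apply hΛ.antipode_injective
    have h1 : antipode k (ur φ h) = sw (k := k) (fun a b => lam k H (g * a) • b) (antipode k h) := by
      rw [ur_apply, map_sw, sw_antipode (k := k) (fun a b => lam k H (g * a) • b)]
      simp [φ]
    have h2 : g * sw (k := k) (fun a b => lam k H (g * a) • b) (antipode k h) =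
        ul (lam k H) (g * antipode k h) := by
      rw [ul_apply, sw_mul (k := k) (fun a b => lam k H a • b), mul_sw]
      have : ∀ F : H → H → H, Bil (k := k) F → sw (k := k) F g = F g g := by
        intro F hF
        rw [sw_eq_lift hF, hgl.comul_eq_tmul_self]
        rfl
      rw [this]
      · simp
      · constructor <;> intros <;> constructor <;> intros <;>
          simp [sw, add_mul, add_smul, smul_smul, Finset.sum_add_distrib, Finset.smul_sum, mul_comm]
    rw [hΛ.ul_lam] at h2
    have h3 := congrArg (fun z => antipode k g * z) h2
    simp only [← mul_assoc, hinv, one_mul, mul_smul_comm, ← hg] at h3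
    rw [h1, h3, map_smul, antipode_one]
    rfl
  have h1 := congrArg (fun ψ : H →ₗ[k] k => ψ h) (hΛ.leftInv_unique hφ)
  have h2 : φ Λ = 1 := by
    simp only [φ, LinearMap.comp_apply, LinearMap.mulLeft_apply]
    rw [hΛ.antipode_self, hΛ.left, hgl.counit_eq_one, one_smul, hΛ.lam_self]
  rw [h2, one_smul] at h1
  exact h1

lemma IsNormInt.antipode_pow_four {Λ : H} (hΛ : IsNormInt (k := k) Λ) (b : H) :
    antipode k (antipode k (antipode k (antipode k b))) =
      antipode k (distinguished (k := k) Λ) * b * distinguished (k := k) Λ := by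
  set g := distinguished (k := k) Λ with hg
  have hgl : IsGroupLikeElem k g := hΛ.distinguished_isGroupLike
  have hinv : antipode k g * g = 1 := hgl.antipode_mul_cancel
  have hinv' : g * antipode k g = 1 := hgl.mul_antipode_cancel
  have hS2 : antipode k (antipode k g) = g := hgl.antipode_antipode
  have key : b = g * antipode k (antipode k (antipode k (antipode k b))) * antipode k g := by
    rw [← sub_eq_zero]
    apply hΛ.lam_nondeg_right
    intro a
    rw [mul_sub, map_sub, sub_eq_zero]
    calc lam k H (a * b) = lam k H (g * antipode k (a * b)) :=
          (hΛ.lam_distinguished_antipode _).symm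
      _ = lam k H ((g * antipode k b) * antipode k a) := by rw [antipode_mul, mul_assoc]
      _ = lam k H (antipode k a * (g * antipode k (antipode k (antipode k b)))) := by
          rw [lam_nakayama, antipode_antipode_mul, hS2]
      _ = lam k H (g * antipode k (antipode k a * (g * antipode k (antipode k (antipode k b))))) :=
          (hΛ.lam_distinguished_antipode _).symm
      _ = lam k H ((g * antipode k (antipode k (antipode k (antipode k b))) * antipode k g) *
            antipode k (antipode k a)) := by
          simp only [antipode_mul, mul_assoc]
      _ = _ := (lam_nakayama _ _).symm
  conv_rhs => rw [key]
  rw [← mul_assoc, ← mul_assoc, hinv, one_mul, mul_assoc, hinv, mul_one]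

lemma groupLike_finite_order {g : H} (hg : IsGroupLikeElem k g) : ∃ N : ℕ, 0 < N ∧ g ^ N = 1 := by
  have hli := linearIndepOn_isGroupLikeElem (R := k) (A := H)
  have hfin : {a : H | IsGroupLikeElem k a}.Finite := by
    have : Finite {a : H | IsGroupLikeElem k a} := hli.linearIndependent.finite
    exact Set.toFinite _
  have hni : ¬ Function.Injective (fun n : ℕ => (⟨g ^ n, hg.pow⟩ : {a : H | IsGroupLikeElem k a})) := by
    have : Finite {a : H | IsGroupLikeElem k a} := hfin
    exact not_injective_infinite_finite _
  simp only [Function.Injective, not_forall] at hni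
  obtain ⟨m, n, hmn, hne⟩ := hni
  have hmn' : g ^ m = g ^ n := congrArg Subtype.val hmn
  have hu : IsUnit g := hg.isUnit
  wlog hlt : m < n generalizing m n
  · exact this n m hmn.symm (Ne.symm hne) hmn'.symm (by omega)
  refine ⟨n - m, by omega, ?_⟩
  have h1 : g ^ m * g ^ (n - m) = g ^ m * 1 := by
    rw [← pow_add, Nat.add_sub_cancel' hlt.le, hmn', mul_one]
  exact (hu.pow m).mul_left_cancel h1

lemma IsNormInt.antipode_sq_finite_order {Λ : H} (hΛ : IsNormInt (k := k) Λ) :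
    ∃ N : ℕ, 0 < N ∧ (antipode k * antipode k : Module.End k H) ^ N = 1 := by
  set g := distinguished (k := k) Λ with hg
  have hgl : IsGroupLikeElem k g := hΛ.distinguished_isGroupLike
  have hinv : antipode k g * g = 1 := hgl.antipode_mul_cancel
  obtain ⟨N, hN, hgN⟩ := groupLike_finite_order hgl
  refine ⟨2 * N, by omega, ?_⟩
  have h4 : (antipode k * antipode k : Module.End k H) ^ 2 =
      LinearMap.mulLeft k (antipode k g) * LinearMap.mulRight k g := by
    ext b
    have := hΛ.antipode_pow_four b
    simp only [pow_two, Module.End.mul_apply, LinearMap.mulLeft_apply, LinearMap.mulRight_apply]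
    rw [this, mul_assoc]
  have hc : Commute (LinearMap.mulLeft k (antipode k g)) (LinearMap.mulRight k g) := by
    change _ * _ = _ * _
    ext b
    simp [mul_assoc]
  have hSN : (antipode k g) ^ N = 1 := by
    have : (antipode k g) ^ N * g ^ N = 1 := by
      have hcomm : Commute (antipode k g) g := hinv.trans hgl.mul_antipode_cancel.symm
      rw [← hcomm.mul_pow, hinv, one_pow]
    rwa [hgN, mul_one] at this
  rw [pow_mul, h4, hc.mul_pow, LinearMap.pow_mulLeft, LinearMap.pow_mulRight, hgN, hSN]
  ext b
  simp

end Radford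

section CyclicTrace

variable {k}

open Polynomial in
lemma cyclic_sum_ne_zero {ι : Type*} (s : Finset ι) {N : ℕ} (hN : 0 < N) {ω : k}
    (hω : IsPrimitiveRoot ω N) (m : ι → ℕ → ℕ) :
    1 + ∑ i ∈ s, (∑ a ∈ Finset.range N, (m i a : k) * ω ^ a) *
      (∑ a ∈ Finset.range N, (m i a : k) * (ω ^ (N - 1)) ^ a) ≠ 0 := by
  intro h0
  let p : ℚ[X] := 1 + ∑ i ∈ s, (∑ a ∈ Finset.range N, (m i a : ℚ[X]) * X ^ a) *
      (∑ a ∈ Finset.range N, (m i a : ℚ[X]) * (X ^ (N - 1)) ^ a)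
  have hp : aeval ω p = 0 := by simpa [p] using h0
  have hd : cyclotomic N ℚ ∣ p := by
    rw [cyclotomic_eq_minpoly_rat hω hN]
    exact minpoly.dvd ℚ ω hp
  let z : ℂ := Complex.exp (2 * Real.pi * Complex.I / N)
  have hz : IsPrimitiveRoot z N := Complex.isPrimitiveRoot_exp N hN.ne'
  have hpz : aeval z p = 0 := by
    rw [cyclotomic_eq_minpoly_rat hz hN] at hd
    exact (minpoly.dvd_iff).1 hd
  have hconj : (starRingEnd ℂ) z = z ^ (N - 1) := by
    have h1 : z * z ^ (N - 1) = 1 := by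
      rw [← pow_succ', Nat.sub_add_cancel hN, hz.pow_eq_one]
    have h2 : ‖z‖ = 1 := Complex.norm_eq_one_of_pow_eq_one hz.pow_eq_one hN.ne'
    have h3 : (starRingEnd ℂ) z = z⁻¹ := (Complex.inv_eq_conj h2).symm
    rw [h3]
    exact (eq_inv_of_mul_eq_one_right h1).symm
  have h1 : (1 : ℂ) + ∑ i ∈ s, (∑ a ∈ Finset.range N, (m i a : ℂ) * z ^ a) *
      (starRingEnd ℂ) (∑ a ∈ Finset.range N, (m i a : ℂ) * z ^ a) = 0 := by
    have := hpz
    simp only [p, map_add, map_one, map_sum, map_mul, map_pow, aeval_X, map_natCast] at this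
    simpa [map_sum, map_mul, map_pow, hconj] using this
  simp only [Complex.mul_conj] at h1
  have h2 : ((1 + ∑ i ∈ s, Complex.normSq (∑ a ∈ Finset.range N, (m i a : ℂ) * z ^ a) : ℝ) : ℂ) = 0 := by
    push_cast
    exact h1
  have h3 := Complex.ofReal_eq_zero.1 h2
  have h4 : 0 ≤ ∑ i ∈ s, Complex.normSq (∑ a ∈ Finset.range N, (m i a : ℂ) * z ^ a) :=
    Finset.sum_nonneg fun i _ => Complex.normSq_nonneg _
  linarith

lemma trace_idempotent_nat {V : Type*} [AddCommGroup V] [Module k V] [FiniteDimensional k V]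
    {P : Module.End k V} (hP : IsIdempotentElem P) :
    LinearMap.trace k V P = (Module.finrank k (LinearMap.range P) : k) :=
  (LinearMap.IsIdempotentElem.isProj_range P hP).trace

lemma trace_of_pow_eq_one {n : Type*} [Fintype n] [DecidableEq n] {N : ℕ} (hN : 0 < N) {ω : k}
    (hω : IsPrimitiveRoot ω N) {U : Matrix n n k} (hU : U ^ N = 1) :
    ∃ m : ℕ → ℕ, U.trace = ∑ a ∈ Finset.range N, (m a : k) * ω ^ a ∧
      (U ^ (N - 1)).trace = ∑ a ∈ Finset.range N, (m a : k) * (ω ^ (N - 1)) ^ a := by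
  have hω0 : ω ≠ 0 := hω.ne_zero hN.ne'
  have hNk : (N : k) ≠ 0 := Nat.cast_ne_zero.2 hN.ne'
  let P : ℕ → Matrix n n k := fun a =>
    (N : k)⁻¹ • ∑ j ∈ Finset.range N, ((ω ^ a)⁻¹) ^ j • U ^ j
  have hUP : ∀ a, U * P a = ω ^ a • P a := by
    intro a
    simp only [P, mul_smul_comm, Finset.mul_sum]
    rw [smul_comm (ω ^ a) ((N : k)⁻¹)]
    congr 1
    have hc : (ω ^ a) ≠ 0 := pow_ne_zero _ hω0
    have e1 : ∀ j, ((ω ^ a)⁻¹) ^ j • (U * U ^ j) =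
        (ω ^ a) • (((ω ^ a)⁻¹) ^ (j + 1) • U ^ (j + 1)) := by
      intro j
      rw [smul_smul, pow_succ' _ j, ← mul_assoc, mul_inv_cancel₀ hc, one_mul, pow_succ']
    simp only [e1, ← Finset.smul_sum]
    congr 1
    have := Finset.sum_range_succ' (fun j => ((ω ^ a)⁻¹) ^ j • U ^ j) N
    rw [Finset.sum_range_succ] at this
    have e2 : ((ω ^ a)⁻¹) ^ N = 1 := by
      rw [inv_pow, ← pow_mul, mul_comm, pow_mul, hω.pow_eq_one, one_pow, inv_one]
    rw [hU, e2, pow_zero, pow_zero] at this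
    exact (add_right_cancel this).symm
  have hUjP : ∀ a j, U ^ j * P a = (ω ^ a) ^ j • P a := by
    intro a j
    induction j with
    | zero => simp
    | succ j ih => rw [pow_succ, mul_assoc, hUP, mul_smul_comm, ih, smul_smul, ← pow_succ']
  have hid : ∀ a, IsIdempotentElem (P a) := by
    intro a
    have hc : (ω ^ a) ≠ 0 := pow_ne_zero _ hω0
    change P a * P a = P a
    conv_lhs => enter [1]; simp only [P]
    rw [smul_mul_assoc, Finset.sum_mul]
    have : ∀ j, (((ω ^ a)⁻¹) ^ j • U ^ j) * P a = P a := by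
      intro j
      rw [smul_mul_assoc, hUjP, smul_smul, ← mul_pow, inv_mul_cancel₀ hc, one_pow, one_smul]
    simp only [this, Finset.sum_const, Finset.card_range]
    rw [← Nat.cast_smul_eq_nsmul k, smul_smul, inv_mul_cancel₀ hNk, one_smul]
  have hsum : ∑ a ∈ Finset.range N, P a = 1 := by
    simp only [P, ← Finset.smul_sum]
    rw [Finset.sum_comm]
    simp only [← Finset.sum_smul]
    rw [Finset.sum_eq_single_of_mem 0 (Finset.mem_range.2 hN)]
    · simp [hNk]
    · intro j hj hj0
      have : ∑ a ∈ Finset.range N, ((ω ^ a)⁻¹) ^ j = 0 := by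
        have hne : (ω⁻¹) ^ j ≠ 1 := by
          intro h
          exact hj0 (Nat.eq_zero_of_dvd_of_lt
            ((hω.inv.pow_eq_one_iff_dvd j).1 h) (Finset.mem_range.1 hj))
        have e : ∀ a, ((ω ^ a)⁻¹) ^ j = ((ω⁻¹) ^ j) ^ a := by
          intro a; rw [← inv_pow, ← pow_mul, ← pow_mul, mul_comm]
        simp only [e]
        rw [geom_sum_eq hne, ← pow_mul, mul_comm, pow_mul, hω.inv.pow_eq_one, one_pow, sub_self,
          zero_div]
      rw [this, zero_smul]
  have hm : ∀ a, ∃ m : ℕ, (P a).trace = (m : k) := by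
    intro a
    have hid' : IsIdempotentElem (Matrix.toLin' (P a)) := by
      change _ * _ = _
      rw [Module.End.mul_eq_comp, ← Matrix.toLin'_mul, (hid a).eq]
    exact ⟨_, (Matrix.trace_toLin'_eq (P a)).symm.trans (trace_idempotent_nat hid')⟩
  choose m hm using hm
  refine ⟨m, ?_, ?_⟩
  · rw [← mul_one U, ← hsum, Finset.mul_sum, Matrix.trace_sum]
    refine Finset.sum_congr rfl fun a _ => ?_
    rw [hUP, Matrix.trace_smul, hm, smul_eq_mul, mul_comm]
  · rw [← mul_one (U ^ (N - 1)), ← hsum, Finset.mul_sum, Matrix.trace_sum]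
    refine Finset.sum_congr rfl fun a _ => ?_
    rw [hUjP, Matrix.trace_smul, hm, smul_eq_mul, mul_comm, ← pow_mul, ← pow_mul, mul_comm a]

lemma matrix_conj_of_algEquiv {n : Type*} [Fintype n] [DecidableEq n]
    (τ : Matrix n n k ≃ₐ[k] Matrix n n k) :
    ∃ U V : Matrix n n k, U * V = 1 ∧ V * U = 1 ∧ ∀ X, τ X = U * X * V := by
  let e : Matrix n n k ≃ₐ[k] Module.End k (n → k) := Matrix.toLinAlgEquiv'
  obtain ⟨T, hT⟩ := ((e.symm.trans τ).trans e).eq_linearEquivConjAlgEquiv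
  refine ⟨e.symm T.toLinearMap, e.symm T.symm.toLinearMap, ?_, ?_, fun X => ?_⟩
  · rw [← map_mul, Module.End.mul_eq_comp]
    simp [← Module.End.one_eq_id]
  · rw [← map_mul, Module.End.mul_eq_comp]
    simp [← Module.End.one_eq_id]
  · have := congrArg (fun F => e.symm (F (e X))) hT
    simp only [AlgEquiv.trans_apply, AlgEquiv.symm_apply_apply, LinearEquiv.conjAlgEquiv_apply] at this
    rw [this, ← Module.End.mul_eq_comp, ← Module.End.mul_eq_comp, map_mul, map_mul,
      AlgEquiv.symm_apply_apply, mul_assoc]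

lemma trace_matrix_conj {n : Type*} [Fintype n] [DecidableEq n] (U V : Matrix n n k)
    (T : Module.End k (Matrix n n k)) (hT : ∀ X, T X = U * X * V) :
    LinearMap.trace k _ T = U.trace * V.trace := by
  rw [trace_eq_sum_coord (Matrix.stdBasis k n n), Fintype.sum_prod_type, Matrix.trace, Matrix.trace,
    Finset.sum_mul_sum]
  refine Finset.sum_congr rfl fun a _ => Finset.sum_congr rfl fun b _ => ?_
  rw [Matrix.stdBasis_eq_single, hT]
  have hcoord : ∀ Y : Matrix n n k, (Matrix.stdBasis k n n).coord (a, b) Y = Y a b := by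
    intro Y
    rw [Module.Basis.coord_apply]
    have h := congrArg (fun Z : Matrix n n k => Z a b) ((Matrix.stdBasis k n n).sum_repr Y)
    simp only [Matrix.sum_apply, Matrix.stdBasis_eq_single, Matrix.smul_apply,
      Matrix.single_apply, Fintype.sum_prod_type] at h
    rw [← h]
    simp [ite_and]
  rw [hcoord, Matrix.mul_apply]
  simp [Matrix.mul_apply, Matrix.single_apply, ite_and]

lemma trace_matrix_aut {n : Type*} [Fintype n] [DecidableEq n] {N : ℕ} (hN : 0 < N) {ω : k}
    (hω : IsPrimitiveRoot ω N) (τ : Matrix n n k ≃ₐ[k] Matrix n n k) (hτ : τ ^ N = 1) :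
    ∃ m : ℕ → ℕ, LinearMap.trace k _ τ.toLinearMap =
      (∑ a ∈ Finset.range N, (m a : k) * ω ^ a) *
      (∑ a ∈ Finset.range N, (m a : k) * (ω ^ (N - 1)) ^ a) := by
  obtain ⟨U, V, hUV, hVU, hconj⟩ := matrix_conj_of_algEquiv τ
  have hpow : ∀ j X, (τ ^ j) X = U ^ j * X * V ^ j := by
    intro j
    induction j with
    | zero => simp
    | succ j ih =>
      intro X
      rw [pow_succ', AlgEquiv.mul_apply, ih, hconj, pow_succ', pow_succ]
      simp only [mul_assoc]
  have hUVN : U ^ N * V ^ N = 1 := by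
    have hc : Commute U V := hUV.trans hVU.symm
    rw [← hc.mul_pow, hUV, one_pow]
  have hVUN : V ^ N * U ^ N = 1 := by
    have hc : Commute V U := hVU.trans hUV.symm
    rw [← hc.mul_pow, hVU, one_pow]
  obtain hn | hn := isEmpty_or_nonempty n
  · exact ⟨fun _ => 0, by simp [Subsingleton.elim τ.toLinearMap 0]⟩
  have hscal : U ^ N ∈ Set.range (Matrix.scalar n) := by
    rw [Matrix.mem_range_scalar_iff_commute_single']
    intro i j
    have h1 := hpow N (Matrix.single i j 1)
    rw [hτ, AlgEquiv.one_apply] at h1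
    change _ * _ = _ * _
    conv_lhs => rw [h1]
    rw [mul_assoc, hVUN, mul_one]
  obtain ⟨c, hc⟩ := hscal
  have hc0 : c ≠ 0 := by
    rintro rfl
    rw [map_zero] at hc
    rw [← hc, zero_mul] at hUVN
    exact zero_ne_one hUVN
  obtain ⟨r, hr⟩ := IsAlgClosed.exists_pow_nat_eq c hN
  have hr0 : r ≠ 0 := by
    rintro rfl
    rw [zero_pow hN.ne'] at hr
    exact hc0 hr.symm
  have hU' : (r⁻¹ • U) ^ N = 1 := by
    rw [smul_pow, ← hc, inv_pow, hr, Matrix.scalar_apply, ← Matrix.smul_one_eq_diagonal, smul_smul,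
      inv_mul_cancel₀ hc0, one_smul]
  have hV' : (r⁻¹ • U) ^ (N - 1) = r • V := by
    have h1 : (r⁻¹ • U) * (r • V) = 1 := by
      rw [smul_mul_smul_comm, inv_mul_cancel₀ hr0, hUV, one_smul]
    calc (r⁻¹ • U) ^ (N - 1) = (r⁻¹ • U) ^ (N - 1) * ((r⁻¹ • U) * (r • V)) := by rw [h1, mul_one]
      _ = r • V := by rw [← mul_assoc, ← pow_succ, Nat.sub_add_cancel hN, hU', one_mul]
  obtain ⟨m, hm1, hm2⟩ := trace_of_pow_eq_one hN hω hU'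
  refine ⟨m, ?_⟩
  rw [← hm1, ← hm2, hV']
  refine trace_matrix_conj _ _ _ fun X => ?_
  rw [smul_mul_assoc, smul_mul_smul_comm, inv_mul_cancel₀ hr0, one_smul]
  exact hconj X

lemma trace_pi {ι : Type*} [Fintype ι] [DecidableEq ι] {V : ι → Type*} [∀ i, AddCommGroup (V i)]
    [∀ i, Module k (V i)] [∀ i, FiniteDimensional k (V i)] (T : Module.End k (∀ i, V i)) :
    LinearMap.trace k _ T = ∑ i, LinearMap.trace k (V i)
      (LinearMap.proj i ∘ₗ T ∘ₗ LinearMap.single k V i) := by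
  rw [trace_eq_sum_coord (Pi.basis fun i => Module.finBasis k (V i)), Fintype.sum_sigma]
  refine Finset.sum_congr rfl fun i _ => ?_
  rw [trace_eq_sum_coord (Module.finBasis k (V i))]
  refine Finset.sum_congr rfl fun j _ => ?_
  simp [Pi.basis_repr]

end CyclicTrace

section SemisimpleTrace

variable {k}

lemma trace_aut_pi_matrix {n : ℕ} {d : Fin n → ℕ}
    (τ : (∀ i, Matrix (Fin (d i)) (Fin (d i)) k) ≃ₐ[k] (∀ i, Matrix (Fin (d i)) (Fin (d i)) k))
    {N : ℕ} (hN : 0 < N) (hτN : τ ^ N = 1) {ω : k} (hω : IsPrimitiveRoot ω N)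
    (hc : ∀ z, (∀ x, z * x = x * z) → τ z = z)
    {e : ∀ i, Matrix (Fin (d i)) (Fin (d i)) k} (he : e * e = e) (hec : ∀ x, e * x = x * e) :
    ∃ m : Fin n → ℕ → ℕ, LinearMap.trace k _ (τ.toLinearMap ∘ₗ LinearMap.mulLeft k e) =
      ∑ i, (∑ a ∈ Finset.range N, (m i a : k) * ω ^ a) *
      (∑ a ∈ Finset.range N, (m i a : k) * (ω ^ (N - 1)) ^ a) := by
  let B := ∀ i, Matrix (Fin (d i)) (Fin (d i)) k
  have hz : ∀ i, τ (Pi.single i 1) = Pi.single i 1 := by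
    intro i
    apply hc
    intro x
    ext j : 1
    obtain rfl | hij := eq_or_ne i j
    · simp
    · simp [Pi.single_eq_of_ne hij.symm]
  have hsingle : ∀ i X, τ (Pi.single i X) = Pi.single i (τ (Pi.single i X) i) := by
    intro i X
    have h1 : (Pi.single i X : B) = Pi.single i 1 * Pi.single i X := by
      rw [← Pi.single_mul, one_mul]
    conv_lhs => rw [h1, map_mul, hz]
    ext j : 1
    obtain rfl | hij := eq_or_ne i j
    · simp
    · simp [Pi.single_eq_of_ne hij.symm]
  let t : ∀ i, Matrix (Fin (d i)) (Fin (d i)) k →ₐ[k] Matrix (Fin (d i)) (Fin (d i)) k := fun i =>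
    AlgHom.ofLinearMap (LinearMap.proj i ∘ₗ τ.toLinearMap ∘ₗ
      LinearMap.single k (fun i => Matrix (Fin (d i)) (Fin (d i)) k) i)
      (by simp [hz])
      (by
        intro x y
        simp [Pi.single_mul])
  have ht : ∀ i X, t i X = τ (Pi.single i X) i := fun i X => rfl
  have htinj : ∀ i, Function.Injective (t i) := by
    intro i X Y hXY
    rw [ht, ht] at hXY
    have : τ (Pi.single i X) = τ (Pi.single i Y) := by rw [hsingle i X, hsingle i Y, hXY]
    exact Pi.single_injective i (τ.injective this)
  let T : ∀ i, Matrix (Fin (d i)) (Fin (d i)) k ≃ₐ[k] Matrix (Fin (d i)) (Fin (d i)) k := fun i =>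
    AlgEquiv.ofBijective (t i) ⟨htinj i,
      (LinearMap.injective_iff_surjective (f := (t i).toLinearMap)).1 (htinj i)⟩
  have hT : ∀ i X, τ (Pi.single i X) = Pi.single i (T i X) := fun i X => hsingle i X
  have hTpow : ∀ j i X, (τ ^ j) (Pi.single i X) = Pi.single i ((T i ^ j) X) := by
    intro j
    induction j with
    | zero => intro i X; simp
    | succ j ih => intro i X; rw [pow_succ, AlgEquiv.mul_apply, hT, ih, pow_succ, AlgEquiv.mul_apply]
  have hTN : ∀ i, T i ^ N = 1 := by
    intro i
    ext1 X
    have := hTpow N i X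
    rw [hτN] at this
    exact (Pi.single_injective i this).symm
  have hscal : ∀ i, ∃ c : k, (c = 0 ∨ c = 1 ) ∧ e i = c • 1 := by
    intro i
    have hs : e i ∈ Set.range (Matrix.scalar (Fin (d i))) := by
      rw [Matrix.mem_range_scalar_iff_commute_single']
      intro a b
      have := congrFun (hec (Pi.single i (Matrix.single a b 1))) i
      simp only [Pi.mul_apply, Pi.single_eq_same] at this
      exact this.symm
    obtain ⟨c, hc⟩ := hs
    rw [Matrix.scalar_apply, ← Matrix.smul_one_eq_diagonal] at hc
    by_cases hd : d i = 0
    · have : IsEmpty (Fin (d i)) := by rw [hd]; infer_instance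
      exact ⟨0, Or.inl rfl, Subsingleton.elim _ _⟩
    · have : Nonempty (Fin (d i)) := ⟨⟨0, Nat.pos_of_ne_zero hd⟩⟩
      refine ⟨c, ?_, hc.symm⟩
      have h1 := congrFun he i
      rw [Pi.mul_apply, ← hc] at h1
      have h2 : (c * c - c) • (1 : Matrix (Fin (d i)) (Fin (d i)) k) = 0 := by
        rw [sub_smul, ← h1]; simp [smul_smul]
      have h3 := (smul_eq_zero.1 h2).resolve_right one_ne_zero
      have h4 : c * (c - 1) = 0 := by rw [← h3]; ring
      rcases mul_eq_zero.1 h4 with h | h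
      · exact Or.inl h
      · exact Or.inr (sub_eq_zero.1 h)
  choose c hc01 hce using hscal
  choose m hm using fun i => trace_matrix_aut hN hω (T i) (hTN i)
  classical
  refine ⟨fun i => if c i = 0 then fun _ => 0 else m i, ?_⟩
  rw [trace_pi]
  refine Finset.sum_congr rfl fun i _ => ?_
  have h1 : LinearMap.proj i ∘ₗ (τ.toLinearMap ∘ₗ LinearMap.mulLeft k e) ∘ₗ
      LinearMap.single k (fun i => Matrix (Fin (d i)) (Fin (d i)) k) i = c i • (T i).toLinearMap := by
    ext1 X
    have h2 : e * Pi.single i X = c i • (Pi.single i X : B) := by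
      ext j : 1
      obtain rfl | hij := eq_or_ne i j
      · simp [hce]
      · simp [Pi.single_eq_of_ne hij.symm]
    simp only [LinearMap.comp_apply, LinearMap.mulLeft_apply, LinearMap.single_apply, h2,
      AlgEquiv.toLinearMap_apply, map_smul, hT]
    simp
  rw [h1, map_smul, hm]
  rcases hc01 i with h | h
  · simp [h]
  · simp [h]

lemma trace_aut_ne_zero {A : Type*} [Ring A] [Algebra k A] [FiniteDimensional k A]
    [IsSemisimpleRing A] (σ : A ≃ₐ[k] A) {N : ℕ} (hN : 0 < N) (hσN : σ ^ N = 1)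
    (hc : ∀ z, (∀ x, z * x = x * z) → σ z = z) (ε : A →ₐ[k] k) {Λ : A} (hε : ε Λ = 1)
    (hl : ∀ h, h * Λ = ε h • Λ) (hr : ∀ h, Λ * h = ε h • Λ) :
    LinearMap.trace k A σ.toLinearMap ≠ 0 := by
  obtain ⟨n, d, -, ⟨φ⟩⟩ := IsSemisimpleRing.exists_algEquiv_pi_matrix_of_isAlgClosed k A
  have : NeZero (N : k) := ⟨Nat.cast_ne_zero.2 hN.ne'⟩
  obtain ⟨ω, hω⟩ := HasEnoughRootsOfUnity.exists_primitiveRoot k N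
  let τ := (φ.symm.trans σ).trans φ
  have hτ : ∀ x, τ x = φ (σ (φ.symm x)) := fun x => rfl
  have hτN : τ ^ N = 1 := by
    have : ∀ j x, (τ ^ j) x = φ ((σ ^ j) (φ.symm x)) := by
      intro j
      induction j with
      | zero => intro x; simp
      | succ j ih => intro x; rw [pow_succ', AlgEquiv.mul_apply, ih, hτ]; simp [pow_succ']
    ext1 x
    rw [this, hσN]
    simp
  have hΛc : ∀ x, Λ * x = x * Λ := fun x => by rw [hl, hr]
  have hΛΛ : Λ * Λ = Λ := by rw [hl, hε, one_smul]
  obtain ⟨m, hm⟩ := trace_aut_pi_matrix τ hN hτN hω (by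
    intro z hz
    rw [hτ, hc, AlgEquiv.apply_symm_apply]
    intro x
    apply φ.injective
    simp [hz]) (e := φ (1 - Λ))
    (by rw [← map_mul]; congr 1; simp [mul_sub, sub_mul, hΛΛ])
    (by
      intro x
      obtain ⟨y, rfl⟩ := φ.surjective x
      rw [← map_mul, ← map_mul, sub_mul, mul_sub, hΛc, one_mul, mul_one])
  have h1 : LinearMap.trace k _ (τ.toLinearMap ∘ₗ LinearMap.mulLeft k (φ (1 - Λ))) =
      LinearMap.trace k A (σ.toLinearMap ∘ₗ LinearMap.mulLeft k (1 - Λ)) := by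
    rw [← LinearMap.trace_conj' (σ.toLinearMap ∘ₗ LinearMap.mulLeft k (1 - Λ)) φ.toLinearEquiv]
    congr 1
    refine LinearMap.ext fun x => ?_
    simp [hτ, LinearEquiv.conj_apply]
  have h2 : σ.toLinearMap = ε.toLinearMap.smulRight Λ +
      σ.toLinearMap ∘ₗ LinearMap.mulLeft k (1 - Λ) := by
    ext x
    simp [sub_mul, hr, hc Λ hΛc]
  rw [h2, map_add, trace_smulRight, ← h1, hm, AlgHom.toLinearMap_apply, hε]
  exact cyclic_sum_ne_zero Finset.univ hN hω m

end SemisimpleTrace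

section AntipodeSquare

variable {k H} [FiniteDimensional k H]
open Coalgebra HopfAlgebra

lemma IsNormInt.trace_antipode_sq_ne_zero [IsSemisimpleRing H] {Λ : H}
    (hΛ : IsNormInt (k := k) Λ) : lam k H 1 ≠ 0 := by
  obtain ⟨N, hN, hSN⟩ := hΛ.antipode_sq_finite_order
  have hinj : Function.Injective (antipode k * antipode k : Module.End k H) :=
    hΛ.antipode_injective.comp hΛ.antipode_injective
  let s : H →ₐ[k] H := AlgHom.ofLinearMap (antipode k * antipode k : Module.End k H)
    (by simp) (fun x y => antipode_antipode_mul x y)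
  let σ : H ≃ₐ[k] H := AlgEquiv.ofBijective s
    ⟨hinj, (LinearMap.injective_iff_surjective (f := (antipode k * antipode k : Module.End k H))).1 hinj⟩
  have hσ : σ.toLinearMap = (antipode k * antipode k : Module.End k H) := rfl
  have hσj : ∀ j x, (σ ^ j) x = ((antipode k * antipode k : Module.End k H) ^ j) x := by
    intro j
    induction j with
    | zero => intro x; rfl
    | succ j ih => intro x; rw [pow_succ', pow_succ', AlgEquiv.mul_apply, ih]; rfl
  have h1 := trace_aut_ne_zero σ hN (by ext x; rw [hσj, hSN]; rfl) (by
    intro z hz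
    have : z - antipode k (antipode k z) = 0 := by
      apply hΛ.lam_nondeg_right
      intro y
      rw [mul_sub, map_sub, ← lam_nakayama, hz, sub_self]
    exact (sub_eq_zero.1 this).symm) (Bialgebra.counitAlgHom k H) hΛ.eps hΛ.left hΛ.right
  rw [hσ] at h1
  rw [lam_apply]
  convert h1 using 2
  ext x
  simp

lemma IsNormInt.distinguished_eq_one [IsSemisimpleRing H] {Λ : H}
    (hΛ : IsNormInt (k := k) Λ) : distinguished (k := k) Λ = 1 := by
  have h1 := hΛ.ul_lam 1
  rw [ul_apply, sw_one (fun a b => lam k H a • b)] at h1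
  exact (smul_right_injective H hΛ.trace_antipode_sq_ne_zero h1).symm

lemma IsNormInt.antipode_four [IsSemisimpleRing H] {Λ : H}
    (hΛ : IsNormInt (k := k) Λ) (b : H) :
    antipode k (antipode k (antipode k (antipode k b))) = b := by
  rw [hΛ.antipode_pow_four, hΛ.distinguished_eq_one]
  simp

/-- The Galois map `x ⊗ y ↦ x₁ ⊗ x₂ y`. -/
def galois : Module.End k (H ⊗[k] H) :=
  TensorProduct.lift (Bil.lin (k := k)
    (f := fun x y => sw (k := k) (fun a b => a ⊗ₜ[k] (b * y)) x) (by
      constructor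
      · intro b
        exact sw_isLinear _ (by intro b; constructor <;> intros <;> simp [TensorProduct.add_tmul, TensorProduct.smul_tmul'])
      · intro a
        constructor <;> intros <;> simp [sw, mul_add, TensorProduct.tmul_add, Finset.sum_add_distrib, Finset.smul_sum]))

lemma galois_tmul (x y : H) :
    galois (x ⊗ₜ[k] y) = sw (k := k) (fun a b => a ⊗ₜ[k] (b * y)) x := rfl

/-- The inverse Galois map `x ⊗ y ↦ x₁ ⊗ S(x₂) y`. -/
def galoisInv : Module.End k (H ⊗[k] H) :=
  TensorProduct.lift (Bil.lin (k := k)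
    (f := fun x y => sw (k := k) (fun a b => a ⊗ₜ[k] (antipode k b * y)) x) (by
      constructor
      · intro b
        exact sw_isLinear _ (by intro b; constructor <;> intros <;> simp [TensorProduct.add_tmul, TensorProduct.smul_tmul'])
      · intro a
        constructor <;> intros <;> simp [sw, mul_add, TensorProduct.tmul_add, Finset.sum_add_distrib, Finset.smul_sum]))

lemma galoisInv_tmul (x y : H) :
    galoisInv (x ⊗ₜ[k] y) = sw (k := k) (fun a b => a ⊗ₜ[k] (antipode k b * y)) x := rfl

lemma galoisInv_mul_galois : (galoisInv * galois : Module.End k (H ⊗[k] H)) = 1 := by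
  ext x y
  simp only [AlgebraTensorModule.curry_apply, curry_apply, LinearMap.restrictScalars_self,
    Module.End.mul_apply, galois_tmul, map_sw, galoisInv_tmul, Module.End.one_apply]
  have h1 := sw_assoc (k := k) (fun a b c => a ⊗ₜ[k] (antipode k b * (c * y))) x
  rw [h1]
  have h2 : ∀ b, sw (k := k) (fun c d => antipode k c * (d * y)) b = counit (R := k) b • y := by
    intro b
    have := sw_antipode_left (k := k) (fun z => z * y) b
    simpa [mul_assoc] using this
  have h3 : ∀ a b : H, sw (k := k) (fun c d => a ⊗ₜ[k] (antipode k c * (d * y))) b =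
      counit (R := k) b • a ⊗ₜ[k] y := by
    intro a b
    have := map_sw (k := k) (TensorProduct.mk k H H a) (fun c d => antipode k c * (d * y)) b
    rw [h2] at this
    simpa using this.symm
  rw [sw_congr h3]
  exact sw_counit_right (k := k) (fun a => a ⊗ₜ[k] y) x

/-- The character of the regular representation. -/
def regChar : H →ₗ[k] k := LinearMap.trace k H ∘ₗ LinearMap.mul k H

lemma regChar_apply (h : H) : regChar h = LinearMap.trace k H (LinearMap.mulLeft k h) := rfl

lemma regChar_convolution (h : H) :
    sw (k := k) (fun a b => regChar a * regChar b) h = (Module.finrank k H : k) * regChar h := by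
  have h0 : (galois * galoisInv : Module.End k (H ⊗[k] H)) = 1 :=
    mul_eq_one_comm.1 galoisInv_mul_galois
  have h1 : galois * TensorProduct.map (LinearMap.mulLeft k h) (1 : Module.End k H) =
      sw (k := k) (fun a b => TensorProduct.map (LinearMap.mulLeft k a) (LinearMap.mulLeft k b)) h *
        galois := by
    ext x y
    simp only [AlgebraTensorModule.curry_apply, curry_apply, LinearMap.restrictScalars_self,
      Module.End.mul_apply, galois_tmul, map_sw, Module.End.one_apply, TensorProduct.map_tmul,
      LinearMap.mulLeft_apply]
    rw [sw_mul (k := k) (fun a b => a ⊗ₜ[k] (b * y)), sw_comm]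
    refine sw_congr (fun a b => ?_) x
    simp [sw, mul_assoc]
  have h2 : LinearMap.trace k _ (TensorProduct.map (LinearMap.mulLeft k h) (1 : Module.End k H)) =
      LinearMap.trace k _ (sw (k := k)
        (fun a b => TensorProduct.map (LinearMap.mulLeft k a) (LinearMap.mulLeft k b)) h) := by
    calc _ = LinearMap.trace k _ (galoisInv * (galois *
          TensorProduct.map (LinearMap.mulLeft k h) (1 : Module.End k H))) := by
          rw [← mul_assoc, galoisInv_mul_galois, one_mul]
      _ = _ := by rw [LinearMap.trace_mul_comm, h1, mul_assoc, h0, mul_one]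
  rw [map_sw] at h2
  simp only [LinearMap.trace_tensorProduct', LinearMap.trace_one] at h2
  rw [mul_comm]
  exact h2.symm

lemma regChar_antipode_sq {Λ : H} (hΛ : IsNormInt (k := k) Λ) (h : H) :
    regChar (k := k) (antipode k (antipode k h)) = regChar h := by
  let s : H ≃ₗ[k] H := LinearEquiv.ofBijective (antipode k * antipode k : Module.End k H)
    ⟨hΛ.antipode_injective.comp hΛ.antipode_injective,
      hΛ.antipode_surjective.comp hΛ.antipode_surjective⟩
  have hs : ∀ x, s x = antipode k (antipode k x) := fun x => rfl
  rw [regChar_apply, regChar_apply, ← LinearMap.trace_conj' (LinearMap.mulLeft k h) s]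
  congr 1
  ext x
  obtain ⟨x, rfl⟩ := s.surjective x
  simp only [LinearEquiv.conj_apply, LinearMap.comp_apply, LinearEquiv.coe_coe,
    LinearEquiv.symm_apply_apply, LinearMap.mulLeft_apply]
  rw [hs, hs, antipode_antipode_mul]

lemma trace_eq_int_of_cube {V : Type*} [AddCommGroup V] [Module k V] [FiniteDimensional k V]
    (T : Module.End k V) (hT : T * T * T = T) : ∃ m : ℤ, LinearMap.trace k V T = m := by
  have h4 : T * T * (T * T) = T * T := by rw [← mul_assoc, hT]
  have h3 : T * (T * T) = T := by rw [← mul_assoc, hT]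
  have hp : ((2 : k)⁻¹ • (T * T + T)) * ((2 : k)⁻¹ • (T * T + T)) = (2 : k)⁻¹ • (T * T + T) := by
    simp only [smul_mul_smul_comm, mul_add, add_mul, h4, h3, hT]
    module
  have hm : ((2 : k)⁻¹ • (T * T - T)) * ((2 : k)⁻¹ • (T * T - T)) = (2 : k)⁻¹ • (T * T - T) := by
    simp only [smul_mul_smul_comm, mul_sub, sub_mul, h4, h3, hT]
    module
  refine ⟨Module.finrank k (LinearMap.range ((2 : k)⁻¹ • (T * T + T))) -
    Module.finrank k (LinearMap.range ((2 : k)⁻¹ • (T * T - T))), ?_⟩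
  push_cast
  rw [← trace_idempotent_nat hp, ← trace_idempotent_nat hm, ← map_sub]
  congr 1
  module

lemma eq_one_of_involution {V : Type*} [AddCommGroup V] [Module k V] [FiniteDimensional k V]
    (T : Module.End k V) (hT : T * T = 1) {m : ℤ} (hm : m ≠ 0)
    (htr : LinearMap.trace k V T = (Module.finrank k V : k) * m) {x : V} (hx : x ≠ 0)
    (hTx : T x = x) : T = 1 := by
  have hp : ((2 : k)⁻¹ • (1 + T)) * ((2 : k)⁻¹ • (1 + T)) = (2 : k)⁻¹ • (1 + T) := by
    simp only [smul_mul_smul_comm, mul_add, add_mul, hT, one_mul, mul_one]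
    module
  have hq : ((2 : k)⁻¹ • (1 - T)) * ((2 : k)⁻¹ • (1 - T)) = (2 : k)⁻¹ • (1 - T) := by
    simp only [smul_mul_smul_comm, mul_sub, sub_mul, hT, one_mul, mul_one]
    module
  set a := Module.finrank k (LinearMap.range ((2 : k)⁻¹ • (1 + T))) with ha
  set b := Module.finrank k (LinearMap.range ((2 : k)⁻¹ • (1 - T))) with hb
  have h1 := trace_idempotent_nat hp
  have h2 := trace_idempotent_nat hq
  rw [map_smul, map_add, LinearMap.trace_one, htr, smul_eq_mul] at h1
  rw [map_smul, map_sub, LinearMap.trace_one, htr, smul_eq_mul] at h2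
  have h3 : (Module.finrank k V : k) * (1 + m) = 2 * a := by
    rw [← h1]; field_simp
  have h4 : (Module.finrank k V : k) * (1 - m) = 2 * b := by
    rw [← h2]; field_simp
  have h3' : (Module.finrank k V : ℤ) * (1 + m) = 2 * a := by exact_mod_cast h3
  have h4' : (Module.finrank k V : ℤ) * (1 - m) = 2 * b := by exact_mod_cast h4
  have hn : 0 < Module.finrank k V := Module.finrank_pos_iff_exists_ne_zero.2 ⟨x, hx⟩
  have ha0 : a ≠ 0 := by
    intro h0
    have h5 : LinearMap.range ((2 : k)⁻¹ • (1 + T)) = ⊥ := Submodule.finrank_eq_zero.1 h0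
    have h6 : (2 : k)⁻¹ • (1 + T) = 0 := LinearMap.range_eq_bot.1 h5
    have h7 := congrArg (fun F : Module.End k V => F x) h6
    simp only [LinearMap.smul_apply, LinearMap.add_apply, Module.End.one_apply, hTx,
      LinearMap.zero_apply] at h7
    apply hx
    rw [← h7]
    module
  have hb0 : b = 0 := by
    by_contra hb0
    have h5 : 0 < 1 + m := by
      by_contra h
      have : (Module.finrank k V : ℤ) * (1 + m) ≤ 0 :=
        mul_nonpos_of_nonneg_of_nonpos (by omega) (by omega)
      omega
    have h6 : 0 < 1 - m := by
      by_contra h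
      have : (Module.finrank k V : ℤ) * (1 - m) ≤ 0 :=
        mul_nonpos_of_nonneg_of_nonpos (by omega) (by omega)
      omega
    omega
  have h5 : LinearMap.range ((2 : k)⁻¹ • (1 - T)) = ⊥ := Submodule.finrank_eq_zero.1 hb0
  have h6 : (2 : k)⁻¹ • (1 - T) = 0 := LinearMap.range_eq_bot.1 h5
  rcases smul_eq_zero.1 h6 with h | h
  · simp at h
  · exact (sub_eq_zero.1 h).symm

lemma IsNormInt.trace_ul_antipode_sq {Λ : H} (hΛ : IsNormInt (k := k) Λ) (f : H →ₗ[k] k) :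
    LinearMap.trace k H ((antipode k * antipode k) * ul f) = lam k H 1 * f Λ := by
  rw [hΛ.trace_eq]
  have h1 : ∀ x y : H, lam k H (y * antipode k (((antipode k * antipode k : Module.End k H) * ul f) x)) =
      sw (k := k) (fun a b => f a * lam k H (antipode k b * y)) x := by
    intro x y
    have := map_sw (lam k H ∘ₗ LinearMap.mulLeft k y ∘ₗ antipode k ∘ₗ antipode k ∘ₗ antipode k)
      (fun a b => f a • b) x
    simp only [LinearMap.comp_apply, LinearMap.mulLeft_apply] at this
    rw [Module.End.mul_apply, Module.End.mul_apply, ul_apply, this]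
    refine sw_congr (fun a b => ?_) x
    simp [lam_nakayama (antipode k b) y]
  rw [sw_congr h1, sw_assoc (k := k) (fun a b c => f a * lam k H (antipode k b * c))]
  have h2 : ∀ a b : H, sw (k := k) (fun c d => f a * lam k H (antipode k c * d)) b =
      counit (R := k) b • (lam k H 1 * f a) := by
    intro a b
    have := sw_antipode_left (k := k) (fun z => f a * lam k H z) b
    rw [this, mul_comm]
  rw [sw_congr h2, sw_counit_right (k := k) (fun a => lam k H 1 * f a)]

theorem antipode_antipode_eq [IsSemisimpleRing H] (x : H) : antipode k (antipode k x) = x := by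
  obtain ⟨Λ, hΛ⟩ := exists_normInt (k := k) (H := H)
  have hμ := hΛ.trace_antipode_sq_ne_zero
  have hnt : (1 : H) ≠ 0 := fun h => hμ (by rw [h, map_zero])
  have hn : 0 < Module.finrank k H := Module.finrank_pos_iff_exists_ne_zero.2 ⟨1, hnt⟩
  have hnk : (Module.finrank k H : k) ≠ 0 := Nat.cast_ne_zero.2 hn.ne'
  set n : k := (Module.finrank k H : k) with hnn
  let S2 : Module.End k H := antipode k * antipode k
  let Ψ : Module.End k H := ul regChar
  have hS : S2 * S2 = 1 := by
    ext x; exact hΛ.antipode_four x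
  have hΨ : Ψ * Ψ = n • Ψ := by
    ext x
    rw [LinearMap.smul_apply]
    change ul regChar (ul regChar x) = n • ul regChar x
    conv_lhs => rw [ul_apply (k := k) regChar x, map_sw]
    rw [ul_apply, smul_sw]
    have h1 : ∀ a b : H, ul (k := k) regChar (regChar (k := k) a • b) =
        sw (k := k) (fun c d => (regChar (k := k) a * regChar c) • d) b := by
      intro a b
      rw [map_smul, ul_apply, smul_sw]
      simp [smul_smul]
    rw [sw_congr h1, ← sw_assoc (k := k) (fun a b c => (regChar (k := k) a * regChar b) • c)]
    refine sw_congr (fun a b => ?_) x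
    rw [smul_smul, ← regChar_convolution (k := k) a]
    simp [sw, Finset.sum_smul]
  have hcomm : Ψ * S2 = S2 * Ψ := by
    ext x
    rw [Module.End.mul_apply, Module.End.mul_apply]
    change ul regChar (antipode k (antipode k x)) = (antipode k * antipode k : Module.End k H) (ul regChar x)
    rw [ul_apply, ul_apply, map_sw, sw_antipode (fun a b => regChar (k := k) a • b),
      sw_antipode (fun a b => regChar (k := k) (antipode k b) • antipode k a)]
    refine sw_congr (fun a b => ?_) x
    rw [regChar_antipode_sq hΛ, map_smul, Module.End.mul_apply]
  have htr : LinearMap.trace k H (S2 * Ψ) = lam k H 1 := by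
    rw [hΛ.trace_ul_antipode_sq regChar, regChar_apply]
    have : LinearMap.mulLeft k Λ = (counit (R := k) (A := H)).smulRight Λ := by
      ext x; simp [hΛ.right]
    rw [this, trace_smulRight, hΛ.eps, mul_one]
  let T : Module.End k H := n⁻¹ • (S2 * Ψ)
  have hT : T * T * T = T := by
    have h1 : S2 * Ψ * (S2 * Ψ) = n • Ψ := by
      rw [mul_assoc, ← mul_assoc Ψ, hcomm, mul_assoc S2 Ψ, ← mul_assoc S2 S2, hS, one_mul, hΨ]
    have h2 : Ψ * (S2 * Ψ) = n • (S2 * Ψ) := by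
      rw [← mul_assoc, hcomm, mul_assoc, hΨ, mul_smul_comm]
    rw [show T * T = n⁻¹ • Ψ by
      simp only [T, smul_mul_smul_comm, h1, smul_smul]; congr 1; field_simp]
    simp only [T, smul_mul_smul_comm, h2, smul_smul]
    congr 1
    field_simp
  obtain ⟨m, hm⟩ := trace_eq_int_of_cube T hT
  have hm' : lam k H 1 = n * m := by
    rw [← hm, map_smul, htr, smul_eq_mul]
    field_simp
  have htrS : LinearMap.trace k H S2 = n * m := by
    rw [← hm', lam_apply]
    congr 1
    ext x
    simp [S2]
  have hm0 : m ≠ 0 := by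
    rintro rfl
    simp at hm'
    exact hμ hm'
  have := eq_one_of_involution S2 hS hm0 htrS hnt (by simp [S2])
  exact congrArg (fun F : Module.End k H => F x) this

end AntipodeSquare

section Form

variable {k H} [FiniteDimensional k H]
open Coalgebra HopfAlgebra

lemma functional_ul (f g : H →ₗ[k] k) (h : H) : f (ul g h) = g (ur f h) := by
  rw [ul_apply, ur_apply, map_sw, map_sw]
  simp [mul_comm]

lemma ul_ur_comm (f g : H →ₗ[k] k) (h : H) : ul f (ur g h) = ur g (ul f h) := by
  have h1 : ∀ a b : H, ul f (g b • a) = sw (k := k) (fun c d => (f c * g b) • d) a := by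
    intro a b
    rw [map_smul, ul_apply, smul_sw]
    simp [smul_smul, mul_comm]
  have h2 : ∀ a b : H, ur g (f a • b) = sw (k := k) (fun c d => (f a * g d) • c) b := by
    intro a b
    rw [map_smul, ur_apply, smul_sw]
    simp [smul_smul]
  rw [ur_apply g h, ul_apply f h, map_sw, map_sw, sw_congr h1, sw_congr h2]
  exact sw_assoc (k := k) (fun a b c => (f a * g c) • b) h

lemma ul_counit (h : H) : ul (counit (R := k)) h = h := by
  rw [ul_apply]
  exact sw_counit_left (k := k) (fun a => a) h

lemma ur_counit (h : H) : ur (counit (R := k)) h = h := by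
  rw [ur_apply]
  exact sw_counit_right (k := k) (fun a => a) h

lemma counit_ul (f : H →ₗ[k] k) (h : H) : counit (R := k) (ul f h) = f h := by
  rw [functional_ul, ur_counit]

lemma counit_ur (f : H →ₗ[k] k) (h : H) : counit (R := k) (ur f h) = f h := by
  rw [← functional_ul, ul_counit]

lemma leg_eq (i : Fin (Module.finrank k H)) (h : H) :
    leg (k := k) i h = ur ((Module.finBasis k H).coord i) h := by
  rw [leg, LinearMap.comp_apply, LinearMap.comp_apply, comul_eq_sum, ur_apply]
  simp [sw]

lemma comul_eq_sum_right (h : H) :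
    comul (R := k) h = ∑ i, Module.finBasis k H i ⊗ₜ[k] ul ((Module.finBasis k H).coord i) h := by
  simp only [ul_apply, sw, TensorProduct.tmul_sum]
  rw [Finset.sum_comm, comul_eq_sum]
  refine Finset.sum_congr rfl fun i _ => ?_
  conv_lhs => rw [← (Module.finBasis k H).sum_repr (leg (k := k) i h), TensorProduct.sum_tmul]
  simp [TensorProduct.smul_tmul]

lemma isCocomm_iff (x : H) : IsCocomm k H x ↔ ∀ f : H →ₗ[k] k, ul f x = ur f x := by
  constructor
  · intro hx f
    have h1 : ∀ z : H ⊗[k] H, (TensorProduct.lid k H) (f.rTensor H (TensorProduct.comm k H H z)) =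
        (TensorProduct.rid k H) (f.lTensor H z) := by
      intro z
      induction z with
      | zero => simp
      | tmul x y => simp
      | add x y hx hy => simp only [map_add, hx, hy]
    have h2 := h1 (comul (R := k) x)
    rw [hx] at h2
    rw [comul_eq_sum] at h2
    simpa [ul_apply, ur_apply, sw] using h2
  · intro hx
    rw [IsCocomm]
    conv_lhs => rw [comul_eq_sum]
    rw [comul_eq_sum_right, map_sum]
    simp [leg_eq, hx]

lemma isSubcoalgebra_iff (A : Submodule k H) : IsSubcoalgebra k H A ↔
    ∀ c ∈ A, ∀ f : H →ₗ[k] k, ul f c ∈ A ∧ ur f c ∈ A := by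
  constructor
  · intro hA c hc f
    obtain ⟨w, hw⟩ := hA c hc
    have h1 : ∀ w : A ⊗[k] A,
        (TensorProduct.lid k H) (f.rTensor H (TensorProduct.map A.subtype A.subtype w)) ∈ A := by
      intro w
      induction w with
      | zero => simp
      | tmul x y => simpa using A.smul_mem _ y.2
      | add x y hx hy => simpa only [map_add] using A.add_mem hx hy
    have h2 : ∀ w : A ⊗[k] A,
        (TensorProduct.rid k H) (f.lTensor H (TensorProduct.map A.subtype A.subtype w)) ∈ A := by
      intro w
      induction w with
      | zero => simp
      | tmul x y => simpa using A.smul_mem _ x.2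
      | add x y hx hy => simpa only [map_add] using A.add_mem hx hy
    have h1 := h1 w
    have h2 := h2 w
    rw [hw, comul_eq_sum] at h1 h2
    exact ⟨by simpa [ul_apply, sw] using h1, by simpa [ur_apply, sw] using h2⟩
  · intro hA c hc
    obtain ⟨p, hp⟩ := A.subtype.exists_leftInverse_of_injective (by simp)
    have hp' : ∀ x ∈ A, ((p x : A) : H) = x := by
      intro x hx
      have := congrArg (fun F : A →ₗ[k] A => ((F ⟨x, hx⟩ : A) : H)) hp
      simpa using this
    refine ⟨TensorProduct.map p p (comul c), ?_⟩
    have e1 : (A.subtype ∘ₗ p).rTensor H (comul c) = comul (R := k) c := by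
      conv_lhs => rw [comul_eq_sum]
      rw [comul_eq_sum]
      simp [leg_eq, hp' _ (hA c hc _).2]
    have e2 : (A.subtype ∘ₗ p).lTensor H (comul c) = comul (R := k) c := by
      conv_lhs => rw [comul_eq_sum_right]
      rw [comul_eq_sum_right]
      simp [hp' _ (hA c hc _).1]
    rw [← LinearMap.comp_apply, ← TensorProduct.map_comp]
    have e3 : TensorProduct.map (A.subtype ∘ₗ p) (A.subtype ∘ₗ p) =
        (A.subtype ∘ₗ p).lTensor H ∘ₗ (A.subtype ∘ₗ p).rTensor H := by
      rw [LinearMap.lTensor_comp_rTensor]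
    rw [e3, LinearMap.comp_apply, e1, e2]

lemma IsSubcoalgebra.sw_mem {W : Type*} [AddCommGroup W] [Module k W] {A : Submodule k H}
    (hA : IsSubcoalgebra k H A) {f : H → H → W} {P : Submodule k W}
    (hP : ∀ a ∈ A, ∀ b ∈ A, f a b ∈ P) {c : H} (hc : c ∈ A)
    (hf : Bil (k := k) f := by
      constructor <;> intros <;> constructor <;> intros <;>
        simp [mul_add, add_mul, TensorProduct.tmul_add, TensorProduct.add_tmul, sw,
          Finset.sum_add_distrib, Finset.smul_sum, add_smul, smul_add, smul_smul, mul_comm,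
          mul_assoc, mul_left_comm, TensorProduct.smul_tmul', Finset.mul_sum]) :
    sw (k := k) f c ∈ P := by
  obtain ⟨w, hw⟩ := hA c hc
  rw [sw_eq_lift hf, ← hw]
  clear hw
  induction w with
  | zero => simp
  | tmul x y => exact hP x x.2 y y.2
  | add x y hx hy => simpa only [map_add] using P.add_mem hx hy

lemma IsSubcoalgebra.sw_congr {W : Type*} [AddCommGroup W] [Module k W] {A : Submodule k H}
    (hA : IsSubcoalgebra k H A) {f g : H → H → W}
    (hfg : ∀ a ∈ A, ∀ b ∈ A, f a b = g a b) {c : H} (hc : c ∈ A)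
    (hf : Bil (k := k) f := by
      constructor <;> intros <;> constructor <;> intros <;>
        simp [mul_add, add_mul, TensorProduct.tmul_add, TensorProduct.add_tmul, sw,
          Finset.sum_add_distrib, Finset.smul_sum, add_smul, smul_add, smul_smul, mul_comm,
          mul_assoc, mul_left_comm, TensorProduct.smul_tmul', Finset.mul_sum])
    (hg : Bil (k := k) g := by
      constructor <;> intros <;> constructor <;> intros <;>
        simp [mul_add, add_mul, TensorProduct.tmul_add, TensorProduct.add_tmul, sw,
          Finset.sum_add_distrib, Finset.smul_sum, add_smul, smul_add, smul_smul, mul_comm,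
          mul_assoc, mul_left_comm, TensorProduct.smul_tmul', Finset.mul_sum]) :
    sw (k := k) f c = sw (k := k) g c := by
  obtain ⟨w, hw⟩ := hA c hc
  rw [sw_eq_lift hf, sw_eq_lift hg, ← hw]
  clear hw
  induction w with
  | zero => simp
  | tmul x y => exact hfg x x.2 y y.2
  | add x y hx hy => simp only [map_add, hx, hy]

end Form

section Orthogonal

variable {k H} [FiniteDimensional k H] [IsSemisimpleRing H]
open Coalgebra HopfAlgebra

variable (k H) in
/-- The idempotent integral of `H`. -/
def integral : H := (exists_normInt (k := k) (H := H)).choose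

lemma integral_spec : IsNormInt (k := k) (integral k H) :=
  (exists_normInt (k := k) (H := H)).choose_spec

lemma lam_comm (a b : H) : lam k H (a * b) = lam k H (b * a) := by
  rw [lam_nakayama, antipode_antipode_eq]

lemma lam_antipode (h : H) : lam k H (antipode k h) = lam k H h := by
  have := integral_spec.lam_distinguished_antipode (k := k) h
  rwa [integral_spec.distinguished_eq_one, one_mul] at this

lemma lam_rightInv : RightInv (lam k H) := by
  intro h
  rw [integral_spec.ul_lam, integral_spec.distinguished_eq_one]

lemma lam_one : lam k H 1 = (Module.finrank k H : k) := by
  rw [lam_apply, ← LinearMap.trace_one]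
  congr 1
  ext x
  simp [antipode_antipode_eq]

lemma finrank_ne_zero : (Module.finrank k H : k) ≠ 0 := by
  rw [← lam_one]
  exact integral_spec.trace_antipode_sq_ne_zero

lemma trace_ul (f : H →ₗ[k] k) :
    LinearMap.trace k H (ul f) = (Module.finrank k H : k) * f (integral k H) := by
  rw [← lam_one, ← integral_spec.trace_ul_antipode_sq]
  congr 1
  ext x
  simp [antipode_antipode_eq]

lemma integral_cocomm (f g : H →ₗ[k] k) :
    f (ul g (integral k H)) = g (ul f (integral k H)) := by
  have h1 : ∀ f g : H →ₗ[k] k, ul f * ul g = ul (f ∘ₗ ul g) := by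
    intro f g
    ext x
    rw [Module.End.mul_apply]
    refine eq_of_forall_functional (k := k) fun φ => ?_
    rw [functional_ul, functional_ul, LinearMap.comp_apply, ul_ur_comm]
  have h2 := trace_ul (k := k) (f ∘ₗ ul g)
  rw [← h1, LinearMap.trace_mul_comm, h1, trace_ul] at h2
  exact (mul_left_cancel₀ finrank_ne_zero h2).symm

lemma ul_integral (f : H →ₗ[k] k) : ul f (integral k H) = ur f (integral k H) := by
  refine eq_of_forall_functional (k := k) fun φ => ?_
  rw [integral_cocomm, ← functional_ul]

variable (k H) in
/-- The bilinear form `(x, y) = λ(S(x) y)`. -/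
def frm : LinearMap.BilinForm k H :=
  LinearMap.mk₂ k (fun x y => lam k H (antipode k x * y))
    (by intros; simp [add_mul]) (by intros; simp) (by intros; simp [mul_add]) (by intros; simp)

lemma frm_apply (x y : H) : frm k H x y = lam k H (antipode k x * y) := rfl

lemma frm_symm (x y : H) : frm k H x y = frm k H y x := by
  rw [frm_apply, frm_apply, ← lam_antipode, antipode_mul, antipode_antipode_eq]

lemma frm_isRefl : (frm k H).IsRefl := by
  intro x y h
  rw [frm_symm, h]

lemma frm_mul_left (a x y : H) : frm k H (a * x) y = frm k H x (antipode k a * y) := by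
  rw [frm_apply, frm_apply, antipode_mul, mul_assoc]

lemma frm_mul_right (a x y : H) : frm k H (x * a) y = frm k H x (y * antipode k a) := by
  rw [frm_apply, frm_apply, antipode_mul, mul_assoc, lam_comm, mul_assoc]

lemma ul_frm (x y : H) : ul (frm k H x) y = ur (frm k H y) x := by
  have key : ∀ x : H, sw (k := k) (fun a b => sw (k := k)
      (fun c d => frm k H b c • (antipode k a * d)) y) x = frm k H x y • 1 := by
    intro x
    have h := lam_rightInv (k := k) (antipode k x * y)
    rw [ul_apply, sw_mul (k := k) (fun a b => lam k H a • b),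
      sw_antipode (fun a b => sw (k := k) (fun c d => lam k H (a * c) • (b * d)) y)] at h
    exact h
  have h2 : ur (frm k H y) x = sw (k := k) (fun p q => sw (k := k) (fun a b => sw (k := k)
      (fun c d => frm k H b c • (p * (antipode k a * d))) y) q) x := by
    rw [ur_apply]
    refine sw_congr (fun p q => ?_) x
    have := congrArg (fun z => p * z) (key q)
    simp only [mul_sw] at this
    rw [frm_symm, ← mul_one p, ← mul_smul_comm, ← this]
    simp
  rw [h2, ← sw_assoc (k := k) (fun p a b => sw (k := k)
      (fun c d => frm k H b c • (p * (antipode k a * d))) y)]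
  have h3 : ∀ a b : H, sw (k := k) (fun p q => sw (k := k)
      (fun c d => frm k H b c • (p * (antipode k q * d))) y) a =
        counit (R := k) a • ul (frm k H b) y := by
    intro a b
    have := sw_antipode_right (k := k) (fun z => sw (k := k) (fun c d => frm k H b c • (z * d)) y) a
    simpa [mul_assoc, ul_apply] using this
  rw [sw_congr h3]
  refine (sw_counit_left (k := k) (fun b => ul (frm k H b) y) x ?_).symm
  constructor <;> intros <;>
    simp [ul_apply, sw, add_smul, Finset.sum_add_distrib, Finset.smul_sum, smul_smul]

/-- The orthogonal complement with respect to `frm`. -/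
def perp (A : Submodule k H) : Submodule k H := (frm k H).orthogonal A

lemma mem_perp {A : Submodule k H} {y : H} : y ∈ perp A ↔ ∀ x ∈ A, frm k H x y = 0 := Iff.rfl

lemma IsSubcoalgebra.ul_mem {A : Submodule k H} (hA : IsSubcoalgebra k H A) (f : H →ₗ[k] k)
    {c : H} (hc : c ∈ A) : ul f c ∈ A := ((isSubcoalgebra_iff A).1 hA c hc f).1

lemma IsSubcoalgebra.ur_mem {A : Submodule k H} (hA : IsSubcoalgebra k H A) (f : H →ₗ[k] k)
    {c : H} (hc : c ∈ A) : ur f c ∈ A := ((isSubcoalgebra_iff A).1 hA c hc f).2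

protected lemma IsSubcoalgebra.perp {A : Submodule k H} (hA : IsSubcoalgebra k H A) :
    IsSubcoalgebra k H (perp A) := by
  rw [isSubcoalgebra_iff]
  refine fun y hy f => ⟨mem_perp.2 fun x hx => ?_, mem_perp.2 fun x hx => ?_⟩
  · rw [functional_ul, ← ul_frm, functional_ul, frm_symm]
    exact hy _ (hA.ur_mem f hx)
  · rw [← functional_ul, ul_frm, ← functional_ul, frm_symm]
    exact hy _ (hA.ul_mem f hx)

protected lemma IsSubcoalgebra.inf {A B : Submodule k H} (hA : IsSubcoalgebra k H A)
    (hB : IsSubcoalgebra k H B) : IsSubcoalgebra k H (A ⊓ B) := by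
  rw [isSubcoalgebra_iff]
  exact fun c hc f => ⟨⟨hA.ul_mem f hc.1, hB.ul_mem f hc.2⟩, ⟨hA.ur_mem f hc.1, hB.ur_mem f hc.2⟩⟩

lemma IsSubcoalgebra.disjoint_perp {A : Submodule k H} (hA : IsSubcoalgebra k H A) :
    Disjoint A (perp A) := by
  rw [disjoint_iff, Submodule.eq_bot_iff]
  have hB := hA.inf hA.perp
  have hε : ∀ c ∈ A ⊓ perp A, counit (R := k) c = 0 := by
    intro c hc
    have h1 := sw_antipode_left (k := k) (fun z => lam k H z) c
    have h2 := hB.sw_congr (f := fun a b => lam k H (antipode k a * b)) (g := fun _ _ => (0 : k))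
      (fun a ha b hb => hb.2 a ha.1) hc
    rw [h2, lam_one] at h1
    have : sw (k := k) (fun _ _ => (0 : k)) c = 0 := by simp [sw]
    rw [this, smul_eq_mul] at h1
    exact (mul_eq_zero.1 h1.symm).resolve_right finrank_ne_zero
  intro c hc
  refine eq_of_forall_functional (k := k) fun φ => ?_
  rw [← counit_ul φ c, hε _ (hB.ul_mem φ hc), map_zero]

lemma IsSubcoalgebra.isCompl_perp {A : Submodule k H} (hA : IsSubcoalgebra k H A) :
    IsCompl A (perp A) :=
  (LinearMap.BilinForm.isCompl_orthogonal_iff_disjoint frm_isRefl).2 hA.disjoint_perp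

lemma le_perp_perp (A : Submodule k H) : A ≤ perp (perp A) := by
  intro x hx y hy
  exact (frm_symm _ _).trans (hy x hx)

lemma IsSubcoalgebra.perp_perp {A : Submodule k H} (hA : IsSubcoalgebra k H A) :
    perp (perp A) = A := by
  refine le_antisymm (fun x hx => ?_) (le_perp_perp A)
  obtain ⟨a, ha, b, hb, rfl⟩ := Submodule.mem_sup.1
    (hA.isCompl_perp.sup_eq_top ▸ Submodule.mem_top : x ∈ A ⊔ perp A)
  have h1 : b ∈ perp (perp A) := by
    simpa using Submodule.sub_mem _ hx (le_perp_perp A ha)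
  have h2 : b = 0 := by
    have := hA.perp.disjoint_perp.le_bot ⟨hb, h1⟩
    simpa using this
  simpa [h2] using ha

lemma perp_anti {A B : Submodule k H} (h : A ≤ B) : perp B ≤ perp A :=
  fun _ hx y hy => hx y (h hy)

lemma le_perp_comm {A B : Submodule k H} (h : A ≤ perp B) : B ≤ perp A :=
  (le_perp_perp B).trans (perp_anti h)

lemma perp_mul_left {A : Submodule k H} {d : H} (h : ∀ x ∈ A, antipode k d * x ∈ A) :
    ∀ y ∈ perp A, d * y ∈ perp A := by
  intro y hy x hx
  have := frm_mul_left (k := k) (antipode k d) x y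
  rw [antipode_antipode_eq] at this
  rw [← this]
  exact hy _ (h x hx)

lemma perp_mul_right {A : Submodule k H} {d : H} (h : ∀ x ∈ A, x * antipode k d ∈ A) :
    ∀ y ∈ perp A, y * d ∈ perp A := by
  intro y hy x hx
  have := frm_mul_right (k := k) (antipode k d) x y
  rw [antipode_antipode_eq] at this
  rw [← this]
  exact hy _ (h x hx)

protected lemma IsSubcoalgebra.mul {A B : Submodule k H} (hA : IsSubcoalgebra k H A)
    (hB : IsSubcoalgebra k H B) : IsSubcoalgebra k H (A * B) := by
  rw [isSubcoalgebra_iff]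
  intro c hc f
  induction hc using Submodule.mul_induction_on' with
  | mem_mul_mem a ha b hb =>
    constructor
    · rw [ul_apply, sw_mul (k := k) (fun a b => f a • b)]
      refine hA.sw_mem (fun a ha a' ha' => ?_) ha
      exact hB.sw_mem (fun b hb b' hb' =>
        Submodule.smul_mem _ _ (Submodule.mul_mem_mul ha' hb')) hb
    · rw [ur_apply, sw_mul (k := k) (fun a b => f b • a)]
      refine hA.sw_mem (fun a ha a' ha' => ?_) ha
      exact hB.sw_mem (fun b hb b' hb' =>
        Submodule.smul_mem _ _ (Submodule.mul_mem_mul ha hb)) hb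
  | add x _ y _ hx hy =>
    simp only [map_add]
    exact ⟨Submodule.add_mem _ hx.1 hy.1, Submodule.add_mem _ hx.2 hy.2⟩

lemma isSubcoalgebra_sSup {S : Set (Submodule k H)} (hS : ∀ A ∈ S, IsSubcoalgebra k H A) :
    IsSubcoalgebra k H (sSup S) := by
  rw [isSubcoalgebra_iff]
  intro c hc f
  have h1 : sSup S ≤ (sSup S).comap (ul f) ⊓ (sSup S).comap (ur f) :=
    sSup_le fun A hA c hc => ⟨le_sSup hA ((hS A hA).ul_mem f hc), le_sSup hA ((hS A hA).ur_mem f hc)⟩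
  exact h1 hc

lemma IsSubcoalgebra.exists_simple_le {A : Submodule k H} (hA : IsSubcoalgebra k H A)
    (h0 : A ≠ ⊥) : ∃ C ≤ A, IsSimpleSubcoalgebra k H C := by
  obtain ⟨C, ⟨h1, h2, h3⟩, h4⟩ := (wellFounded_lt (α := Submodule k H)).has_min
    {C | C ≤ A ∧ IsSubcoalgebra k H C ∧ C ≠ ⊥} ⟨A, le_rfl, hA, h0⟩
  refine ⟨C, h1, h2, h3, fun D hD hD' hD0 => ?_⟩
  by_contra hne
  exact h4 D ⟨hD.trans h1, hD', hD0⟩ (lt_of_le_of_ne hD hne)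

end Orthogonal

section Projection

variable {k H} [FiniteDimensional k H] [IsSemisimpleRing H]
open Coalgebra HopfAlgebra

/-- The projection of `H` onto a subcoalgebra along its orthogonal complement. -/
def IsSubcoalgebra.pr {A : Submodule k H} (hA : IsSubcoalgebra k H A) : H →ₗ[k] H :=
  A.subtype ∘ₗ A.projectionOnto _ hA.isCompl_perp

variable {A B : Submodule k H} (hA : IsSubcoalgebra k H A)

lemma IsSubcoalgebra.pr_mem (x : H) : hA.pr x ∈ A := Subtype.property _

lemma IsSubcoalgebra.pr_of_mem {x : H} (hx : x ∈ A) : hA.pr x = x := by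
  exact congrArg Subtype.val (Submodule.projectionOnto_apply_left hA.isCompl_perp ⟨x, hx⟩)

lemma IsSubcoalgebra.pr_of_mem_perp {x : H} (hx : x ∈ perp A) : hA.pr x = 0 := by
  exact congrArg Subtype.val (Submodule.projectionOnto_apply_right hA.isCompl_perp ⟨x, hx⟩)

lemma IsSubcoalgebra.pr_eq {x a : H} (ha : a ∈ A) (hx : x - a ∈ perp A) :
    hA.pr x = a := by
  have h := hA.pr_of_mem_perp hx
  rwa [map_sub, hA.pr_of_mem ha, sub_eq_zero] at h

lemma IsSubcoalgebra.sub_pr_mem (x : H) : x - hA.pr x ∈ perp A := by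
  obtain ⟨a, ha, b, hb, rfl⟩ := Submodule.mem_sup.1
    (hA.isCompl_perp.sup_eq_top ▸ Submodule.mem_top : x ∈ A ⊔ perp A)
  rw [map_add, hA.pr_of_mem ha, hA.pr_of_mem_perp hb]
  simpa using hb

lemma IsSubcoalgebra.pr_ul (f : H →ₗ[k] k) (x : H) : hA.pr (ul f x) = ul f (hA.pr x) := by
  refine hA.pr_eq (hA.ul_mem f (hA.pr_mem x)) ?_
  rw [← map_sub]
  exact hA.perp.ul_mem f (hA.sub_pr_mem x)

lemma IsSubcoalgebra.pr_ur (f : H →ₗ[k] k) (x : H) : hA.pr (ur f x) = ur f (hA.pr x) := by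
  refine hA.pr_eq (hA.ur_mem f (hA.pr_mem x)) ?_
  rw [← map_sub]
  exact hA.perp.ur_mem f (hA.sub_pr_mem x)

/-- The counit composed with the projection onto a subcoalgebra. -/
def IsSubcoalgebra.ev {A : Submodule k H} (hA : IsSubcoalgebra k H A) : H →ₗ[k] k :=
  counit (R := k) ∘ₗ hA.pr

lemma IsSubcoalgebra.ev_apply (x : H) : hA.ev x = counit (R := k) (hA.pr x) := rfl

lemma IsSubcoalgebra.pr_eq_ul (x : H) : hA.pr x = ul hA.ev x := by
  refine eq_of_forall_functional (k := k) fun φ => ?_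
  rw [functional_ul, hA.ev_apply, hA.pr_ur, counit_ur]

lemma IsSubcoalgebra.pr_mem_of_mem (hB : IsSubcoalgebra k H B) {x : H} (hx : x ∈ B) : hA.pr x ∈ B := by
  rw [hA.pr_eq_ul]
  exact hB.ul_mem _ hx

lemma IsSubcoalgebra.pr_mul_right {d : H} (h : ∀ x ∈ A, x * d ∈ A)
    (h' : ∀ x ∈ A, x * antipode k d ∈ A) (x : H) : hA.pr (x * d) = hA.pr x * d := by
  refine hA.pr_eq (h _ (hA.pr_mem x)) ?_
  rw [← sub_mul]
  exact perp_mul_right h' _ (hA.sub_pr_mem x)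

lemma IsSubcoalgebra.pr_mul_left {d : H} (h : ∀ x ∈ A, d * x ∈ A)
    (h' : ∀ x ∈ A, antipode k d * x ∈ A) (x : H) : hA.pr (d * x) = d * hA.pr x := by
  refine hA.pr_eq (h _ (hA.pr_mem x)) ?_
  rw [← mul_sub]
  exact perp_mul_left h' _ (hA.sub_pr_mem x)

lemma IsSubcoalgebra.trace_pr : LinearMap.trace k H hA.pr = (Module.finrank k A : k) := by
  rw [IsSubcoalgebra.pr, LinearMap.trace_comp_comm', ← LinearMap.trace_id]
  congr 1
  ext x
  exact congrArg Subtype.val (Submodule.projectionOnto_apply_left hA.isCompl_perp x)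

/-- The regular character of the dual of a subcoalgebra, as an element of the subcoalgebra. -/
def IsSubcoalgebra.rho {A : Submodule k H} (hA : IsSubcoalgebra k H A) : H :=
  (Module.finrank k H : k) • hA.pr (integral k H)

lemma IsSubcoalgebra.rho_mem : hA.rho ∈ A := A.smul_mem _ (hA.pr_mem _)

lemma IsSubcoalgebra.ul_rho (f : H →ₗ[k] k) : ul f hA.rho = ur f hA.rho := by
  rw [IsSubcoalgebra.rho, map_smul, map_smul, ← hA.pr_ul, ← hA.pr_ur, ul_integral]

lemma IsSubcoalgebra.counit_rho : counit (R := k) hA.rho = (Module.finrank k A : k) := by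
  rw [IsSubcoalgebra.rho, map_smul, ← hA.ev_apply, smul_eq_mul, ← trace_ul, ← hA.trace_pr]
  congr 1
  ext x
  rw [hA.pr_eq_ul]

lemma IsSubcoalgebra.rho_mul {d : H} (h : ∀ x ∈ A, x * d ∈ A)
    (h' : ∀ x ∈ A, x * antipode k d ∈ A) : hA.rho * d = counit (R := k) d • hA.rho := by
  rw [IsSubcoalgebra.rho, smul_mul_assoc, ← hA.pr_mul_right h h', integral_spec.right, map_smul,
    smul_comm]

lemma IsSubcoalgebra.mul_rho {d : H} (h : ∀ x ∈ A, d * x ∈ A)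
    (h' : ∀ x ∈ A, antipode k d * x ∈ A) : d * hA.rho = counit (R := k) d • hA.rho := by
  rw [IsSubcoalgebra.rho, mul_smul_comm, ← hA.pr_mul_left h h', integral_spec.left, map_smul,
    smul_comm]

lemma IsSubcoalgebra.frm_pr {h : H} (hh : h ∈ A) (x : H) :
    frm k H h (hA.pr x) = frm k H h x := by
  have := hA.sub_pr_mem x h hh
  rw [map_sub, sub_eq_zero] at this
  exact this.symm

lemma IsSubcoalgebra.frm_rho {h : H} (hh : h ∈ A) :
    frm k H h hA.rho = (Module.finrank k H : k) * counit (R := k) h := by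
  rw [IsSubcoalgebra.rho, map_smul, hA.frm_pr hh, frm_apply, integral_spec.left, map_smul,
    integral_spec.lam_self]
  simp

lemma IsSubcoalgebra.le_perp_of_disjoint (hA : IsSubcoalgebra k H A) (hB : IsSubcoalgebra k H B)
    (h : A ⊓ B = ⊥) : A ≤ perp B := by
  intro x hx
  have h1 : hB.pr x ∈ A ⊓ B := ⟨hB.pr_mem_of_mem hA hx, hB.pr_mem x⟩
  rw [h, Submodule.mem_bot] at h1
  simpa [h1] using hB.sub_pr_mem x

lemma IsSimpleSubcoalgebra.eq_or_disjoint (hC : IsSimpleSubcoalgebra k H A)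
    (hB : IsSubcoalgebra k H B) : A ≤ B ∨ A ⊓ B = ⊥ := by
  by_cases h : A ⊓ B = ⊥
  · exact Or.inr h
  · exact Or.inl (inf_eq_left.1 (hC.2.2 _ inf_le_left (hC.1.inf hB) h))

lemma IsSimpleSubcoalgebra.le_or_le_perp (hC : IsSimpleSubcoalgebra k H A)
    (hB : IsSubcoalgebra k H B) : A ≤ B ∨ A ≤ perp B :=
  (hC.eq_or_disjoint hB).imp_right fun h => hC.1.le_perp_of_disjoint hB h

lemma IsSimpleSubcoalgebra.le_perp_of_ne (hC : IsSimpleSubcoalgebra k H A)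
    (hD : IsSimpleSubcoalgebra k H B) (h : A ≠ B) : A ≤ perp B :=
  (hC.le_or_le_perp hD.1).resolve_left fun h' => h (hD.2.2 _ h' hC.1 hC.2.1)

lemma finite_of_orthogonal {ι : Type*} {F : ι → Submodule k H}
    (hF : ∀ i, IsSubcoalgebra k H (F i)) (h0 : ∀ i, F i ≠ ⊥)
    (ho : ∀ i j, i ≠ j → F i ≤ perp (F j)) : Finite ι := by
  refine WellFoundedGT.finite_of_iSupIndep (t := F) (fun i => ?_) h0
  exact (hF i).disjoint_perp.mono_right
    (iSup_le fun j => iSup_le fun hj => ho j i hj)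

lemma sum_pr {ι : Type*} [Fintype ι] {F : ι → Submodule k H}
    (hF : ∀ i, IsSubcoalgebra k H (F i)) (ho : ∀ i j, i ≠ j → F i ≤ perp (F j))
    (hA : IsSubcoalgebra k H A) (hs : ⨆ i, F i = A) (x : H) :
    ∑ i, (hF i).pr x = hA.pr x := by
  classical
  refine (hA.pr_eq (Submodule.sum_mem _ fun i _ => ?_) ?_).symm
  · rw [← hs]
    exact le_iSup F i ((hF i).pr_mem x)
  · suffices h : A ≤ perp (Submodule.span k {x - ∑ i, (hF i).pr x}) from
      le_perp_comm h (Submodule.mem_span_singleton_self _)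
    rw [← hs]
    refine iSup_le fun j => le_perp_comm ((Submodule.span_singleton_le_iff_mem _ _).2 ?_)
    rw [← Finset.add_sum_erase _ _ (Finset.mem_univ j), ← sub_sub]
    refine Submodule.sub_mem _ ((hF j).sub_pr_mem x) (Submodule.sum_mem _ fun i hi => ?_)
    exact ho i j (Finset.ne_of_mem_erase hi) ((hF i).pr_mem x)

lemma sum_rho {ι : Type*} [Fintype ι] {F : ι → Submodule k H}
    (hF : ∀ i, IsSubcoalgebra k H (F i)) (ho : ∀ i j, i ≠ j → F i ≤ perp (F j))
    (hA : IsSubcoalgebra k H A) (hs : ⨆ i, F i = A) :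
    ∑ i, (hF i).rho = hA.rho := by
  simp only [IsSubcoalgebra.rho, ← Finset.smul_sum, sum_pr hF ho hA hs]

lemma sum_finrank {ι : Type*} [Fintype ι] {F : ι → Submodule k H}
    (hF : ∀ i, IsSubcoalgebra k H (F i)) (ho : ∀ i j, i ≠ j → F i ≤ perp (F j))
    (hA : IsSubcoalgebra k H A) (hs : ⨆ i, F i = A) :
    ∑ i, Module.finrank k (F i) = Module.finrank k A := by
  have := congrArg (counit (R := k)) (sum_rho hF ho hA hs)
  rw [map_sum] at this
  simp only [IsSubcoalgebra.counit_rho] at this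
  exact_mod_cast this

lemma IsSubcoalgebra.iSup_simple (hA : IsSubcoalgebra k H A) :
    ⨆ E : {E : Submodule k H // IsSimpleSubcoalgebra k H E ∧ E ≤ A}, E.1 = A := by
  set Y := ⨆ E : {E : Submodule k H // IsSimpleSubcoalgebra k H E ∧ E ≤ A}, E.1 with hY
  have hYA : Y ≤ A := iSup_le fun E => E.2.2
  have hYc : IsSubcoalgebra k H Y := isSubcoalgebra_sSup (by rintro _ ⟨E, rfl⟩; exact E.2.1.1)
  refine le_antisymm hYA fun x hx => ?_
  have hI : A ⊓ perp Y = ⊥ := by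
    by_contra h
    obtain ⟨E, hE, hEs⟩ := (hA.inf hYc.perp).exists_simple_le h
    have h1 : E ≤ Y := le_iSup (fun E : {E : Submodule k H // IsSimpleSubcoalgebra k H E ∧ E ≤ A}
      => E.1) ⟨E, hEs, hE.trans inf_le_left⟩
    exact hEs.2.1 (le_bot_iff.1 (hYc.disjoint_perp h1 (hE.trans inf_le_right)))
  have h2 : x - hYc.pr x ∈ A ⊓ perp Y :=
    ⟨A.sub_mem hx (hYA (hYc.pr_mem x)), hYc.sub_pr_mem x⟩
  rw [hI, Submodule.mem_bot, sub_eq_zero] at h2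
  rw [h2]
  exact hYc.pr_mem x

instance finite_simple : Finite {E : Submodule k H // IsSimpleSubcoalgebra k H E ∧ E ≤ A} :=
  finite_of_orthogonal (F := fun E => E.1) (fun E => E.2.1.1) (fun E => E.2.1.2.1)
    fun E E' h => E.2.1.le_perp_of_ne E'.2.1 fun h' => h (Subtype.ext h')

end Projection

section ProductMultiplicity

variable {k H} [FiniteDimensional k H]
open Coalgebra HopfAlgebra

/-- The operator `x ⊗ y ↦ G(x₁ ⊗ y₁) x₂ ⊗ y₂` on `H ⊗ H`. -/
def ulTwo (G : H ⊗[k] H →ₗ[k] k) : Module.End k (H ⊗[k] H) :=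
  ∑ i, ∑ j, G (Module.finBasis k H i ⊗ₜ Module.finBasis k H j) •
    TensorProduct.map (ul ((Module.finBasis k H).coord i)) (ul ((Module.finBasis k H).coord j))

/-- The functional `f ⊗ g` on `H ⊗ H`. -/
def funTwo (f g : H →ₗ[k] k) : H ⊗[k] H →ₗ[k] k := LinearMap.mul' k k ∘ₗ TensorProduct.map f g

@[simp] lemma funTwo_tmul (f g : H →ₗ[k] k) (x y : H) : funTwo f g (x ⊗ₜ y) = f x * g y := rfl

lemma eq_of_forall_funTwo {z w : H ⊗[k] H} (h : ∀ f g : H →ₗ[k] k, funTwo f g z = funTwo f g w) :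
    z = w := by
  let b := (Module.finBasis k H).tensorProduct (Module.finBasis k H)
  refine b.repr.injective (Finsupp.ext fun ij => ?_)
  have key : b.coord ij = funTwo ((Module.finBasis k H).coord ij.1)
      ((Module.finBasis k H).coord ij.2) := by
    refine TensorProduct.ext' fun x y => ?_
    obtain ⟨i, j⟩ := ij
    simp [b, Module.Basis.tensorProduct_repr_tmul_apply, mul_comm]
  have := h ((Module.finBasis k H).coord ij.1) ((Module.finBasis k H).coord ij.2)
  rwa [← key] at this

lemma sum_coord_coord (G : H ⊗[k] H →ₗ[k] k) (x y : H) :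
    ∑ i, ∑ j, G (Module.finBasis k H i ⊗ₜ Module.finBasis k H j) *
      ((Module.finBasis k H).coord i x * (Module.finBasis k H).coord j y) = G (x ⊗ₜ y) := by
  conv_rhs => rw [← (Module.finBasis k H).sum_repr x, ← (Module.finBasis k H).sum_repr y]
  rw [TensorProduct.sum_tmul, map_sum]
  simp only [TensorProduct.tmul_sum, map_sum, TensorProduct.smul_tmul_smul, map_smul, smul_eq_mul,
    Module.Basis.coord_apply]
  refine Finset.sum_congr rfl fun i _ => Finset.sum_congr rfl fun j _ => ?_
  ring

lemma funTwo_ulTwo (G : H ⊗[k] H →ₗ[k] k) (f g : H →ₗ[k] k) (z : H ⊗[k] H) :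
    funTwo f g (ulTwo G z) = G (TensorProduct.map (ur f) (ur g) z) := by
  induction z with
  | zero => simp
  | add x y hx hy => simp only [map_add, hx, hy]
  | tmul x y =>
    rw [TensorProduct.map_tmul, ← sum_coord_coord G]
    simp [ulTwo, functional_ul]

lemma ulTwo_map_ur (G : H ⊗[k] H →ₗ[k] k) (f g : H →ₗ[k] k) (z : H ⊗[k] H) :
    TensorProduct.map (ur f) (ur g) (ulTwo G z) = ulTwo G (TensorProduct.map (ur f) (ur g) z) := by
  induction z with
  | zero => simp
  | add x y hx hy => simp only [map_add, hx, hy]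
  | tmul x y => simp [ulTwo, ul_ur_comm]

lemma ulTwo_isIdempotentElem {G : H ⊗[k] H →ₗ[k] k} (hG : ∀ z, G (ulTwo G z) = G z) :
    IsIdempotentElem (ulTwo G) := by
  refine LinearMap.ext fun z => eq_of_forall_funTwo fun f g => ?_
  rw [Module.End.mul_apply, funTwo_ulTwo, ulTwo_map_ur, hG, funTwo_ulTwo]

lemma eq_zero_of_ulTwo_eq_zero {G : H ⊗[k] H →ₗ[k] k} (hG : ulTwo G = 0) : G = 0 := by
  refine TensorProduct.ext' fun x y => ?_
  have := funTwo_ulTwo G (counit (R := k)) (counit (R := k)) (x ⊗ₜ y)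
  rw [hG, TensorProduct.map_tmul, ur_counit, ur_counit] at this
  simpa using this.symm

lemma sum_ul_eq_sw {W : Type*} [AddCommGroup W] [Module k W] (f : H → H → W)
    (hf : Bil (k := k) f) (x : H) :
    ∑ i, f (Module.finBasis k H i) (ul ((Module.finBasis k H).coord i) x) = sw (k := k) f x := by
  rw [sw_eq_lift hf, comul_eq_sum_right, map_sum]
  rfl

variable [IsSemisimpleRing H]

lemma trace_ulTwo (G : H ⊗[k] H →ₗ[k] k) : LinearMap.trace k _ (ulTwo G) =
    (Module.finrank k H : k) ^ 2 * G (integral k H ⊗ₜ integral k H) := by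
  rw [← sum_coord_coord G, ulTwo]
  simp only [map_sum, map_smul, LinearMap.trace_tensorProduct', trace_ul, Finset.mul_sum,
    smul_eq_mul]
  refine Finset.sum_congr rfl fun i _ => Finset.sum_congr rfl fun j _ => ?_
  ring

variable {A B F : Submodule k H} (hA : IsSubcoalgebra k H A) (hB : IsSubcoalgebra k H B)
  (hF : IsSubcoalgebra k H F)

/-- The functional `x ⊗ y ↦ ε(p_F(p_A(x) p_B(y)))`. -/
def multFun : H ⊗[k] H →ₗ[k] k := hF.ev ∘ₗ LinearMap.mul' k H ∘ₗ TensorProduct.map hA.pr hB.pr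

lemma multFun_tmul (x y : H) : multFun hA hB hF (x ⊗ₜ y) = hF.ev (hA.pr x * hB.pr y) := rfl

lemma multFun_ulTwo (z : H ⊗[k] H) :
    multFun hA hB hF (ulTwo (multFun hA hB hF) z) = multFun hA hB hF z := by
  induction z with
  | zero => simp
  | add x y hx hy => simp only [map_add, hx, hy]
  | tmul x y =>
    have h1 : multFun hA hB hF (ulTwo (multFun hA hB hF) (x ⊗ₜ y)) =
        sw (k := k) (fun a b => sw (k := k) (fun c d =>
          hF.ev (hA.pr a * hB.pr c) * hF.ev (b * d)) (hB.pr y)) (hA.pr x) := by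
      rw [← sum_ul_eq_sw]
      · simp only [ulTwo, LinearMap.sum_apply, map_sum, LinearMap.smul_apply, map_smul,
          TensorProduct.map_tmul, multFun_tmul, hA.pr_ul, hB.pr_ul]
        refine Finset.sum_congr rfl fun i _ => ?_
        rw [← sum_ul_eq_sw]
        · rfl
        · constructor <;> intros <;> constructor <;> intros <;> simp [mul_add, add_mul] <;> ring
      · constructor <;> intros <;> constructor <;> intros <;>
          simp [mul_add, add_mul, sw, Finset.sum_add_distrib, Finset.mul_sum] <;>
          exact Finset.sum_congr rfl fun _ _ => by ring
    rw [h1]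
    have h2 : sw (k := k) (fun a b => sw (k := k) (fun c d =>
          hF.ev (hA.pr a * hB.pr c) * hF.ev (b * d)) (hB.pr y)) (hA.pr x) =
        sw (k := k) (fun a b => sw (k := k) (fun c d =>
          hF.ev (a * c) * hF.ev (b * d)) (hB.pr y)) (hA.pr x) := by
      refine hA.sw_congr (fun a ha b hb => ?_) (hA.pr_mem x) ?_ ?_
      · refine hB.sw_congr (fun c hc d hd => ?_) (hB.pr_mem y) ?_ ?_
        · rw [hA.pr_of_mem ha, hB.pr_of_mem hc]
        · constructor <;> intros <;> constructor <;> intros <;> simp [mul_add, add_mul] <;> ring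
        · constructor <;> intros <;> constructor <;> intros <;> simp [mul_add, add_mul] <;> ring
      · constructor <;> intros <;> constructor <;> intros <;>
          simp [mul_add, add_mul, sw, Finset.sum_add_distrib, Finset.mul_sum] <;>
          exact Finset.sum_congr rfl fun _ _ => by ring
      · constructor <;> intros <;> constructor <;> intros <;>
          simp [mul_add, add_mul, sw, Finset.sum_add_distrib, Finset.mul_sum] <;>
          exact Finset.sum_congr rfl fun _ _ => by ring
    have h3 : hF.ev (ul hF.ev (hA.pr x * hB.pr y)) = hF.ev (hA.pr x * hB.pr y) := by
      rw [← hF.pr_eq_ul, hF.ev_apply, hF.pr_of_mem (hF.pr_mem _), hF.ev_apply]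
    rw [h2, multFun_tmul, ← h3, ul_apply, map_sw]
    simp only [map_smul, smul_eq_mul]
    rw [sw_mul (k := k) (fun a b => hF.ev a * hF.ev b)]

lemma multFun_integral : (Module.finrank k H : k) ^ 2 *
    multFun hA hB hF (integral k H ⊗ₜ integral k H) = hF.ev (hA.rho * hB.rho) := by
  simp only [multFun_tmul, IsSubcoalgebra.rho, smul_mul_assoc, mul_smul_comm, map_smul, smul_eq_mul]
  ring

lemma ev_rho_mul_rho_nat : ∃ m : ℕ, hF.ev (hA.rho * hB.rho) = m := by
  rw [← multFun_integral, ← trace_ulTwo,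
    trace_idempotent_nat (ulTwo_isIdempotentElem (multFun_ulTwo hA hB hF))]
  exact ⟨_, rfl⟩

lemma mul_le_perp_of_ev_eq_zero (h : hF.ev (hA.rho * hB.rho) = 0) : A * B ≤ perp F := by
  rw [← multFun_integral, ← trace_ulTwo,
    trace_idempotent_nat (ulTwo_isIdempotentElem (multFun_ulTwo hA hB hF)), Nat.cast_eq_zero,
    Submodule.finrank_eq_zero, LinearMap.range_eq_bot] at h
  have h0 := eq_zero_of_ulTwo_eq_zero h
  have h1 : A * B ≤ LinearMap.ker hF.ev := by
    rw [Submodule.mul_le]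
    intro a ha b hb
    have := congrArg (fun G : H ⊗[k] H →ₗ[k] k => G (a ⊗ₜ b)) h0
    simpa [multFun_tmul, hA.pr_of_mem ha, hB.pr_of_mem hb] using this
  intro z hz
  have h2 : hF.pr z = 0 := by
    refine eq_of_forall_functional (k := k) fun φ => ?_
    rw [hF.pr_eq_ul, functional_ul, map_zero]
    exact h1 ((hA.mul hB).ur_mem φ hz)
  simpa [h2] using hF.sub_pr_mem z

end ProductMultiplicity

section Cosets

variable {k H} [FiniteDimensional k H] [IsSemisimpleRing H]
open Coalgebra HopfAlgebra

variable {L K : Subalgebra k H} {A C D : Submodule k H}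

lemma one_mem_toSubmodule (K : Subalgebra k H) : (1 : H) ∈ K.toSubmodule := one_mem K

lemma toSubmodule_mul_self (K : Subalgebra k H) :
    K.toSubmodule * K.toSubmodule = K.toSubmodule := by
  refine le_antisymm (Submodule.mul_le.2 fun a ha b hb => K.mul_mem ha hb) fun a ha => ?_
  simpa using Submodule.mul_mem_mul ha (one_mem_toSubmodule K)

lemma le_mul_toSubmodule (A : Submodule k H) (K : Subalgebra k H) : A ≤ A * K.toSubmodule := by
  intro a ha
  simpa using Submodule.mul_mem_mul ha (one_mem_toSubmodule K)

lemma le_toSubmodule_mul (A : Submodule k H) (K : Subalgebra k H) : A ≤ K.toSubmodule * A := by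
  intro a ha
  simpa using Submodule.mul_mem_mul (one_mem_toSubmodule K) ha

lemma le_doubleCoset (L K : Subalgebra k H) (C : Submodule k H) :
    C ≤ L.toSubmodule * C * K.toSubmodule :=
  (le_toSubmodule_mul C L).trans (le_mul_toSubmodule _ K)

lemma toSubmodule_mul_doubleCoset (L K : Subalgebra k H) (C : Submodule k H) :
    L.toSubmodule * (L.toSubmodule * C * K.toSubmodule) = L.toSubmodule * C * K.toSubmodule := by
  rw [← mul_assoc, ← mul_assoc, toSubmodule_mul_self]

lemma doubleCoset_mul_toSubmodule (L K : Subalgebra k H) (C : Submodule k H) :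
    L.toSubmodule * C * K.toSubmodule * K.toSubmodule = L.toSubmodule * C * K.toSubmodule := by
  rw [mul_assoc, toSubmodule_mul_self]

lemma IsHopfSubalgebra.mul_perp_le (hL : IsHopfSubalgebra k H L) (h : L.toSubmodule * A ≤ A) :
    L.toSubmodule * perp A ≤ perp A :=
  Submodule.mul_le.2 fun d hd => perp_mul_left fun _ hx =>
    h (Submodule.mul_mem_mul (hL.2 d hd) hx)

lemma IsHopfSubalgebra.perp_mul_le (hK : IsHopfSubalgebra k H K) (h : A * K.toSubmodule ≤ A) :
    perp A * K.toSubmodule ≤ perp A :=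
  Submodule.mul_le.2 fun y hy d hd => perp_mul_right (fun _ hx =>
    h (Submodule.mul_mem_mul hx (hK.2 d hd))) y hy

lemma doubleCoset_le_perp (hL : IsHopfSubalgebra k H L) (hK : IsHopfSubalgebra k H K)
    (h : D ≤ perp (L.toSubmodule * C * K.toSubmodule)) :
    L.toSubmodule * D * K.toSubmodule ≤ perp (L.toSubmodule * C * K.toSubmodule) :=
  calc L.toSubmodule * D * K.toSubmodule
      ≤ L.toSubmodule * perp (L.toSubmodule * C * K.toSubmodule) * K.toSubmodule := by gcongr
    _ ≤ perp (L.toSubmodule * C * K.toSubmodule) * K.toSubmodule := by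
        gcongr
        exact hL.mul_perp_le (toSubmodule_mul_doubleCoset L K C).le
    _ ≤ _ := hK.perp_mul_le (doubleCoset_mul_toSubmodule L K C).le

lemma isSubcoalgebra_doubleCoset (hL : IsHopfSubalgebra k H L) (hK : IsHopfSubalgebra k H K)
    (hC : IsSubcoalgebra k H C) : IsSubcoalgebra k H (L.toSubmodule * C * K.toSubmodule) :=
  (hL.1.mul hC).mul hK.1

lemma doubleCoset_eq (hL : IsHopfSubalgebra k H L) (hK : IsHopfSubalgebra k H K)
    (hC : IsSimpleSubcoalgebra k H C) (hD : IsSimpleSubcoalgebra k H D)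
    (h : C ≤ L.toSubmodule * D * K.toSubmodule) :
    L.toSubmodule * C * K.toSubmodule = L.toSubmodule * D * K.toSubmodule := by
  have hX := isSubcoalgebra_doubleCoset hL hK hC.1
  refine le_antisymm ?_ ?_
  · calc L.toSubmodule * C * K.toSubmodule
        ≤ L.toSubmodule * (L.toSubmodule * D * K.toSubmodule) * K.toSubmodule := by gcongr
      _ = _ := by rw [toSubmodule_mul_doubleCoset, doubleCoset_mul_toSubmodule]
  · rcases hD.le_or_le_perp hX with h' | h'
    · calc L.toSubmodule * D * K.toSubmodule
          ≤ L.toSubmodule * (L.toSubmodule * C * K.toSubmodule) * K.toSubmodule := by gcongr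
        _ = _ := by rw [toSubmodule_mul_doubleCoset, doubleCoset_mul_toSubmodule]
    · exact absurd (le_bot_iff.1 (hX.disjoint_perp (le_doubleCoset L K C)
        (h.trans (doubleCoset_le_perp hL hK h')))) hC.2.1

lemma doubleCoset_orthogonal (hL : IsHopfSubalgebra k H L) (hK : IsHopfSubalgebra k H K)
    (hC : IsSimpleSubcoalgebra k H C) (hD : IsSimpleSubcoalgebra k H D)
    (h : L.toSubmodule * C * K.toSubmodule ≠ L.toSubmodule * D * K.toSubmodule) :
    L.toSubmodule * C * K.toSubmodule ≤ perp (L.toSubmodule * D * K.toSubmodule) :=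
  doubleCoset_le_perp hL hK ((hC.le_or_le_perp (isSubcoalgebra_doubleCoset hL hK hD.1)).resolve_left
    fun h' => h (doubleCoset_eq hL hK hC hD h'))

lemma isSubcoalgebra_one : IsSubcoalgebra k H (1 : Submodule k H) := by
  rw [isSubcoalgebra_iff]
  intro c hc f
  obtain ⟨r, rfl⟩ := Submodule.mem_one.1 hc
  rw [Algebra.algebraMap_eq_smul_one, map_smul, map_smul]
  have h1 : ul f (1 : H) = f 1 • 1 := by
    rw [ul_apply]; exact sw_one (k := k) (fun a b => f a • b)
  have h2 : ur f (1 : H) = f 1 • 1 := by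
    rw [ur_apply]; exact sw_one (k := k) (fun a b => f b • a)
  rw [h1, h2]
  exact ⟨Submodule.smul_mem _ _ (Submodule.smul_mem _ _ (Submodule.mem_one.2 ⟨1, map_one _⟩)),
    Submodule.smul_mem _ _ (Submodule.smul_mem _ _ (Submodule.mem_one.2 ⟨1, map_one _⟩))⟩

lemma isHopfSubalgebra_bot : IsHopfSubalgebra k H (⊥ : Subalgebra k H) := by
  refine ⟨?_, ?_⟩
  · rw [Algebra.toSubmodule_bot]; exact isSubcoalgebra_one
  · intro x hx
    obtain ⟨r, rfl⟩ := Algebra.mem_bot.1 hx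
    rw [Algebra.algebraMap_eq_smul_one, map_smul, HopfAlgebra.antipode_one]
    exact Subalgebra.smul_mem _ (one_mem _) _

lemma coset_eq (hK : IsHopfSubalgebra k H K)
    (hC : IsSimpleSubcoalgebra k H C) (hD : IsSimpleSubcoalgebra k H D)
    (h : C ≤ D * K.toSubmodule) : C * K.toSubmodule = D * K.toSubmodule := by
  have := doubleCoset_eq isHopfSubalgebra_bot hK hC hD (by simpa [Algebra.toSubmodule_bot] using h)
  simpa [Algebra.toSubmodule_bot] using this

lemma IsSimpleSubcoalgebra.eq_smul_rho (hC : IsSimpleSubcoalgebra k H C) {c : H} (hc : c ∈ C)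
    (hcc : IsCocomm k H c) : ∃ r : k, c = r • hC.1.rho := by
  rw [isCocomm_iff] at hcc
  have hT : ∀ x, ul (frm k H c) x = ur (frm k H c) x := fun x => by
    rw [ul_frm, ← hcc, ul_frm]
  let T : Module.End k C := (ul (frm k H c)).restrict fun x hx => hC.1.ul_mem (frm k H c) hx
  have : Nontrivial C := Submodule.nontrivial_iff_ne_bot.2 hC.2.1
  obtain ⟨μ, hμ⟩ := Module.End.exists_eigenvalue T
  obtain ⟨v, hv⟩ := hμ.exists_hasEigenvector
  let E : Submodule k H := C ⊓ LinearMap.ker (ul (frm k H c) - μ • LinearMap.id)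
  have hmem : ∀ x, x ∈ E ↔ x ∈ C ∧ ul (frm k H c) x = μ • x := fun x => by
    simp [E, sub_eq_zero]
  have hE : IsSubcoalgebra k H E := by
    rw [isSubcoalgebra_iff]
    intro x hx f
    rw [hmem] at hx
    rw [hmem, hmem]
    refine ⟨⟨hC.1.ul_mem f hx.1, ?_⟩, ⟨hC.1.ur_mem f hx.1, ?_⟩⟩
    · rw [hT, ← ul_ur_comm, ← hT, hx.2, map_smul]
    · rw [ul_ur_comm, hx.2, map_smul]
  have hE0 : E ≠ ⊥ := by
    intro h
    have h1 : (v : H) ∈ E := by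
      rw [hmem]
      exact ⟨v.2, by simpa [T] using congrArg Subtype.val hv.apply_eq_smul⟩
    rw [h, Submodule.mem_bot] at h1
    exact hv.2 (Subtype.ext h1)
  have hEC := hC.2.2 E inf_le_left hE hE0
  refine ⟨(Module.finrank k H : k)⁻¹ * μ, ?_⟩
  rw [← sub_eq_zero]
  have h2 : c - ((Module.finrank k H : k)⁻¹ * μ) • hC.1.rho ∈ C ⊓ perp C := by
    refine ⟨C.sub_mem hc (C.smul_mem _ hC.1.rho_mem), fun h hh => ?_⟩
    have h3 := ((hmem h).1 (hEC ▸ hh)).2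
    rw [map_sub, map_smul, hC.1.frm_rho hh, frm_symm, ← counit_ul (frm k H c) h, h3, map_smul,
      smul_eq_mul, smul_eq_mul, mul_comm _ μ, mul_assoc, inv_mul_cancel_left₀ finrank_ne_zero,
      sub_self]
  rw [disjoint_iff.1 hC.1.disjoint_perp] at h2
  exact h2

lemma sw_flip {W : Type*} [AddCommGroup W] [Module k W] {x : H} (hx : IsCocomm k H x)
    (f : H → H → W) (hf : Bil (k := k) f) : sw (k := k) f x = sw (k := k) (fun a b => f b a) x := by
  have hf' : Bil (k := k) (fun a b => f b a) := ⟨hf.r, hf.l⟩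
  rw [sw_eq_lift hf, sw_eq_lift hf']
  conv_lhs => rw [← hx]
  induction comul (R := k) x with
  | zero => simp
  | tmul a b => rfl
  | add a b ha hb => simp only [map_add, ha, hb]

lemma IsCocomm.mul {x y : H} (hx : IsCocomm k H x) (hy : IsCocomm k H y) :
    IsCocomm k H (x * y) := by
  rw [isCocomm_iff]
  intro f
  rw [ul_apply, ur_apply, sw_mul (k := k) (fun a b => f a • b), sw_mul (k := k) (fun a b => f b • a)]
  rw [sw_flip hx]
  · refine sw_congr (fun a b => sw_flip hy _ ?_) x
    constructor <;> intros <;> constructor <;> intros <;>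
      simp [mul_add, add_smul, smul_smul, mul_comm]
  · constructor <;> intros <;> constructor <;> intros <;>
      simp [add_mul, sw, add_smul, Finset.sum_add_distrib, Finset.smul_sum, smul_smul, mul_comm]

lemma IsSubcoalgebra.rho_isCocomm (hA : IsSubcoalgebra k H A) : IsCocomm k H hA.rho :=
  (isCocomm_iff _).2 hA.ul_rho

lemma IsSubcoalgebra.pr_isCocomm (hA : IsSubcoalgebra k H A) {x : H} (hx : IsCocomm k H x) :
    IsCocomm k H (hA.pr x) := by
  rw [isCocomm_iff] at hx ⊢
  intro f
  rw [← hA.pr_ul, ← hA.pr_ur, hx]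

lemma finrank_submodule_ne_zero (h0 : A ≠ ⊥) :
    (Module.finrank k A : k) ≠ 0 := by
  rw [Nat.cast_ne_zero, Ne, Submodule.finrank_eq_zero]
  exact h0

lemma toSubmodule_ne_bot (K : Subalgebra k H) : K.toSubmodule ≠ ⊥ := by
  intro h
  have h1 : (1 : H) ∈ K.toSubmodule := one_mem K
  rw [h, Submodule.mem_bot] at h1
  have := Bialgebra.counit_one (R := k) (A := H)
  rw [h1, map_zero] at this
  exact zero_ne_one this

lemma IsHopfSubalgebra.rho_mul (hK : IsHopfSubalgebra k H K) (hA : IsSubcoalgebra k H A)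
    (h : A * K.toSubmodule ≤ A) {d : H} (hd : d ∈ K) :
    hA.rho * d = counit (R := k) d • hA.rho :=
  hA.rho_mul (fun _ hx => h (Submodule.mul_mem_mul hx hd))
    (fun _ hx => h (Submodule.mul_mem_mul hx (hK.2 d hd)))

lemma IsHopfSubalgebra.mul_rho (hK : IsHopfSubalgebra k H K) (hA : IsSubcoalgebra k H A)
    (h : K.toSubmodule * A ≤ A) {d : H} (hd : d ∈ K) :
    d * hA.rho = counit (R := k) d • hA.rho :=
  hA.mul_rho (fun _ hx => h (Submodule.mul_mem_mul hd hx))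
    (fun _ hx => h (Submodule.mul_mem_mul (hK.2 d hd) hx))

lemma IsHopfSubalgebra.rho_eq (hK : IsHopfSubalgebra k H K) {Λ : H}
    (hΛ : IsIdempotentIntegral k H K Λ) :
    hK.1.rho = (Module.finrank k K : k) • Λ := by
  have h1 := (hΛ.2.2 _ hK.1.rho_mem).1
  rw [hK.rho_mul hK.1 (toSubmodule_mul_self K).le hΛ.1, hΛ.2.1, one_smul, hK.1.counit_rho] at h1
  exact h1

end Cosets

section Conjugate

variable {k H} [FiniteDimensional k H] [IsSemisimpleRing H]
open Coalgebra HopfAlgebra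

variable {L K : Subalgebra k H} {A B C D : Submodule k H} {Λ : H}

lemma mul_toSubmodule_mul_le (A : Submodule k H) (K : Subalgebra k H) :
    A * K.toSubmodule * K.toSubmodule ≤ A * K.toSubmodule := by
  rw [mul_assoc, toSubmodule_mul_self]

lemma rho_mul_integral (hK : IsHopfSubalgebra k H K) (hΛ : IsIdempotentIntegral k H K Λ)
    (hC : IsSimpleSubcoalgebra k H C) : ∃ r : k, r ≠ 0 ∧
      hC.1.rho * Λ = r • (hC.1.mul hK.1).rho := by
  classical
  have hX := hC.1.mul hK.1
  set X := C * K.toSubmodule with hXdef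
  have hdK : (Module.finrank k K : k) ≠ 0 := finrank_submodule_ne_zero (toSubmodule_ne_bot K)
  have hX0 : X ≠ ⊥ := fun h => hC.2.1 (le_bot_iff.1 (h ▸ le_mul_toSubmodule C K))
  have hΛΛ : Λ * Λ = Λ := by rw [(hΛ.2.2 Λ hΛ.1).1, hΛ.2.1, one_smul]
  have hΛρ : Λ = (Module.finrank k K : k)⁻¹ • hK.1.rho := by
    rw [hK.rho_eq hΛ, smul_smul, inv_mul_cancel₀ hdK, one_smul]
  have hΛc : IsCocomm k H Λ := by
    rw [isCocomm_iff]
    intro f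
    rw [hΛρ, map_smul, map_smul, hK.1.ul_rho]
  let ι := {E : Submodule k H // IsSimpleSubcoalgebra k H E ∧ E ≤ X}
  let _ : Fintype ι := Fintype.ofFinite ι
  have hF : ∀ E : ι, IsSubcoalgebra k H E.1 := fun E => E.2.1.1
  have ho : ∀ E E' : ι, E ≠ E' → E.1 ≤ perp E'.1 := fun E E' h =>
    E.2.1.le_perp_of_ne E'.2.1 fun h' => h (Subtype.ext h')
  set q := hC.1.rho * Λ with hq
  have hqX : q ∈ X := Submodule.mul_mem_mul hC.1.rho_mem hΛ.1
  have hqc : IsCocomm k H q := hC.1.rho_isCocomm.mul hΛc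
  choose m hm using fun E : ι => ev_rho_mul_rho_nat hC.1 hK.1 (hF E)
  choose s hs using fun E : ι => E.2.1.eq_smul_rho ((hF E).pr_mem q) ((hF E).pr_isCocomm hqc)
  have hdE : ∀ E : ι, (Module.finrank k E.1 : k) ≠ 0 := fun E => finrank_submodule_ne_zero E.2.1.2.1
  let r : ι → ℚ := fun E => (m E : ℚ) / (Module.finrank k K * Module.finrank k E.1)
  have hsr : ∀ E, s E = (r E : k) := by
    intro E
    have h1 := congrArg (counit (R := k)) (hs E)
    have h2 : (hF E).ev q = (Module.finrank k K : k)⁻¹ * m E := by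
      rw [hq, hΛρ, mul_smul_comm, map_smul, smul_eq_mul, hm]
    rw [← (hF E).ev_apply, h2, map_smul, (hF E).counit_rho, smul_eq_mul] at h1
    have := hdE E
    simp only [r]
    push_cast
    field_simp
    field_simp at h1
    rw [h1]; ring
  have hqs : q = ∑ E : ι, (r E : k) • (hF E).rho := by
    rw [← hX.pr_of_mem hqX, ← sum_pr hF ho hX hX.iSup_simple]
    exact Finset.sum_congr rfl fun E _ => by rw [← hsr, hs]
  have hρs := sum_rho hF ho hX hX.iSup_simple
  obtain ⟨E₁, hE₁, hE₁s⟩ := hX.exists_simple_le hX0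
  obtain ⟨E₀, -, hE₀⟩ := Finset.exists_min_image Finset.univ r ⟨⟨E₁, hE₁s, hE₁⟩, Finset.mem_univ _⟩
  have hy : q - (r E₀ : k) • hX.rho = ∑ E : ι, ((r E - r E₀ : ℚ) : k) • (hF E).rho := by
    rw [hqs, ← hρs, Finset.smul_sum, ← Finset.sum_sub_distrib]
    exact Finset.sum_congr rfl fun E _ => by push_cast; rw [sub_smul]
  have hyΛ : (q - (r E₀ : k) • hX.rho) * Λ = q - (r E₀ : k) • hX.rho := by
    rw [sub_mul, hq, mul_assoc, hΛΛ, smul_mul_assoc,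
      hK.rho_mul hX (mul_toSubmodule_mul_le C K) hΛ.1, hΛ.2.1, one_smul]
  have hyK : (q - (r E₀ : k) • hX.rho) * hK.1.rho =
      (Module.finrank k K : k) • (q - (r E₀ : k) • hX.rho) := by
    rw [hK.rho_eq hΛ, mul_smul_comm, hyΛ]
  have hev0 : (hF E₀).ev (q - (r E₀ : k) • hX.rho) = 0 := by
    rw [hy, map_sum]
    refine Finset.sum_eq_zero fun E _ => ?_
    by_cases h : E = E₀
    · simp [h]
    · rw [map_smul, (hF E₀).ev_apply, (hF E₀).pr_of_mem_perp (ho E E₀ h (hF E).rho_mem)]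
      simp
  choose N hN using fun E : ι => ev_rho_mul_rho_nat (hF E) hK.1 (hF E₀)
  have hNpos : ∀ E, N E ≠ 0 := by
    intro E h0
    have h1 := hN E
    rw [h0, Nat.cast_zero] at h1
    have h2 := mul_le_perp_of_ev_eq_zero (hF E) hK.1 (hF E₀) h1
    rw [coset_eq hK E.2.1 hC E.2.2] at h2
    exact E₀.2.1.2.1 (le_bot_iff.1 ((hF E₀).disjoint_perp le_rfl (E₀.2.2.trans h2)))
  have hsum : ∑ E : ι, (r E - r E₀) * N E = 0 := by
    have h1 := congrArg (hF E₀).ev hyK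
    rw [map_smul, hev0, smul_zero, hy, Finset.sum_mul, map_sum] at h1
    simp only [smul_mul_assoc, map_smul, hN, smul_eq_mul] at h1
    exact_mod_cast h1
  have hall : ∀ E, r E = r E₀ := by
    intro E
    have h1 := (Finset.sum_eq_zero_iff_of_nonneg fun E _ =>
      mul_nonneg (sub_nonneg.2 (hE₀ E (Finset.mem_univ _))) (Nat.cast_nonneg (N E))).1 hsum E
        (Finset.mem_univ _)
    exact sub_eq_zero.1 ((mul_eq_zero.1 h1).resolve_right (Nat.cast_ne_zero.2 (hNpos E)))
  have hfin : q = (r E₀ : k) • hX.rho := by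
    rw [← sub_eq_zero, hy]
    exact Finset.sum_eq_zero fun E _ => by simp [hall E]
  refine ⟨r E₀, fun h => ?_, hfin⟩
  have h1 := congrArg (counit (R := k)) hfin
  rw [h, zero_smul, map_zero, hq, Bialgebra.counit_mul, hC.1.counit_rho, hΛ.2.1, mul_one] at h1
  exact finrank_submodule_ne_zero hC.2.1 h1

lemma antipode_mul_mem (hD : IsSubcoalgebra k H D) (h : D * A ≤ A) {d x : H} (hd : d ∈ D)
    (hx : x ∈ A) : antipode k d * x ∈ A := by
  let N := LinearMap.range (TensorProduct.map D.subtype A.subtype)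
  have hN : ∀ d ∈ D, ∀ x ∈ A, d ⊗ₜ[k] x ∈ N := fun d hd x hx => ⟨⟨d, hd⟩ ⊗ₜ ⟨x, hx⟩, rfl⟩
  have hinj : Function.Injective (galois : Module.End k (H ⊗[k] H)) := by
    intro z w hzw
    have := congrArg galoisInv hzw
    simpa only [← Module.End.mul_apply, galoisInv_mul_galois, Module.End.one_apply] using this
  have hle : N.map galois ≤ N := by
    rintro _ ⟨_, ⟨w, rfl⟩, rfl⟩
    induction w with
    | zero => simp
    | add a b ha hb => simpa only [map_add] using N.add_mem ha hb
    | tmul d x =>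
      rw [TensorProduct.map_tmul, galois_tmul]
      exact hD.sw_mem (fun a ha b hb => hN a ha _ (h (Submodule.mul_mem_mul hb x.2))) d.2
  have heq : N.map galois = N :=
    Submodule.eq_of_le_of_finrank_eq hle (Submodule.equivMapOfInjective _ hinj N).finrank_eq.symm
  have hmem : galoisInv (d ⊗ₜ[k] x) ∈ N := by
    have h1 := hN d hd x hx
    rw [← heq] at h1
    obtain ⟨z, hz, hz'⟩ := h1
    rw [← hz', ← Module.End.mul_apply, galoisInv_mul_galois]
    exact hz
  have hN' : N ≤ A.comap ((TensorProduct.lid k H).toLinearMap ∘ₗ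
      (counit (R := k) (A := H)).rTensor H) := by
    rintro _ ⟨w, rfl⟩
    induction w with
    | zero => simp
    | add a b ha hb => rw [map_add]; exact Submodule.add_mem _ ha hb
    | tmul d x => simpa using A.smul_mem _ x.2
  have h2 := hN' hmem
  rw [galoisInv_tmul, Submodule.mem_comap, map_sw] at h2
  simp only [LinearMap.comp_apply, LinearMap.rTensor_tmul, LinearEquiv.coe_coe,
    TensorProduct.lid_tmul] at h2
  rwa [sw_counit_left (k := k) (fun b => antipode k b * x) d] at h2

lemma mem_conjSet_iff (hK : IsHopfSubalgebra k H K) (hΛ : IsIdempotentIntegral k H K Λ)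
    (hC : IsSimpleSubcoalgebra k H C) (hD : IsSimpleSubcoalgebra k H D) :
    (∀ d ∈ D, IsCocomm k H d → ∀ c ∈ C, IsCocomm k H c →
      d * (c * Λ) = counit (R := k) d • (c * Λ)) ↔
      D * (C * K.toSubmodule) ≤ C * K.toSubmodule := by
  obtain ⟨r, hr, hq⟩ := rho_mul_integral hK hΛ hC
  have hX := hC.1.mul hK.1
  constructor
  · intro h
    have h1 := h _ hD.1.rho_mem hD.1.rho_isCocomm _ hC.1.rho_mem hC.1.rho_isCocomm
    rw [hq, mul_smul_comm, smul_comm] at h1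
    have h2 := smul_right_injective H hr h1
    have h3 : hX.perp.ev (hD.1.rho * hX.rho) = 0 := by
      rw [h2, map_smul, hX.perp.ev_apply, hX.perp.pr_of_mem_perp (le_perp_perp _ hX.rho_mem)]
      simp
    have h4 := mul_le_perp_of_ev_eq_zero hD.1 hX hX.perp h3
    rwa [hX.perp_perp] at h4
  · intro h d hd _ c hc hcc
    obtain ⟨s, rfl⟩ := hC.eq_smul_rho hc hcc
    rw [smul_mul_assoc, hq, mul_smul_comm, mul_smul_comm,
      hX.mul_rho (fun x hx => h (Submodule.mul_mem_mul hd hx))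
        (fun x hx => antipode_mul_mem hD.1 h hd hx), smul_comm r, smul_comm s]

lemma isSubcoalgebra_conjK : IsSubcoalgebra k H (conjK k H K Λ C) :=
  isSubcoalgebra_sSup fun _ hD => hD.1.1

lemma le_conjK_iff (hK : IsHopfSubalgebra k H K) (hΛ : IsIdempotentIntegral k H K Λ)
    (hC : IsSimpleSubcoalgebra k H C) (hB : IsSubcoalgebra k H B) :
    B ≤ conjK k H K Λ C ↔ B * (C * K.toSubmodule) ≤ C * K.toSubmodule := by
  constructor
  · intro h
    refine (mul_le_mul_left h _).trans ?_
    rw [conjK, sSup_eq_iSup', Submodule.iSup_mul]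
    exact iSup_le fun D => (mem_conjSet_iff hK hΛ hC D.2.1).1 D.2.2
  · intro h
    conv_lhs => rw [← hB.iSup_simple]
    exact iSup_le fun E => le_sSup ⟨E.2.1, (mem_conjSet_iff hK hΛ hC E.2.1).2
      ((mul_le_mul_left E.2.2 _).trans h)⟩

lemma IsSubcoalgebra.map_antipode (hB : IsSubcoalgebra k H B) :
    IsSubcoalgebra k H (B.map (antipode k)) := by
  rw [isSubcoalgebra_iff]
  rintro _ ⟨b, hb, rfl⟩ f
  constructor
  · refine ⟨ur (f ∘ₗ antipode k) b, hB.ur_mem _ hb, ?_⟩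
    rw [ul_apply, sw_antipode (fun a b => f a • b), ur_apply, map_sw]
    simp
  · refine ⟨ul (f ∘ₗ antipode k) b, hB.ul_mem _ hb, ?_⟩
    rw [ur_apply, sw_antipode (fun a b => f b • a), ul_apply, map_sw]
    simp

lemma exists_stabilizer (hL : IsHopfSubalgebra k H L) (hK : IsHopfSubalgebra k H K)
    (hΛ : IsIdempotentIntegral k H K Λ) (hC : IsSimpleSubcoalgebra k H C) :
    ∃ L' : Subalgebra k H, IsHopfSubalgebra k H L' ∧
      L'.toSubmodule = L.toSubmodule ⊓ conjK k H K Λ C ∧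
      L'.toSubmodule * (C * K.toSubmodule) ≤ C * K.toSubmodule := by
  have hB := hL.1.inf (isSubcoalgebra_conjK (K := K) (Λ := Λ) (C := C))
  set B := L.toSubmodule ⊓ conjK k H K Λ C with hBdef
  have hBX : B * (C * K.toSubmodule) ≤ C * K.toSubmodule :=
    (le_conjK_iff hK hΛ hC hB).1 inf_le_right
  have h1 : (1 : H) ∈ B := by
    refine ⟨one_mem L, ?_⟩
    refine (le_conjK_iff hK hΛ hC isSubcoalgebra_one).2 (by rw [one_mul]) ?_
    exact Submodule.mem_one.2 ⟨1, map_one _⟩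
  have hmul : ∀ x ∈ B, ∀ y ∈ B, x * y ∈ B := by
    intro x hx y hy
    refine ⟨L.mul_mem hx.1 hy.1, ?_⟩
    refine (le_conjK_iff hK hΛ hC (hB.mul hB)).2 ?_ (Submodule.mul_mem_mul hx hy)
    rw [mul_assoc]
    exact (mul_le_mul_right hBX _).trans hBX
  have hS : ∀ x ∈ B, antipode k x ∈ B := by
    intro x hx
    refine ⟨hL.2 x hx.1, ?_⟩
    refine (le_conjK_iff hK hΛ hC hB.map_antipode).2 ?_ ⟨x, hx, rfl⟩
    rw [Submodule.mul_le]
    rintro _ ⟨b, hb, rfl⟩ y hy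
    exact antipode_mul_mem hB hBX hb hy
  refine ⟨B.toSubalgebra h1 fun x y hx hy => hmul x hx y hy, ⟨?_, hS⟩, ?_, ?_⟩
  · exact hB
  · rfl
  · exact hBX

end Conjugate

section Casimir

variable {k H} [FiniteDimensional k H]
open Coalgebra HopfAlgebra

variable {A : Subalgebra k H} {Λ : H} {V W : Type*} [AddCommGroup V] [Module k V]
  [AddCommGroup W] [Module k W]

/-- The operator `h ⊗ v ↦ h Λ₁ ⊗ S(Λ₂) v` on `H ⊗ V`. -/
def casOp (Λ : H) (act : H →ₗ[k] Module.End k V) : Module.End k (H ⊗[k] V) :=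
  sw (k := k) (fun a b => TensorProduct.map (LinearMap.mulRight k a) (act (antipode k b))) Λ

lemma casOp_tmul (act : H →ₗ[k] Module.End k V) (h : H) (v : V) :
    casOp Λ act (h ⊗ₜ v) = sw (k := k) (fun a b => (h * a) ⊗ₜ act (antipode k b) v) Λ := by
  simp [casOp, sw]

variable [IsSemisimpleRing H]

lemma sw_antipode_swap (g : H →ₗ[k] W) (h : H) :
    sw (k := k) (fun a b => g (antipode k b * a)) h = counit (R := k) h • g 1 := by
  have h1 : ∀ a b : H, g (antipode k b * a) = g (antipode k (antipode k a * b)) := by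
    intro a b
    rw [antipode_mul, antipode_antipode_eq]
  rw [sw_congr h1, sw_antipode_left (k := k) (fun z => g (antipode k z)), HopfAlgebra.antipode_one]

lemma IsIdempotentIntegral.leg (hA : IsHopfSubalgebra k H A) (hΛ : IsIdempotentIntegral k H A Λ)
    (F : H →ₗ[k] H →ₗ[k] W) {d : H} (hd : d ∈ A) :
    sw (k := k) (fun a b => F (d * a) b) Λ = sw (k := k) (fun a b => F a (antipode k d * b)) Λ := by
  have e1 : sw (k := k) (fun p q => sw (k := k) (fun a b => F a (antipode k q * b)) (p * Λ)) d =
      sw (k := k) (fun a b => F a (antipode k d * b)) Λ := by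
    have h1 := hA.1.sw_congr (f := fun p q => sw (k := k) (fun a b => F a (antipode k q * b)) (p * Λ))
      (g := fun p q => counit (R := k) p • sw (k := k) (fun a b => F a (antipode k q * b)) Λ)
      (fun p hp q _ => by
        rw [(hΛ.2.2 p hp).1]
        simp [sw, Finset.smul_sum]) hd
      (by constructor <;> intros <;> constructor <;> intros <;>
            simp [sw, add_mul, Finset.sum_add_distrib, Finset.smul_sum])
      (by constructor <;> intros <;> constructor <;> intros <;>
            simp [sw, add_mul, add_smul, smul_smul, mul_comm, Finset.sum_add_distrib,
              Finset.smul_sum])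
    rw [h1]
    exact sw_counit_left (k := k) (fun q => sw (k := k) (fun a b => F a (antipode k q * b)) Λ) d
      (by constructor <;> intros <;> simp [sw, add_mul, Finset.sum_add_distrib, Finset.smul_sum])
  rw [← e1]
  have e2 : ∀ p q : H, sw (k := k) (fun a b => F a (antipode k q * b)) (p * Λ) =
      sw (k := k) (fun c e => sw (k := k) (fun a b => F (c * a) (antipode k q * (e * b))) Λ) p := by
    intro p q
    exact sw_mul (k := k) (fun a b => F a (antipode k q * b)) p Λ
      (by constructor <;> intros <;> constructor <;> intros <;> simp [mul_add])
  rw [sw_congr e2, sw_assoc (k := k) (fun c e q =>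
    sw (k := k) (fun a b => F (c * a) (antipode k q * (e * b))) Λ) d
      (by constructor <;> intros <;> constructor <;> intros <;>
            simp [sw, add_mul, mul_add, Finset.sum_add_distrib, Finset.smul_sum])]
  have e3 : ∀ c r : H, sw (k := k) (fun e q => sw (k := k)
      (fun a b => F (c * a) (antipode k q * (e * b))) Λ) r =
        counit (R := k) r • sw (k := k) (fun a b => F (c * a) b) Λ := by
    intro c r
    let g : H →ₗ[k] W := ∑ i, F (c * MackeyPaper.leg (k := k) i Λ) ∘ₗ
      LinearMap.mulRight k (Module.finBasis k H i)
    have := sw_antipode_swap g r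
    simpa [g, sw, mul_assoc] using this
  rw [sw_congr e3]
  exact (sw_counit_right (k := k) (fun c => sw (k := k) (fun a b => F (c * a) b) Λ) d
    (by constructor <;> intros <;>
          simp [sw, add_mul, Finset.sum_add_distrib, Finset.smul_sum])).symm

end Casimir

section RelativeTensor

variable {k H} [FiniteDimensional k H] [IsSemisimpleRing H]
open Coalgebra HopfAlgebra

variable {A : Subalgebra k H} {Λ : H} {V W U U' : Type*} [AddCommGroup V] [Module k V]
  [AddCommGroup W] [Module k W] [AddCommGroup U] [Module k U] [AddCommGroup U'] [Module k U']

/-- A linear map `H → End V` which restricts to an action of the subalgebra `A`. -/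
structure IsAct (A : Subalgebra k H) (act : H →ₗ[k] Module.End k V) : Prop where
  one : act 1 = 1
  mul : ∀ a ∈ A, ∀ b ∈ A, act (a * b) = act a * act b

variable {act : H →ₗ[k] Module.End k V}

lemma casOp_mul_tmul (hA : IsHopfSubalgebra k H A) (hΛ : IsIdempotentIntegral k H A Λ)
    (hact : IsAct A act) (h : H) {a : H} (ha : a ∈ A) (v : V) :
    casOp Λ act ((h * a) ⊗ₜ v) = casOp Λ act (h ⊗ₜ act a v) := by
  let F : H →ₗ[k] H →ₗ[k] H ⊗[k] V := LinearMap.mk₂ k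
    (fun x y => (h * x) ⊗ₜ act (antipode k y) v)
    (by intros; simp [mul_add, TensorProduct.add_tmul]) (by intros; simp [TensorProduct.smul_tmul'])
    (by intros; simp [TensorProduct.tmul_add]) (by intros; simp)
  have hF : ∀ x y, F x y = (h * x) ⊗ₜ act (antipode k y) v := fun _ _ => rfl
  have h1 := hΛ.leg hA F ha
  rw [casOp_tmul, casOp_tmul]
  have h2 : ∀ x y : H, (h * a * x) ⊗ₜ[k] act (antipode k y) v = F (a * x) y := by
    intro x y
    rw [hF, mul_assoc]
  rw [sw_congr h2, h1]
  refine hA.1.sw_congr (fun x hx y hy => ?_) hΛ.1 ?_ ?_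
  · rw [hF, antipode_mul, antipode_antipode_eq, hact.mul _ (hA.2 y hy) _ ha, Module.End.mul_apply]
  · constructor <;> intros <;> constructor <;> intros <;> simp [mul_add]
  · constructor <;> intros <;> constructor <;> intros <;>
      simp [mul_add, TensorProduct.add_tmul, TensorProduct.smul_tmul', TensorProduct.tmul_add]

lemma casOp_sub_mem (hA : IsHopfSubalgebra k H A) (hΛ : IsIdempotentIntegral k H A Λ)
    {R : Submodule k (H ⊗[k] V)} {h : H} {v : V}
    (hR : ∀ a ∈ A, ∀ b ∈ A, (h * a) ⊗ₜ act b v - (h * a * b) ⊗ₜ v ∈ R) :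
    casOp Λ act (h ⊗ₜ v) - h ⊗ₜ v ∈ R := by
  have h1 := sw_antipode_right (k := k) (fun z => (h * z) ⊗ₜ[k] v) Λ
  rw [hΛ.2.1, one_smul, mul_one] at h1
  have h2 : casOp Λ act (h ⊗ₜ v) - h ⊗ₜ v = sw (k := k) (fun a b =>
      (h * a) ⊗ₜ act (antipode k b) v - (h * a * antipode k b) ⊗ₜ v) Λ := by
    rw [casOp_tmul]
    conv_lhs => rw [← h1]
    simp [sw, mul_assoc]
  rw [h2]
  refine hA.1.sw_mem (fun a ha b hb => hR a ha _ (hA.2 b hb)) hΛ.1 ?_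
  constructor <;> intros <;> constructor <;> intros <;>
    simp [mul_add, add_mul, TensorProduct.add_tmul, TensorProduct.smul_tmul',
      TensorProduct.tmul_add, smul_sub] <;> abel

lemma casOp_map (hA : IsHopfSubalgebra k H A) (hΛ : Λ ∈ A) {T : Module.End k H}
    {S : Module.End k V} (hT : ∀ h, ∀ a ∈ A, T (h * a) = T h * a)
    (hS : ∀ b ∈ A, ∀ v, S (act b v) = act b (S v)) :
    casOp Λ act * TensorProduct.map T S = TensorProduct.map T S * casOp Λ act := by
  refine TensorProduct.ext' fun h v => ?_
  rw [Module.End.mul_apply, Module.End.mul_apply, TensorProduct.map_tmul, casOp_tmul, casOp_tmul,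
    map_sw]
  refine hA.1.sw_congr (fun a ha b hb => ?_) hΛ ?_ ?_
  · rw [TensorProduct.map_tmul, hT h a ha, hS _ (hA.2 b hb)]
  · constructor <;> intros <;> constructor <;> intros <;>
      simp [mul_add, TensorProduct.add_tmul, TensorProduct.smul_tmul', TensorProduct.tmul_add]
  · constructor <;> intros <;> constructor <;> intros <;>
      simp [mul_add, TensorProduct.add_tmul, TensorProduct.smul_tmul', TensorProduct.tmul_add]

lemma casOp_idem (hA : IsHopfSubalgebra k H A) (hΛ : IsIdempotentIntegral k H A Λ)
    (hact : IsAct A act) : IsIdempotentElem (casOp Λ act) := by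
  refine TensorProduct.ext' fun h v => ?_
  rw [Module.End.mul_apply, ← sub_eq_zero, ← map_sub]
  refine casOp_sub_mem hA hΛ (R := LinearMap.ker (casOp Λ act)) fun a ha b hb => ?_
  rw [LinearMap.mem_ker, map_sub, casOp_mul_tmul hA hΛ hact _ hb, sub_self]

variable {X : Submodule k H} (hX : IsSubcoalgebra k H X)

lemma IsSubcoalgebra.sw_pr (F : H →ₗ[k] H →ₗ[k] W) (x : H) :
    sw (k := k) (fun a b => F (hX.pr a) b) x = sw (k := k) (fun a b => F a b) (hX.pr x) := by
  rw [hX.pr_eq_ul, ul_apply]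
  have h1 : ∀ a b : H, F (hX.pr a) b = sw (k := k) (fun c d => hX.ev c • F d b) a := by
    intro a b
    rw [hX.pr_eq_ul, ul_apply]
    simp [sw]
  rw [MackeyPaper.sw_congr h1, sw_assoc (k := k) (fun c d b => hX.ev c • F d b) x
    (by constructor <;> intros <;> constructor <;> intros <;>
      simp [add_smul, smul_smul, mul_comm])]
  have h2 : sw (k := k) (fun a b => F a b) (sw (k := k) (fun a b => hX.ev a • b) x) =
      TensorProduct.lift F (comul (sw (k := k) (fun a b => hX.ev a • b) x)) := by
    rw [comul_eq_sum]
    simp [sw]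
  rw [h2, ← LinearMap.comp_apply, map_sw]
  refine MackeyPaper.sw_congr (fun a b => ?_) x
  rw [map_smul, LinearMap.comp_apply, comul_eq_sum]
  simp [sw, Finset.smul_sum]

lemma IsSubcoalgebra.trace_mulRight_pr (a : H) :
    LinearMap.trace k H (LinearMap.mulRight k a * hX.pr) =
      (Module.finrank k X : k) / (Module.finrank k H : k) * lam k H a := by
  have hn := finrank_ne_zero (k := k) (H := H)
  rw [integral_spec.trace_eq]
  let F : H →ₗ[k] H →ₗ[k] k := LinearMap.mk₂ k (fun x y => lam k H (y * antipode k (x * a)))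
    (by intros; simp [add_mul, mul_add]) (by intros; simp) (by intros; simp [add_mul])
    (by intros; simp)
  have h1 := hX.sw_pr F (integral k H)
  simp only [F, LinearMap.mk₂_apply] at h1
  simp only [Module.End.mul_apply, LinearMap.mulRight_apply]
  rw [h1]
  have h2 : ∀ x y : H, lam k H (y * antipode k (x * a)) = lam k H ((antipode k x * y) * antipode k a) := by
    intro x y
    rw [antipode_mul, ← mul_assoc, lam_comm, ← mul_assoc]
  rw [MackeyPaper.sw_congr h2, sw_antipode_left (k := k) (fun z => lam k H (z * antipode k a)), one_mul,
    lam_antipode]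
  have h3 := hX.counit_rho
  rw [IsSubcoalgebra.rho, map_smul, smul_eq_mul] at h3
  rw [← h3, smul_eq_mul]
  field_simp

lemma IsHopfSubalgebra.lam_integral (hA : IsHopfSubalgebra k H A)
    (hΛ : IsIdempotentIntegral k H A Λ) :
    (Module.finrank k A : k) * lam k H Λ = (Module.finrank k H : k) := by
  have h1 := hA.1.frm_rho (one_mem_toSubmodule A)
  rw [hA.rho_eq hΛ, map_smul, frm_apply, HopfAlgebra.antipode_one, one_mul,
    Bialgebra.counit_one, mul_one, smul_eq_mul] at h1
  exact h1

variable [FiniteDimensional k V]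

lemma trace_casOp (hA : IsHopfSubalgebra k H A) (hΛ : IsIdempotentIntegral k H A Λ)
    (hact : IsAct A act) (Q : Module.End k V) :
    LinearMap.trace k _ (casOp Λ act * TensorProduct.map hX.pr Q) =
      (Module.finrank k X : k) / (Module.finrank k A : k) * LinearMap.trace k V Q := by
  have hn := finrank_ne_zero (k := k) (H := H)
  have hdA : (Module.finrank k A : k) ≠ 0 := finrank_submodule_ne_zero (toSubmodule_ne_bot A)
  let g : H →ₗ[k] k := LinearMap.trace k V ∘ₗ LinearMap.mulRight k Q ∘ₗ act ∘ₗ antipode k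
  have hg : ∀ z, g z = LinearMap.trace k V (act (antipode k z) * Q) := fun z => rfl
  have h1 : LinearMap.trace k _ (casOp Λ act * TensorProduct.map hX.pr Q) =
      sw (k := k) (fun a b => ((Module.finrank k X : k) / (Module.finrank k H : k)) *
        (lam k H a * g b)) Λ := by
    rw [casOp, sw, Finset.sum_mul, map_sum]
    refine Finset.sum_congr rfl fun i _ => ?_
    rw [← TensorProduct.map_mul, LinearMap.trace_tensorProduct', hX.trace_mulRight_pr, mul_assoc]
    rfl
  have h2 : g (ul (lam k H) Λ) = sw (k := k) (fun a b => lam k H a * g b) Λ := by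
    rw [ul_apply, map_sw]
    simp
  have h3 : sw (k := k) (fun a b => ((Module.finrank k X : k) / (Module.finrank k H : k)) *
        (lam k H a * g b)) Λ = ((Module.finrank k X : k) / (Module.finrank k H : k)) *
          sw (k := k) (fun a b => lam k H a * g b) Λ := by
    simp [sw, Finset.mul_sum]
  rw [h1, h3, ← h2, lam_rightInv, map_smul, hg, HopfAlgebra.antipode_one, hact.one, one_mul,
    smul_eq_mul]
  have h4 := hA.lam_integral hΛ
  rw [← h4] at hn ⊢
  have : lam k H Λ ≠ 0 := right_ne_zero_of_mul hn
  field_simp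

lemma finrank_map_eq_of_ker_eq [FiniteDimensional k W] (f : W →ₗ[k] U) (g : W →ₗ[k] U')
    (h : LinearMap.ker f = LinearMap.ker g) (N : Submodule k W) :
    Module.finrank k (N.map f) = Module.finrank k (N.map g) := by
  have h1 := LinearMap.finrank_range_add_finrank_ker (f ∘ₗ N.subtype)
  have h2 := LinearMap.finrank_range_add_finrank_ker (g ∘ₗ N.subtype)
  rw [LinearMap.ker_comp, LinearMap.range_comp, Submodule.range_subtype] at h1 h2
  rw [h] at h1
  omega

lemma finrank_map_range [FiniteDimensional k W] {T J : Module.End k W} (hT : IsIdempotentElem T)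
    (hJ : IsIdempotentElem J) (hTJ : T * J = J * T) :
    (Module.finrank k ((LinearMap.range J).map T) : k) = LinearMap.trace k W (T * J) := by
  have h1 : IsIdempotentElem (T * J) := IsIdempotentElem.mul_of_commute hTJ hT hJ
  rw [trace_idempotent_nat h1, Module.End.mul_eq_comp, LinearMap.range_comp]

end RelativeTensor

section Induced

variable {k H} [FiniteDimensional k H] [IsSemisimpleRing H]
open Coalgebra HopfAlgebra

variable {K : Subalgebra k H} {Λ : H} {M : Type*} [AddCommGroup M] [Module k M]
  [Module ↥K M] [IsScalarTower k ↥K M]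

variable (M) in
/-- The action of `K` on `M`, extended to a linear map on `H` by the projection of `H` onto `K`. -/
def IsHopfSubalgebra.act (hK : IsHopfSubalgebra k H K) : H →ₗ[k] Module.End k M :=
  (Algebra.lsmul k k M : ↥K →ₐ[k] Module.End k M).toLinearMap ∘ₗ
    (hK.1.pr.codRestrict (Subalgebra.toSubmodule K) hK.1.pr_mem : H →ₗ[k] ↥K)

lemma IsHopfSubalgebra.act_apply (hK : IsHopfSubalgebra k H K) {a : H} (ha : a ∈ K) (m : M) :
    hK.act M a m = (⟨a, ha⟩ : ↥K) • m := by
  have h1 : hK.1.pr a = a := hK.1.pr_of_mem ha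
  have h2 : (⟨hK.1.pr a, hK.1.pr_mem a⟩ : ↥K) = ⟨a, ha⟩ := Subtype.ext h1
  change (⟨hK.1.pr a, hK.1.pr_mem a⟩ : ↥K) • m = _
  rw [h2]

lemma IsHopfSubalgebra.isAct (hK : IsHopfSubalgebra k H K) : IsAct K (hK.act M) where
  one := by
    ext m
    rw [hK.act_apply K.one_mem]
    exact one_smul _ m
  mul a ha b hb := by
    ext m
    rw [Module.End.mul_apply, hK.act_apply (mul_mem ha hb), hK.act_apply hb, hK.act_apply ha]
    exact mul_smul (⟨a, ha⟩ : ↥K) ⟨b, hb⟩ m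

lemma casOp_smul {V : Type*} [AddCommGroup V] [Module k V] (act : H →ₗ[k] Module.End k V)
    (h : H) (z : H ⊗[k] V) : casOp Λ act (h • z) = h • casOp Λ act z := by
  induction z with
  | zero => simp
  | tmul x v =>
    rw [TensorProduct.smul_tmul', casOp_tmul, casOp_tmul, smul_eq_mul]
    simp [sw, Finset.smul_sum, TensorProduct.smul_tmul', mul_assoc]
  | add x y hx hy => rw [smul_add, map_add, map_add, smul_add, hx, hy]

lemma mem_indRel_iff (hK : IsHopfSubalgebra k H K) (hΛ : IsIdempotentIntegral k H K Λ)
    (z : H ⊗[k] M) : z ∈ indRel k H K M ↔ casOp Λ (hK.act M) z = 0 := by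
  constructor
  · intro hz
    induction hz using Submodule.span_induction with
    | mem z hz =>
      obtain ⟨a, m, rfl⟩ := hz
      rw [map_sub, ← one_mul (a : H), casOp_mul_tmul hK hΛ hK.isAct 1 a.2, hK.act_apply a.2,
        sub_self]
    | zero => exact map_zero _
    | add x y _ _ hx hy => rw [map_add, hx, hy, add_zero]
    | smul h x _ hx => rw [casOp_smul, hx, smul_zero]
  · intro hz
    have h1 : casOp Λ (hK.act M) z - z ∈ (indRel k H K M).restrictScalars k := by
      clear hz
      induction z with
      | zero => simp
      | tmul h m =>
        refine casOp_sub_mem hK hΛ fun a ha b hb => ?_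
        rw [hK.act_apply hb, ← neg_sub]
        refine Submodule.neg_mem _ ?_
        have h2 := (indRel k H K M).smul_mem (h * a) (Submodule.subset_span ⟨⟨b, hb⟩, m, rfl⟩)
        rw [smul_sub, TensorProduct.smul_tmul', TensorProduct.smul_tmul', smul_eq_mul, smul_eq_mul,
          mul_one] at h2
        exact h2
      | add x y hx hy =>
        rw [map_add, add_sub_add_comm]
        exact add_mem hx hy
    rw [hz, zero_sub] at h1
    exact neg_mem_iff.mp h1

variable (K M) in
/-- The quotient map from `H ⊗ M` onto the induced module, as a `k`-linear map. -/
def indMk : H ⊗[k] M →ₗ[k] Ind k H K M := (indRel k H K M).mkQ.restrictScalars k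

lemma indMk_apply (z : H ⊗[k] M) : indMk K M z = Submodule.Quotient.mk z := rfl

lemma indMk_surjective : Function.Surjective (indMk K M) := by
  intro y
  obtain ⟨z, rfl⟩ := Submodule.Quotient.mk_surjective (indRel k H K M) y
  exact ⟨z, rfl⟩

lemma ker_indMk (hK : IsHopfSubalgebra k H K) (hΛ : IsIdempotentIntegral k H K Λ) :
    LinearMap.ker (indMk K M) = LinearMap.ker (casOp Λ (hK.act M)) := by
  ext z
  rw [LinearMap.mem_ker, LinearMap.mem_ker, ← mem_indRel_iff hK hΛ, indMk_apply,
    Submodule.Quotient.mk_eq_zero]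

lemma IsSubcoalgebra.pr_idem {Y : Submodule k H} (hY : IsSubcoalgebra k H Y) :
    IsIdempotentElem hY.pr := by
  ext x
  exact hY.pr_of_mem (hY.pr_mem x)

lemma IsIdempotentElem.tensorMap {V W : Type*} [AddCommGroup V] [Module k V] [AddCommGroup W]
    [Module k W] {P : Module.End k V} {Q : Module.End k W} (hP : IsIdempotentElem P)
    (hQ : IsIdempotentElem Q) : IsIdempotentElem (TensorProduct.map P Q) := by
  rw [IsIdempotentElem, ← TensorProduct.map_mul, hP.eq, hQ.eq]

lemma finrank_map_indMk [FiniteDimensional k M] (hK : IsHopfSubalgebra k H K)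
    (hΛ : IsIdempotentIntegral k H K Λ) {Y : Submodule k H} (hY : IsSubcoalgebra k H Y)
    (hYK : Y * Subalgebra.toSubmodule K ≤ Y) :
    Module.finrank k ((LinearMap.range (TensorProduct.map hY.pr (1 : Module.End k M))).map
      (indMk K M)) * Module.finrank k K = Module.finrank k Y * Module.finrank k M := by
  have hdK : (Module.finrank k K : k) ≠ 0 := finrank_submodule_ne_zero (toSubmodule_ne_bot K)
  have hc : casOp Λ (hK.act M) * TensorProduct.map hY.pr 1 =
      TensorProduct.map hY.pr 1 * casOp Λ (hK.act M) := by
    refine casOp_map hK hΛ.1 (fun h a ha => ?_) fun _ _ _ => rfl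
    exact hY.pr_mul_right (fun x hx => hYK (Submodule.mul_mem_mul hx ha))
      (fun x hx => hYK (Submodule.mul_mem_mul hx (hK.2 a ha))) h
  rw [finrank_map_eq_of_ker_eq _ _ (ker_indMk hK hΛ)]
  have h1 := finrank_map_range (casOp_idem hK hΛ hK.isAct)
    (IsIdempotentElem.tensorMap hY.pr_idem (IsIdempotentElem.one (M := Module.End k M))) hc
  rw [trace_casOp hY hK hΛ hK.isAct, LinearMap.trace_one] at h1
  have h2 : (Module.finrank k ((LinearMap.range (TensorProduct.map hY.pr
      (1 : Module.End k M))).map (casOp Λ (hK.act M))) * Module.finrank k K : k) =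
        Module.finrank k Y * Module.finrank k M := by
    rw [h1]
    field_simp
  exact_mod_cast h2

lemma isSubcoalgebra_top : IsSubcoalgebra k H (⊤ : Submodule k H) := by
  rw [isSubcoalgebra_iff]
  simp

lemma finrank_ind [FiniteDimensional k M] (hK : IsHopfSubalgebra k H K)
    (hΛ : IsIdempotentIntegral k H K Λ) :
    Module.finrank k (Ind k H K M) * Module.finrank k K =
      Module.finrank k H * Module.finrank k M := by
  have h1 := finrank_map_indMk (M := M) hK hΛ isSubcoalgebra_top le_top
  have h2 : (isSubcoalgebra_top (k := k) (H := H)).pr = 1 := by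
    ext x
    exact isSubcoalgebra_top.pr_of_mem trivial
  rw [h2, TensorProduct.map_one, Module.End.one_eq_id, LinearMap.range_id, Submodule.map_top,
    LinearMap.range_eq_top.mpr indMk_surjective, finrank_top, finrank_top] at h1
  exact h1

end Induced

section Component

variable {k H} [FiniteDimensional k H] [IsSemisimpleRing H]
open Coalgebra HopfAlgebra

lemma IsHopfSubalgebra.exists_integral {A : Subalgebra k H} (hA : IsHopfSubalgebra k H A) :
    ∃ Λ, IsIdempotentIntegral k H A Λ := by
  have hd : (Module.finrank k A : k) ≠ 0 := finrank_submodule_ne_zero (toSubmodule_ne_bot A)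
  refine ⟨(Module.finrank k A : k)⁻¹ • hA.1.rho, A.smul_mem hA.1.rho_mem _, ?_, fun x hx => ⟨?_, ?_⟩⟩
  · rw [map_smul, hA.1.counit_rho, smul_eq_mul]
    exact inv_mul_cancel₀ hd
  · rw [mul_smul_comm, hA.mul_rho hA.1 (toSubmodule_mul_self A).le hx, smul_comm]
  · rw [smul_mul_assoc, hA.rho_mul hA.1 (toSubmodule_mul_self A).le hx, smul_comm]

variable {L K : Subalgebra k H} {Λ : H} {C : Submodule k H} {M : Type*} [AddCommGroup M]
  [Module k M] [Module ↥K M] [IsScalarTower k ↥K M]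

variable (L K C M) in
/-- The inclusion of `L ⊗ (CK ⊗ M)` into `H ⊗ (H ⊗ M)`. -/
def lcmIncl : LCM k H L K C M →ₗ[k] H ⊗[k] (H ⊗[k] M) :=
  (TensorProduct.map (Subalgebra.toSubmodule L).subtype
    (TensorProduct.map (CKsub k H K C).subtype LinearMap.id) :
      ↥(Subalgebra.toSubmodule L) ⊗[k] (↥(CKsub k H K C) ⊗[k] M) →ₗ[k] H ⊗[k] (H ⊗[k] M))

lemma lcmIncl_mk (l : ↥L) (x : ↥(CKsub k H K C)) (m : M) :
    lcmIncl L K C M (lcmk k H L K C M l (ckmk k H K M C x m)) = (l : H) ⊗ₜ ((x : H) ⊗ₜ m) := rfl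

lemma lcmIncl_injective : Function.Injective (lcmIncl L K C M) := by
  refine TensorProduct.map_injective_of_flat_flat _ _ Subtype.val_injective ?_
  exact TensorProduct.map_injective_of_flat_flat _ _ Subtype.val_injective Function.injective_id

lemma lcm_induction {P : LCM k H L K C M → Prop}
    (mk : ∀ l x m, P (lcmk k H L K C M l (ckmk k H K M C x m)))
    (add : ∀ x y, P x → P y → P (x + y)) (w : LCM k H L K C M) : P w := by
  have zero : P 0 := by
    have h := mk 0 0 0
    have h0 : lcmk k H L K C M 0 (ckmk k H K M C 0 0) = 0 := TensorProduct.zero_tmul _ _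
    rwa [h0] at h
  refine TensorProduct.induction_on (motive := P) w zero (fun l y => ?_) add
  refine TensorProduct.induction_on (motive := fun y => P (lcmk k H L K C M l y)) y ?_ (mk l) ?_
  · have h0 : lcmk k H L K C M l 0 = 0 := TensorProduct.tmul_zero _ _
    exact h0 ▸ zero
  · intro y z hy hz
    have h0 : lcmk k H L K C M l (y + z) = lcmk k H L K C M l y + lcmk k H L K C M l z :=
      TensorProduct.tmul_add _ _ _
    rw [h0]
    exact add _ _ hy hz

lemma isAct_lsmul (A : Subalgebra k H) (V : Type*) [AddCommGroup V] [Module k V] :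
    IsAct A ((Algebra.lsmul k k (H ⊗[k] V) : H →ₐ[k] Module.End k (H ⊗[k] V)).toLinearMap) where
  one := map_one (Algebra.lsmul k k (H ⊗[k] V))
  mul a _ b _ := map_mul (Algebra.lsmul k k (H ⊗[k] V)) a b

instance [FiniteDimensional k M] : FiniteDimensional k (LCM k H L K C M) :=
  inferInstanceAs (FiniteDimensional k (↥L ⊗[k] (↥(CKsub k H K C) ⊗[k] M)))

variable {L' : Subalgebra k H} {Λ' : H}

variable (Λ M Λ') in
/-- The projection of `H ⊗ (H ⊗ M)` whose kernel consists of the relations defining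
`H ⊗_{L'} (H ⊗_K M)`. -/
def compOp (hK : IsHopfSubalgebra k H K) : Module.End k (H ⊗[k] (H ⊗[k] M)) :=
  casOp Λ' (Algebra.lsmul k k (H ⊗[k] M) : H →ₐ[k] Module.End k (H ⊗[k] M)).toLinearMap *
    TensorProduct.map 1 (casOp Λ (hK.act M))

lemma compOp_comm (hK : IsHopfSubalgebra k H K) (hL' : IsHopfSubalgebra k H L') (hΛ' : Λ' ∈ L') :
    compOp Λ M Λ' hK = TensorProduct.map 1 (casOp Λ (hK.act M)) *
      casOp Λ' (Algebra.lsmul k k (H ⊗[k] M) : H →ₐ[k] Module.End k (H ⊗[k] M)).toLinearMap :=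
  casOp_map hL' hΛ' (fun _ _ _ => rfl) fun b _ v => casOp_smul _ b v

lemma compOp_idem (hK : IsHopfSubalgebra k H K) (hΛ : IsIdempotentIntegral k H K Λ)
    (hL' : IsHopfSubalgebra k H L') (hΛ' : IsIdempotentIntegral k H L' Λ') :
    IsIdempotentElem (compOp Λ M Λ' hK) := by
  refine IsIdempotentElem.mul_of_commute (compOp_comm hK hL' hΛ'.1) (casOp_idem hL' hΛ'
    (isAct_lsmul _ _)) (IsIdempotentElem.tensorMap IsIdempotentElem.one
      (casOp_idem hK hΛ hK.isAct))

lemma compRel_eq_ker (hK : IsHopfSubalgebra k H K) (hΛ : IsIdempotentIntegral k H K Λ)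
    (hL' : IsHopfSubalgebra k H L') (hΛ' : IsIdempotentIntegral k H L' Λ')
    (h' : Subalgebra.toSubmodule L' = Subalgebra.toSubmodule L ⊓ conjK k H K Λ C)
    (hst : Subalgebra.toSubmodule L' * (C * Subalgebra.toSubmodule K) ≤
      C * Subalgebra.toSubmodule K) :
    compRel k H L K Λ C M =
    LinearMap.ker (compOp Λ M Λ' hK ∘ₗ lcmIncl L K C M) := by
  have hmem : ∀ {a}, a ∈ L' ↔ a ∈ L ∧ a ∈ conjK k H K Λ C := by
    intro a
    rw [← Subalgebra.mem_toSubmodule, h']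
    rfl
  apply le_antisymm
  · refine Submodule.span_le.mpr ?_
    rintro z (⟨l, a, haL, hac, x, m, hax, rfl⟩ | ⟨l, x, a, m, hxa, rfl⟩)
    · rw [SetLike.mem_coe, LinearMap.mem_ker, LinearMap.comp_apply, map_sub, lcmIncl_mk, lcmIncl_mk,
        compOp_comm hK hL' hΛ'.1, Module.End.mul_apply, map_sub,
        casOp_mul_tmul hL' hΛ' (isAct_lsmul _ _) _ (hmem.mpr ⟨haL, hac⟩)]
      simp [TensorProduct.smul_tmul']
    · rw [SetLike.mem_coe, LinearMap.mem_ker, LinearMap.comp_apply, map_sub, lcmIncl_mk, lcmIncl_mk,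
        compOp, Module.End.mul_apply, map_sub, TensorProduct.map_tmul, TensorProduct.map_tmul,
        casOp_mul_tmul hK hΛ hK.isAct _ a.2, hK.act_apply a.2, sub_self, map_zero]
  · intro w hw
    have h1 : ∀ w, casOp Λ' (Algebra.lsmul k k (H ⊗[k] M) :
        H →ₐ[k] Module.End k (H ⊗[k] M)).toLinearMap (lcmIncl L K C M w) - lcmIncl L K C M w ∈
          (compRel k H L K Λ C M).map (lcmIncl L K C M) := by
      intro w
      induction w using lcm_induction with
      | mk l x m =>
        rw [lcmIncl_mk]
        refine casOp_sub_mem hL' hΛ' fun a ha b hb => ?_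
        rw [← neg_sub]
        refine Submodule.neg_mem _ ?_
        obtain ⟨haL, -⟩ := hmem.mp ha
        obtain ⟨hbL, hbc⟩ := hmem.mp hb
        refine ⟨_, Submodule.subset_span (Or.inl ⟨⟨l * a, mul_mem l.2 haL⟩, b, hbL, hbc, x, m,
          hst (Submodule.mul_mem_mul hb x.2), rfl⟩), ?_⟩
        rw [map_sub, lcmIncl_mk, lcmIncl_mk]
        simp [TensorProduct.smul_tmul']
      | add x y hx hy =>
        rw [map_add, map_add, add_sub_add_comm]
        exact add_mem hx hy
    have h2 : ∀ w, TensorProduct.map 1 (casOp Λ (hK.act M)) (lcmIncl L K C M w) -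
        lcmIncl L K C M w ∈ (compRel k H L K Λ C M).map (lcmIncl L K C M) := by
      intro w
      induction w using lcm_induction with
      | mk l x m =>
        rw [lcmIncl_mk, TensorProduct.map_tmul, Module.End.one_apply, ← TensorProduct.tmul_sub]
        have hxK : ∀ y ∈ CKsub k H K C, ∀ a ∈ K, y * a ∈ CKsub k H K C := fun y hy a ha =>
          mul_toSubmodule_mul_le C K (Submodule.mul_mem_mul hy ha)
        refine casOp_sub_mem hK hΛ (R := ((compRel k H L K Λ C M).map (lcmIncl L K C M)).comap
          (TensorProduct.mk k H (H ⊗[k] M) l)) fun a ha b hb => ?_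
        rw [← neg_sub]
        refine Submodule.neg_mem _ ?_
        refine ⟨_, Submodule.subset_span (Or.inr ⟨l, ⟨x * a, hxK _ x.2 a ha⟩, ⟨b, hb⟩, m,
          hxK _ (hxK _ x.2 a ha) b hb, rfl⟩), ?_⟩
        rw [map_sub, lcmIncl_mk, lcmIncl_mk, hK.act_apply hb, TensorProduct.mk_apply,
          TensorProduct.tmul_sub]
      | add x y hx hy =>
        rw [map_add, map_add, add_sub_add_comm]
        exact add_mem hx hy
    obtain ⟨r, hr, er⟩ := h2 w
    obtain ⟨s, hs, es⟩ := h1 (w + r)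
    rw [LinearMap.mem_ker, LinearMap.comp_apply, compOp, Module.End.mul_apply] at hw
    rw [eq_sub_iff_add_eq, add_comm, ← map_add] at er
    rw [← er] at hw
    rw [hw, zero_sub, ← map_neg] at es
    have h3 := lcmIncl_injective es
    have h4 : w = -(s + r) := by
      rw [h3]
      abel
    rw [h4]
    exact neg_mem (add_mem hs hr)

lemma range_lcmIncl (hL : IsSubcoalgebra k H (Subalgebra.toSubmodule L))
    (hX : IsSubcoalgebra k H (C * Subalgebra.toSubmodule K)) :
    LinearMap.range (lcmIncl L K C M) =
      LinearMap.range (TensorProduct.map hL.pr (TensorProduct.map hX.pr (1 : Module.End k M))) := by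
  apply le_antisymm
  · rintro _ ⟨w, rfl⟩
    refine ⟨lcmIncl L K C M w, ?_⟩
    induction w using lcm_induction with
    | mk l x m =>
      rw [lcmIncl_mk, TensorProduct.map_tmul, TensorProduct.map_tmul, hL.pr_of_mem l.2,
        hX.pr_of_mem x.2, Module.End.one_apply]
    | add x y hx hy => rw [map_add, map_add, hx, hy]
  · rintro _ ⟨w, rfl⟩
    induction w with
    | zero => simp
    | tmul h z =>
      induction z with
      | zero => simp
      | tmul x m =>
        exact ⟨lcmk k H L K C M ⟨hL.pr h, hL.pr_mem h⟩ (ckmk k H K M C ⟨hX.pr x, hX.pr_mem x⟩ m), rfl⟩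
      | add x y hx hy =>
        rw [TensorProduct.tmul_add, map_add]
        exact add_mem hx hy
    | add x y hx hy =>
      rw [map_add]
      exact add_mem hx hy

lemma finrank_comp [FiniteDimensional k M] (hK : IsHopfSubalgebra k H K) (hΛ : IsIdempotentIntegral k H K Λ)
    (hL' : IsHopfSubalgebra k H L') (hΛ' : IsIdempotentIntegral k H L' Λ')
    (h' : Subalgebra.toSubmodule L' = Subalgebra.toSubmodule L ⊓ conjK k H K Λ C)
    (hst : Subalgebra.toSubmodule L' * (C * Subalgebra.toSubmodule K) ≤
      C * Subalgebra.toSubmodule K)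
    (hL : IsHopfSubalgebra k H L)
    (hC : IsSubcoalgebra k H C) :
    Module.finrank k (Comp k H L K Λ C M) * (Module.finrank k L' * Module.finrank k K) =
      Module.finrank k L * Module.finrank k (CKsub k H K C) * Module.finrank k M := by
  have hdK : (Module.finrank k K : k) ≠ 0 := finrank_submodule_ne_zero (toSubmodule_ne_bot K)
  have hdL : (Module.finrank k L' : k) ≠ 0 := finrank_submodule_ne_zero (toSubmodule_ne_bot L')
  have hX : IsSubcoalgebra k H (C * Subalgebra.toSubmodule K) := hC.mul hK.1
  have h1 := (compRel k H L K Λ C M).finrank_quotient_add_finrank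
  have h2 := LinearMap.finrank_range_add_finrank_ker (compOp Λ M Λ' hK ∘ₗ lcmIncl L K C M)
  rw [← compRel_eq_ker hK hΛ hL' hΛ' h' hst] at h2
  have h3 : Module.finrank k (Comp k H L K Λ C M) =
      Module.finrank k (LinearMap.range (compOp Λ M Λ' hK ∘ₗ lcmIncl L K C M)) :=
    Nat.add_right_cancel (h1.trans h2.symm)
  have hc2 : casOp Λ (hK.act M) * TensorProduct.map hX.pr 1 =
      TensorProduct.map hX.pr 1 * casOp Λ (hK.act M) := by
    refine casOp_map hK hΛ.1 (fun h a ha => ?_) fun _ _ _ => rfl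
    exact hX.pr_mul_right
      (fun x hx => mul_toSubmodule_mul_le C K (Submodule.mul_mem_mul hx ha))
      (fun x hx => mul_toSubmodule_mul_le C K (Submodule.mul_mem_mul hx (hK.2 a ha))) h
  have hle : ∀ a ∈ L', a ∈ L := fun a ha => by
    have h4 : a ∈ Subalgebra.toSubmodule L' := ha
    rw [h'] at h4
    exact h4.1
  have hc1 : casOp Λ' (Algebra.lsmul k k (H ⊗[k] M) :
      H →ₐ[k] Module.End k (H ⊗[k] M)).toLinearMap *
        TensorProduct.map hL.1.pr (TensorProduct.map hX.pr 1) =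
      TensorProduct.map hL.1.pr (TensorProduct.map hX.pr 1) *
        casOp Λ' (Algebra.lsmul k k (H ⊗[k] M) :
          H →ₐ[k] Module.End k (H ⊗[k] M)).toLinearMap := by
    refine casOp_map hL' hΛ'.1 (fun h a ha => ?_) fun b hb v => ?_
    · exact hL.1.pr_mul_right (fun x hx => L.mul_mem hx (hle a ha))
        (fun x hx => L.mul_mem hx (hle _ (hL'.2 a ha))) h
    · change TensorProduct.map hX.pr 1 (b • v) = b • TensorProduct.map hX.pr 1 v
      induction v with
      | zero => simp
      | tmul x m =>
        rw [TensorProduct.smul_tmul', TensorProduct.map_tmul, TensorProduct.map_tmul,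
          TensorProduct.smul_tmul', smul_eq_mul, smul_eq_mul,
          hX.pr_mul_left (fun x hx => hst (Submodule.mul_mem_mul hb hx))
            (fun x hx => hst (Submodule.mul_mem_mul (hL'.2 b hb) hx))]
      | add x y hx hy => rw [smul_add, map_add, map_add, smul_add, hx, hy]
  have hc3 : TensorProduct.map 1 (casOp Λ (hK.act M)) *
      TensorProduct.map hL.1.pr (TensorProduct.map hX.pr 1) =
        TensorProduct.map hL.1.pr (TensorProduct.map hX.pr 1) *
          TensorProduct.map 1 (casOp Λ (hK.act M)) := by
    rw [← TensorProduct.map_mul, ← TensorProduct.map_mul, hc2, one_mul, mul_one]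
  have hc : compOp Λ M Λ' hK * TensorProduct.map hL.1.pr (TensorProduct.map hX.pr 1) =
      TensorProduct.map hL.1.pr (TensorProduct.map hX.pr 1) * compOp Λ M Λ' hK := by
    rw [compOp, mul_assoc, hc3, ← mul_assoc, hc1, mul_assoc]
  have h4 := finrank_map_range (compOp_idem (M := M) hK hΛ hL' hΛ')
    (IsIdempotentElem.tensorMap hL.1.pr_idem
      (IsIdempotentElem.tensorMap hX.pr_idem IsIdempotentElem.one)) hc
  rw [← range_lcmIncl, ← LinearMap.range_comp, ← h3, compOp, mul_assoc, ← TensorProduct.map_mul,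
    one_mul, trace_casOp hL.1 hL' hΛ' (isAct_lsmul _ _), trace_casOp hX hK hΛ hK.isAct,
    LinearMap.trace_one] at h4
  have h5 : (Module.finrank k (Comp k H L K Λ C M) * (Module.finrank k L' * Module.finrank k K) : k)
      = Module.finrank k L * Module.finrank k (CKsub k H K C) * Module.finrank k M := by
    have h6 : Module.finrank k (Subalgebra.toSubmodule L) = Module.finrank k L := rfl
    rw [h4, CKsub, h6]
    field_simp
  exact_mod_cast h5

end Component

section MackeyDimension

variable {k H} [FiniteDimensional k H] [IsSemisimpleRing H]
open Coalgebra HopfAlgebra DirectSum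

variable {L K : Subalgebra k H} {Λ : H} {C : Submodule k H} {M : Type v} [AddCommGroup M]
  [Module k M] [Module ↥K M] [IsScalarTower k ↥K M]

variable (L K C M) in
/-- Left multiplication `L ⊗ (CK ⊗ M) → H ⊗_K M`. -/
def lcmMul : LCM k H L K C M →ₗ[k] Ind k H K M :=
  indMk K M ∘ₗ TensorProduct.lift
    (Algebra.lsmul k k (H ⊗[k] M) : H →ₐ[k] Module.End k (H ⊗[k] M)).toLinearMap ∘ₗ
      lcmIncl L K C M

lemma lcmMul_mk (l : ↥L) (x : ↥(CKsub k H K C)) (m : M) :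
    lcmMul L K C M (lcmk k H L K C M l (ckmk k H K M C x m)) =
      indMk K M (((l : H) * (x : H)) ⊗ₜ m) := rfl

lemma compRel_le_ker_lcmMul : compRel k H L K Λ C M ≤ LinearMap.ker (lcmMul L K C M) := by
  refine Submodule.span_le.mpr ?_
  rintro z (⟨l, a, haL, hac, x, m, hax, rfl⟩ | ⟨l, x, a, m, hxa, rfl⟩)
  · rw [SetLike.mem_coe, LinearMap.mem_ker, map_sub, lcmMul_mk, lcmMul_mk, mul_assoc, sub_self]
  · rw [SetLike.mem_coe, LinearMap.mem_ker, map_sub, lcmMul_mk, lcmMul_mk, ← map_sub, indMk_apply,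
      Submodule.Quotient.mk_eq_zero]
    have h2 := (indRel k H K M).smul_mem ((l : H) * x) (Submodule.subset_span ⟨a, m, rfl⟩)
    rwa [smul_sub, TensorProduct.smul_tmul', TensorProduct.smul_tmul', smul_eq_mul, smul_eq_mul,
      mul_one, mul_assoc] at h2

variable (L K Λ C M) in
/-- Left multiplication `L ⊗_{L ∩ ᶜK} ᶜM → H ⊗_K M`. -/
def compMul : Comp k H L K Λ C M →ₗ[k] Ind k H K M :=
  (compRel k H L K Λ C M).liftQ (lcmMul L K C M) compRel_le_ker_lcmMul

lemma compMul_mk (w : LCM k H L K C M) :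
    compMul L K Λ C M (Submodule.Quotient.mk w) = lcmMul L K C M w := rfl

lemma range_compMul : LinearMap.range (compMul L K Λ C M) = LinearMap.range (lcmMul L K C M) :=
  Submodule.range_liftQ _ _ _

lemma indMk_tmul_mem_range {y : H}
    (hy : y ∈ Subalgebra.toSubmodule L * C * Subalgebra.toSubmodule K) (m : M) :
    indMk K M (y ⊗ₜ m) ∈ LinearMap.range (lcmMul L K C M) := by
  rw [mul_assoc] at hy
  induction hy using Submodule.mul_induction_on' with
  | mem_mul_mem l hl x hx =>
    exact ⟨lcmk k H L K C M ⟨l, hl⟩ (ckmk k H K M C ⟨x, hx⟩ m), lcmMul_mk _ _ _⟩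
  | add x _ y _ hx hy =>
    rw [TensorProduct.add_tmul, map_add]
    exact add_mem hx hy

lemma range_lcmMul
    (hY : IsSubcoalgebra k H (Subalgebra.toSubmodule L * C * Subalgebra.toSubmodule K)) :
    LinearMap.range (lcmMul L K C M) =
      (LinearMap.range (TensorProduct.map hY.pr (1 : Module.End k M))).map (indMk K M) := by
  apply le_antisymm
  · rintro _ ⟨w, rfl⟩
    induction w using lcm_induction with
    | mk l x m =>
      refine ⟨_, ⟨((l : H) * (x : H)) ⊗ₜ m, rfl⟩, ?_⟩
      have h1 : (l : H) * (x : H) ∈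
          Subalgebra.toSubmodule L * C * Subalgebra.toSubmodule K := by
        rw [mul_assoc]
        exact Submodule.mul_mem_mul l.2 x.2
      rw [TensorProduct.map_tmul, hY.pr_of_mem h1, lcmMul_mk, Module.End.one_apply]
    | add x y hx hy =>
      rw [map_add]
      exact add_mem hx hy
  · rintro _ ⟨_, ⟨w, rfl⟩, rfl⟩
    induction w with
    | zero => simp
    | tmul h m => exact indMk_tmul_mem_range (hY.pr_mem h) m
    | add x y hx hy =>
      rw [map_add, map_add]
      exact add_mem hx hy

lemma finrank_range_compMul [FiniteDimensional k M] (hL : IsHopfSubalgebra k H L)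
    (hK : IsHopfSubalgebra k H K) (hΛ : IsIdempotentIntegral k H K Λ)
    (hC : IsSubcoalgebra k H C) :
    Module.finrank k (LinearMap.range (compMul L K Λ C M)) * Module.finrank k K =
      Module.finrank k ↥(Subalgebra.toSubmodule L * C * Subalgebra.toSubmodule K) *
        Module.finrank k M := by
  rw [range_compMul, range_lcmMul (isSubcoalgebra_doubleCoset hL hK hC)]
  exact finrank_map_indMk hK hΛ _ (doubleCoset_mul_toSubmodule L K C).le

lemma finrank_comp_eq [FiniteDimensional k M] (hL : IsHopfSubalgebra k H L)
    (hK : IsHopfSubalgebra k H K) (hΛ : IsIdempotentIntegral k H K Λ)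
    (hC : IsSimpleSubcoalgebra k H C) :
    Module.finrank k (Comp k H L K Λ C M) *
        (Module.finrank k ↥(Subalgebra.toSubmodule L ⊓ conjK k H K Λ C) * Module.finrank k K) =
      Module.finrank k L * Module.finrank k (CKsub k H K C) * Module.finrank k M := by
  obtain ⟨L', hL', h', hst⟩ := exists_stabilizer hL hK hΛ hC
  obtain ⟨Λ', hΛ'⟩ := hL'.exists_integral
  rw [← h']
  exact finrank_comp hK hΛ hL' hΛ' h' hst hL hC.1

lemma finrank_inf_conjK_pos (hL : IsHopfSubalgebra k H L)
    (hK : IsHopfSubalgebra k H K) (hΛ : IsIdempotentIntegral k H K Λ)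
    (hC : IsSimpleSubcoalgebra k H C) :
    0 < Module.finrank k ↥(Subalgebra.toSubmodule L ⊓ conjK k H K Λ C) := by
  obtain ⟨L', hL', h', hst⟩ := exists_stabilizer hL hK hΛ hC
  rw [← h', Nat.pos_iff_ne_zero]
  exact_mod_cast finrank_submodule_ne_zero (k := k) (toSubmodule_ne_bot L')

lemma mackeyAt_of_finrank [Module.Finite k M] (hL : IsHopfSubalgebra k H L)
    (hK : IsHopfSubalgebra k H K) (hΛ : IsIdempotentIntegral k H K Λ)
    (hdim : ∀ C : Submodule k H, IsSimpleSubcoalgebra k H C →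
        Module.finrank k ↥(Subalgebra.toSubmodule L * C * Subalgebra.toSubmodule K) *
            Module.finrank k ↥(Subalgebra.toSubmodule L ⊓ conjK k H K Λ C) =
          Module.finrank k ↥L * Module.finrank k ↥(CKsub k H K C)) :
    MackeyAt k H L K Λ M := by
  intro ι _ rep hrep
  have hdK : Module.finrank k K ≠ 0 := by
    exact_mod_cast finrank_submodule_ne_zero (k := k) (toSubmodule_ne_bot K)
  let F : ι → Submodule k H :=
    fun i => Subalgebra.toSubmodule L * rep i * Subalgebra.toSubmodule K
  have hF : ∀ i, IsSubcoalgebra k H (F i) := fun i => isSubcoalgebra_doubleCoset hL hK (hrep.1 i).1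
  have hFK : ∀ i, rep i ≤ F i := fun i => le_doubleCoset L K (rep i)
  have h0 : ∀ i, F i ≠ ⊥ := fun i hi => (hrep.1 i).2.1 (le_bot_iff.mp (hi ▸ hFK i))
  have ho : ∀ i j, i ≠ j → F i ≤ perp (F j) := fun i j hij =>
    doubleCoset_orthogonal hL hK (hrep.1 i) (hrep.1 j) fun h => hij (hrep.2.1 i j h)
  have hs : ⨆ i, F i = ⊤ := by
    rw [eq_top_iff, ← isSubcoalgebra_top.iSup_simple]
    refine iSup_le fun E => ?_
    obtain ⟨i, hi⟩ := hrep.2.2 E.1 E.2.1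
    exact hi.trans (le_iSup F i)
  have := finite_of_orthogonal hF h0 ho
  have := Fintype.ofFinite ι
  have hsum := sum_finrank hF ho isSubcoalgebra_top hs
  rw [finrank_top] at hsum
  let π : (⨁ i : ι, Comp k H L K Λ (rep i) M) →ₗ[k] Ind k H K M :=
    DirectSum.toModule k ι _ fun i => compMul L K Λ (rep i) M
  have hπ : ∀ i y, π (DirectSum.of (fun i => Comp k H L K Λ (rep i) M) i y) =
      compMul L K Λ (rep i) M y := fun i y => by
    rw [← DirectSum.lof_eq_of k]
    exact DirectSum.toModule_lof (M := fun i => Comp k H L K Λ (rep i) M) k i y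
  have hsurj : Function.Surjective π := by
    have h1 : ∀ (h : H) (m : M), indMk K M (h ⊗ₜ m) ∈ LinearMap.range π := by
      intro h m
      have hh : h ∈ ⨆ i, F i := hs ▸ Submodule.mem_top
      induction hh using Submodule.iSup_induction' with
      | mem i x hx =>
        have h2 := indMk_tmul_mem_range hx m
        rw [← range_compMul (Λ := Λ)] at h2
        obtain ⟨y, hy⟩ := h2
        exact ⟨_, (hπ i y).trans hy⟩
      | zero => simp
      | add x y _ _ hx hy =>
        rw [TensorProduct.add_tmul, map_add]
        exact add_mem hx hy
    intro y
    obtain ⟨z, rfl⟩ := indMk_surjective y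
    change indMk K M z ∈ LinearMap.range π
    induction z with
    | zero => simp
    | tmul h m => exact h1 h m
    | add x y hx hy =>
      rw [map_add]
      exact add_mem hx hy
  have hc : ∀ i, Module.finrank k (Comp k H L K Λ (rep i) M) * Module.finrank k K =
      Module.finrank k (F i) * Module.finrank k M := by
    intro i
    have h1 := finrank_comp_eq (M := M) hL hK hΛ (hrep.1 i)
    rw [← hdim _ (hrep.1 i)] at h1
    refine Nat.eq_of_mul_eq_mul_left (finrank_inf_conjK_pos hL hK hΛ (hrep.1 i)) ?_
    linarith
  have hfin : Module.finrank k (⨁ i : ι, Comp k H L K Λ (rep i) M) =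
      Module.finrank k (Ind k H K M) := by
    refine Nat.eq_of_mul_eq_mul_right (Nat.pos_of_ne_zero hdK) ?_
    rw [Module.finrank_directSum, Finset.sum_mul, Finset.sum_congr rfl fun i _ => hc i,
      ← Finset.sum_mul, hsum, finrank_ind hK hΛ]
  have : FiniteDimensional k (Ind k H K M) := Module.Finite.of_surjective _ indMk_surjective
  refine ⟨π, ⟨?_, hsurj⟩, fun i l x m => ?_⟩
  · exact (LinearMap.injective_iff_surjective_of_finrank_eq_finrank hfin).mpr hsurj
  · rw [hπ, compMul_mk, lcmMul_mk, indMk_apply]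

lemma MackeyAt.finrank_eq [Module.Finite k M] [Nontrivial M] (hM : MackeyAt k H L K Λ M)
    (hL : IsHopfSubalgebra k H L) (hK : IsHopfSubalgebra k H K)
    (hΛ : IsIdempotentIntegral k H K Λ) (hC : IsSimpleSubcoalgebra k H C) :
    Module.finrank k ↥(Subalgebra.toSubmodule L * C * Subalgebra.toSubmodule K) *
        Module.finrank k ↥(Subalgebra.toSubmodule L ⊓ conjK k H K Λ C) =
      Module.finrank k ↥L * Module.finrank k ↥(CKsub k H K C) := by
  classical
  have hdM : 0 < Module.finrank k M := Module.finrank_pos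
  let ι : Type := {A : Submodule k H // ∃ D, IsSimpleSubcoalgebra k H D ∧
    A = Subalgebra.toSubmodule L * D * Subalgebra.toSubmodule K}
  let j : ι := ⟨_, C, hC, rfl⟩
  let rep : ι → Submodule k H := fun i => if i = j then C else i.2.choose
  have hj : rep j = C := if_pos rfl
  have hrep1 : ∀ i, IsSimpleSubcoalgebra k H (rep i) ∧
      i.1 = Subalgebra.toSubmodule L * rep i * Subalgebra.toSubmodule K := by
    intro i
    by_cases h : i = j
    · subst h
      rw [hj]
      exact ⟨hC, rfl⟩
    · simp only [rep, if_neg h]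
      exact i.2.choose_spec
  have hrep : IsDoubleCosetReps k H L K rep := by
    refine ⟨fun i => (hrep1 i).1, fun i i' h => ?_, fun D hD => ?_⟩
    · rw [← (hrep1 i).2, ← (hrep1 i').2] at h
      exact Subtype.ext h
    · refine ⟨⟨_, D, hD, rfl⟩, ?_⟩
      rw [← (hrep1 _).2]
      exact le_doubleCoset L K D
  obtain ⟨π, hπ, hmk⟩ := hM ι rep hrep
  have h1 : ∀ y, π (DirectSum.of (fun i => Comp k H L K Λ (rep i) M) j y) =
      compMul L K Λ (rep j) M y := by
    intro y
    obtain ⟨w, rfl⟩ := Submodule.Quotient.mk_surjective _ y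
    induction w using lcm_induction with
    | mk l x m => rw [hmk, compMul_mk, lcmMul_mk, indMk_apply]
    | add x y hx hy => rw [Submodule.Quotient.mk_add, map_add, map_add, map_add, hx, hy]
  have hinj : Function.Injective (compMul L K Λ (rep j) M) := by
    intro x y hxy
    rw [← h1, ← h1] at hxy
    exact DirectSum.of_injective (β := fun i => Comp k H L K Λ (rep i) M) j (hπ.1 hxy)
  have h2 := finrank_range_compMul (M := M) hL hK hΛ (hrep1 j).1.1
  rw [LinearMap.finrank_range_of_inj hinj] at h2
  have h3 := finrank_comp_eq (M := M) hL hK hΛ (hrep1 j).1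
  rw [hj] at h2 h3
  refine Nat.eq_of_mul_eq_mul_right hdM ?_
  rw [← h3, mul_right_comm, ← h2]
  ring

lemma exists_trivial_module (K : Subalgebra k H) :
    ∃ (M : Type v) (_ : AddCommGroup M) (_ : Module k M) (_ : Module ↥K M)
      (_ : IsScalarTower k ↥K M) (_ : Module.Finite k M) (_ : Nontrivial M),
        ∀ (a : ↥K) (m : M), a • m = Coalgebra.counit (R := k) (a : H) • m := by
  let f : ↥K →ₐ[k] k := (Bialgebra.counitAlgHom k H).comp K.val
  let i : Module ↥K (ULift.{v} k) := Module.compHom (ULift.{v} k) f.toRingHom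
  have hsm : ∀ (a : ↥K) (m : ULift.{v} k), a • m = f a • m := fun _ _ => rfl
  refine ⟨ULift.{v} k, inferInstance, inferInstance, i, ⟨fun r a m => ?_⟩, inferInstance,
    inferInstance, hsm⟩
  rw [hsm, hsm, map_smul, smul_assoc]

end MackeyDimension

section Statements

variable [FiniteDimensional k H] [IsSemisimpleRing H]

/-- Section 4.2: `(L, K)` is a Mackey pair if and only if for
every simple subcoalgebra `C` of `H` one has
`dim_k (LCK) = dim_k L · dim_k (CK) / dim_k (L ∩ ᶜK)` (stated multiplied
out); moreover `(L, K)` is a Mackey pair as soon as the left-multiplication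
map `π_k` for the trivial `K`-module `M = k` is an isomorphism. -/
theorem statement_14 (L K : Subalgebra k H)
    (hL : IsHopfSubalgebra k H L) (hK : IsHopfSubalgebra k H K)
    (Λ : H) (hΛ : IsIdempotentIntegral k H K Λ) :
    (IsMackeyPair.{v} k H L K Λ ↔
      ∀ C : Submodule k H, IsSimpleSubcoalgebra k H C →
        Module.finrank k ↥(L.toSubmodule * C * K.toSubmodule) *
            Module.finrank k ↥(L.toSubmodule ⊓ conjK k H K Λ C) =
          Module.finrank k ↥L * Module.finrank k ↥(CKsub k H K C)) ∧
    ((∀ (M : Type v) [AddCommGroup M] [Module k M] [Module ↥K M]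
        [IsScalarTower k ↥K M] [Module.Finite k M],
        (∀ (a : ↥K) (m : M), a • m = Coalgebra.counit (R := k) (a : H) • m) →
        MackeyAt k H L K Λ M) →
      IsMackeyPair.{v} k H L K Λ) := by
  obtain ⟨T, _, _, _, _, _, _, hT⟩ := exists_trivial_module.{v} K
  refine ⟨⟨fun h C hC => (h T).finrank_eq hL hK hΛ hC, fun h M _ _ _ _ _ =>
    mackeyAt_of_finrank hL hK hΛ h⟩, fun h M _ _ _ _ _ => ?_⟩
  exact mackeyAt_of_finrank hL hK hΛ fun C hC => (h T hT).finrank_eq hL hK hΛ hC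

end Statements

end

end MackeyPaper
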